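/- arXiv:1408.0235 — 4 statements merged into one kernel-verified Lean document; each statement's English description precedes it below -/
import Mathlib

section
/- Let p > 3 be a prime. (i) If p ≡ 1 (mod 4), then ∑_{0<n<p/3} χ_p(n) = (√(3p)/(2π))·L(1, χ_{3p}). (ii) If p ≡ 3 (mod 4), then ∑_{0<n<p/3} χ_p(n) = (√p/(2π))·(3 - χ_p(3))·L(1, χ̃_p). (Each sum runs over all integers n with 0 < n < p/3; identities in ℂ after casting the integer left-hand sides.) -/
open Polynomial in
theorem qe_sum_zmod {M : Type*} [AddCommMonoid M] (p : ℕ) [NeZero p] (f : ZMod p → M) :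
    ∑ x : ZMod p, f x = ∑ a ∈ Finset.range p, f (a : ZMod p) := by
  refine Finset.sum_bij' (fun x _ => x.val) (fun a _ => (a : ZMod p)) ?_ ?_ ?_ ?_ ?_
  · intro x _; simpa using ZMod.val_lt x
  · intro a _; simp
  · intro x _; simp
  · intro a ha; exact ZMod.val_cast_of_lt (Finset.mem_range.1 ha)
  · intro x _; simp

open Polynomial in
/-- sum over `F_p` of a monic polynomial of degree `p - 1`. -/
theorem qe_sum_eval (p : ℕ) [Fact p.Prime] (D : (ZMod p)[X]) (hD : D.Monic)
    (hd : D.natDegree = p - 1) : ∑ x : ZMod p, D.eval x = -1 := by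
  have hp := (Fact.out : p.Prime)
  simp_rw [eval_eq_sum_range]
  rw [Finset.sum_comm]
  simp_rw [← Finset.mul_sum]
  rw [Finset.sum_range_succ, Finset.sum_eq_zero, zero_add, hD.coeff_natDegree, one_mul, hd]
  · have h1 : ∀ x : ZMod p, x ^ (p - 1) = 1 - if x = 0 then 1 else 0 := by
      intro x
      split_ifs with h
      · simp [h, Nat.sub_ne_zero_of_lt hp.one_lt]
      · simp [ZMod.pow_card_sub_one_eq_one h]
    simp_rw [h1]
    simp
  · intro i hi
    rw [FiniteField.sum_pow_lt_card_sub_one, mul_zero]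
    rw [ZMod.card, ← hd]; exact Finset.mem_range.1 hi

open Polynomial in
theorem qe_legendre_choose_sum (p : ℕ) [Fact p.Prime] (hp2 : p ≠ 2) :
    ((p / 2).factorial : ZMod p) *
      ∑ a ∈ Finset.range p, ((legendreSym p a : ℤ) : ZMod p) * (a.choose (p / 2) : ZMod p) = -1 := by
  have hp := (Fact.out : p.Prime)
  have hodd := hp.eq_two_or_odd.resolve_left hp2
  have := qe_sum_eval p (X ^ (p / 2) * descPochhammer (ZMod p) (p / 2))
    ((monic_X_pow _).mul (monic_descPochhammer _ _))
    (by rw [Monic.natDegree_mul (monic_X_pow _) (monic_descPochhammer _ _), natDegree_X_pow,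
          descPochhammer_natDegree]; omega)
  rw [← this, qe_sum_zmod, Finset.mul_sum]
  refine Finset.sum_congr rfl fun a _ => ?_
  rw [eval_mul, eval_pow, eval_X, descPochhammer_eval_eq_descFactorial, legendreSym.eq_pow,
    Nat.descFactorial_eq_factorial_mul_choose]
  push_cast; ring

open Polynomial in
theorem qe_prod_coeff (p : ℕ) [Fact p.Prime] :
    ∀ m, m < p → (∏ a ∈ Finset.range m, ((X + 1 : (ZMod p)[X]) ^ (a + 1) -
      (X + 1) ^ (p - (a + 1)))).coeff m = 2 ^ m * (m.factorial : ZMod p) := by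
  have key : ∀ a, a + 1 < p → ∃ R : (ZMod p)[X], R.coeff 0 = 2 * (a + 1 : ZMod p) ∧
      ((X + 1 : (ZMod p)[X]) ^ (a + 1) - (X + 1) ^ (p - (a + 1))) = X * R := by
    intro a ha
    obtain ⟨R, hR⟩ : X ∣ ((X + 1 : (ZMod p)[X]) ^ (a + 1) - (X + 1) ^ (p - (a + 1))) := by
      rw [X_dvd_iff, coeff_sub, coeff_X_add_one_pow, coeff_X_add_one_pow]; simp
    refine ⟨R, ?_, hR⟩
    rw [← coeff_X_mul R 0, ← hR, coeff_sub, coeff_X_add_one_pow, coeff_X_add_one_pow]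
    simp only [zero_add, Nat.choose_one_right]
    rw [Nat.cast_sub ha.le]
    simp; ring
  intro m hm
  choose! R h1 h2 using key
  have : ∏ a ∈ Finset.range m, ((X + 1 : (ZMod p)[X]) ^ (a + 1) -
      (X + 1) ^ (p - (a + 1))) = X ^ m * ∏ a ∈ Finset.range m, R a := by
    rw [Finset.prod_congr rfl (fun a ha => h2 a (by have := Finset.mem_range.1 ha; omega)),
      Finset.prod_mul_distrib]
    simp
  rw [this]
  have h3 := coeff_X_pow_mul (∏ a ∈ Finset.range m, R a) m 0
  rw [zero_add] at h3
  rw [h3, coeff_zero_prod,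
    Finset.prod_congr rfl (fun a ha => h1 a (by have := Finset.mem_range.1 ha; omega)),
    Finset.prod_mul_distrib, ← Finset.prod_range_add_one_eq_factorial, Finset.prod_const,
    Finset.card_range]
  push_cast
  rfl

open Polynomial in
theorem qe_factorial_sq (p : ℕ) [Fact p.Prime] (hp2 : p ≠ 2) :
    (-1) ^ (p / 2) * ((p / 2).factorial : ZMod p) ^ 2 = -1 := by
  have hp := (Fact.out : p.Prime)
  have hodd := hp.eq_two_or_odd.resolve_left hp2
  refine Eq.trans ?_ (ZMod.wilsons_lemma p)
  have h : ∀ m, m + p / 2 + 1 = p → ∀ k, k ≤ m → ((p - 1).factorial : ZMod p) =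
      (-1) ^ k * (k.factorial : ZMod p) * ((p - 1 - k).factorial : ZMod p) := by
    intro m hm k
    induction k with
    | zero => simp
    | succ k ih =>
      intro hk
      rw [ih (by omega)]
      obtain ⟨q, hq⟩ : ∃ q, p - 1 - k = q + 1 := ⟨p - 1 - k - 1, by omega⟩
      rw [show p - 1 - (k + 1) = q by omega, hq, Nat.factorial_succ, Nat.factorial_succ]
      have h0 : ((q + 1 + (k + 1) : ℕ) : ZMod p) = 0 := by
        rw [show q + 1 + (k + 1) = p by omega]; simp
      push_cast at h0 ⊢
      have : (q : ZMod p) + 1 = -(k + 1) := by linear_combination h0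
      rw [this]; ring
  rw [h (p / 2) (by omega) (p / 2) le_rfl, show p - 1 - p / 2 = p / 2 by omega]
  ring

open Polynomial in
theorem qe_eps (p : ℕ) [Fact p.Prime] (hp2 : p ≠ 2) (ε : ℤ) (ζ : ℂ) (hζ : IsPrimitiveRoot ζ p)
    (h : ∑ a ∈ Finset.range p, ((legendreSym p a : ℤ) : ℂ) * ζ ^ a =
      (ε : ℂ) * ∏ a ∈ Finset.range (p / 2), (ζ ^ (a + 1) - ζ ^ (p - (a + 1)))) :
    (ε : ZMod p) * (legendreSym p (-2) : ℤ) = 1 := by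
  have hp := (Fact.out : p.Prime)
  have hodd := hp.eq_two_or_odd.resolve_left hp2
  have hp1 := hp.one_lt
  set Q : ℤ[X] := ∑ a ∈ Finset.range p, C (legendreSym p a) * X ^ a -
    C ε * ∏ a ∈ Finset.range (p / 2), (X ^ (a + 1) - X ^ (p - (a + 1))) with hQ
  have hQ0 : aeval ζ Q = 0 := by
    simp only [hQ, map_sub, map_sum, map_mul, map_prod, map_pow, aeval_X, aeval_C]
    simp only [algebraMap_int_eq, eq_intCast]
    rw [h]; ring
  have hdvd : cyclotomic p ℤ ∣ Q := by
    rw [cyclotomic_eq_minpoly hζ hp.pos]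
    exact minpoly.isIntegrallyClosed_dvd (hζ.isIntegral hp.pos) hQ0
  have hdvd2 := Polynomial.map_dvd (Int.castRingHom (ZMod p)) hdvd
  rw [map_cyclotomic] at hdvd2
  have hcyc : cyclotomic p (ZMod p) = (X - C 1) ^ (p - 1) := by
    have h1 := cyclotomic_prime_mul_X_sub_one (ZMod p) p
    have h2 : (X - 1 : (ZMod p)[X]) ^ p = X ^ p - 1 := by
      rw [sub_pow_char]; simp
    have h3 : (X - 1 : (ZMod p)[X]) ^ p = (X - 1) ^ (p - 1) * (X - 1) := by
      rw [← pow_succ, Nat.sub_add_cancel hp.one_le]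
    rw [← h2, h3] at h1
    have := mul_right_cancel₀ (by simpa using X_sub_C_ne_zero (1 : ZMod p)) h1
    simpa using this
  rw [hcyc, X_sub_C_pow_dvd_iff, X_pow_dvd_iff] at hdvd2
  have hc := hdvd2 (p / 2) (by omega)
  have hc2 : ∑ a ∈ Finset.range p, ((legendreSym p a : ℤ) : ZMod p) * (a.choose (p / 2) : ZMod p)
      = ε * (2 ^ (p / 2) * ((p / 2).factorial : ZMod p)) := by
    rw [← qe_prod_coeff p (p / 2) (by omega)]
    simp only [hQ, Polynomial.map_sub, Polynomial.map_sum, Polynomial.map_mul, Polynomial.map_prod,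
      Polynomial.map_pow, map_X, map_C, sub_comp, Polynomial.sum_comp, mul_comp, prod_comp, pow_comp,
      X_comp, C_comp, coeff_sub, finsetSum_coeff, coeff_C_mul, C_1, coeff_X_add_one_pow] at hc
    exact sub_eq_zero.1 (by simpa using hc)
  have h3 := qe_legendre_choose_sum p hp2
  have h4 := qe_factorial_sq p hp2
  rw [hc2] at h3
  rw [legendreSym.eq_pow]
  push_cast
  have h5 : ((-1 : ZMod p) ^ (p / 2)) ^ 2 = 1 := by rw [← pow_mul, mul_comm, pow_mul]; simp
  rw [show (-2 : ZMod p) = (-1) * 2 by ring, mul_pow]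
  generalize ((-1 : ZMod p) ^ (p / 2)) = u at *
  generalize ((2 : ZMod p) ^ (p / 2)) = t at *
  generalize (((p / 2).factorial : ZMod p)) = f at *
  -- f*(ε*(t*f)) = -1, u f^2 = -1, u^2 = 1
  have h6 : f ^ 2 = -u := by linear_combination u * h4 - f ^ 2 * h5
  linear_combination -h3 + ε * t * h6

theorem qe_P_sq (p : ℕ) [Fact p.Prime] (hp2 : p ≠ 2) (ζ : ℂ) (hζ : IsPrimitiveRoot ζ p) :
    (-1) ^ (p / 2) * (∏ a ∈ Finset.range (p / 2), (ζ ^ (a + 1) - ζ ^ (p - (a + 1)))) ^ 2 = p := by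
  have hp := (Fact.out : p.Prime)
  have hodd := hp.eq_two_or_odd.resolve_left hp2
  obtain ⟨m, rfl⟩ : ∃ m, p = 2 * m + 1 := ⟨p / 2, by omega⟩
  have hm : (2 * m + 1) / 2 = m := by omega
  rw [hm]
  have hζ2 : IsPrimitiveRoot (ζ ^ 2) (2 * m + 1) := by
    refine hζ.pow_of_coprime 2 ?_
    rw [Nat.coprime_two_left]; exact ⟨m, rfl⟩
  have h1 := hζ2.prod_one_sub_pow_eq_order
  have h2 : ∏ a ∈ Finset.range (m + m), (ζ ^ (a + 1) - ζ ^ (2 * m + 1 - (a + 1))) =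
      (2 * m + 1 : ℕ) := by
    have hterm : ∀ a ∈ Finset.range (m + m), (ζ ^ (a + 1) - ζ ^ (2 * m + 1 - (a + 1))) =
        (-1) * (ζ ^ (2 * m - 1 - a + 1) * (1 - (ζ ^ 2) ^ (a + 1))) := by
      intro a ha
      have ha := Finset.mem_range.1 ha
      have h0 : ζ ^ (2 * m - 1 - a + 1) * (ζ ^ 2) ^ (a + 1) = ζ ^ (a + 1) := by
        rw [← pow_mul, ← pow_add,
          show 2 * m - 1 - a + 1 + 2 * (a + 1) = (2 * m + 1) + (a + 1) by omega, pow_add,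
          hζ.pow_eq_one, one_mul]
      rw [show 2 * m + 1 - (a + 1) = 2 * m - 1 - a + 1 by omega]
      linear_combination -h0
    rw [Finset.prod_congr rfl hterm, Finset.prod_mul_distrib, Finset.prod_mul_distrib, ← two_mul,
      h1, Finset.prod_range_reflect (fun a => ζ ^ (a + 1)), Finset.prod_pow_eq_pow_sum]
    have h3 : ∑ i ∈ Finset.range (2 * m), (i + 1) = (2 * m + 1) * m := by
      have := Finset.sum_range_id_mul_two (2 * m + 1)
      rw [Finset.sum_range_succ'] at this
      simp only [add_zero, Nat.add_sub_cancel] at this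
      nlinarith
    rw [h3, pow_mul, hζ.pow_eq_one, Finset.prod_const, Finset.card_range]
    simp
  rw [← h2, Finset.prod_range_add]
  have h4 : ∏ x ∈ Finset.range m, (ζ ^ (m + x + 1) - ζ ^ (2 * m + 1 - (m + x + 1))) =
      ∏ x ∈ Finset.range m, ((-1) * (ζ ^ (x + 1) - ζ ^ (2 * m + 1 - (x + 1)))) := by
    rw [← Finset.prod_range_reflect]
    refine Finset.prod_congr rfl fun x hx => ?_
    have hx := Finset.mem_range.1 hx
    rw [show m + (m - 1 - x) + 1 = 2 * m + 1 - (x + 1) by omega,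
      show 2 * m + 1 - (2 * m + 1 - (x + 1)) = x + 1 by omega]
    ring
  rw [h4, Finset.prod_mul_distrib, Finset.prod_const, Finset.card_range]
  ring

theorem qe_P_val (p : ℕ) [Fact p.Prime] (hp2 : p ≠ 2) (ζ : ℂ)
    (hζ : ζ = Complex.exp (2 * Real.pi * Complex.I / p)) :
    ∏ a ∈ Finset.range (p / 2), (ζ ^ (a + 1) - ζ ^ (p - (a + 1))) =
      Complex.I ^ (p / 2) * (Real.sqrt p : ℝ) := by
  have hp := (Fact.out : p.Prime)
  have hodd := hp.eq_two_or_odd.resolve_left hp2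
  have hp0 : (p : ℂ) ≠ 0 := by exact_mod_cast hp.ne_zero
  have hpr : IsPrimitiveRoot ζ p := hζ ▸ Complex.isPrimitiveRoot_exp p hp.ne_zero
  have hsq := qe_P_sq p hp2 ζ hpr
  have hterm : ∀ a ∈ Finset.range (p / 2), (ζ ^ (a + 1) - ζ ^ (p - (a + 1))) =
      Complex.I * ((2 * Real.sin (2 * Real.pi * (a + 1) / p) : ℝ) : ℂ) := by
    intro a ha
    have ha := Finset.mem_range.1 ha
    have h1 : ζ ^ (p - (a + 1)) = (ζ ^ (a + 1))⁻¹ := by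
      apply eq_inv_of_mul_eq_one_left
      rw [← pow_add,
        Nat.sub_add_cancel (by omega), hpr.pow_eq_one]
    have h2 : ζ ^ (a + 1) = Complex.exp ((2 * Real.pi * (a + 1) / p : ℂ) * Complex.I) := by
      rw [hζ, ← Complex.exp_nat_mul]; congr 1; push_cast; ring
    rw [h1, h2, ← Complex.exp_neg]
    push_cast
    rw [Complex.sin, ← neg_mul]
    linear_combination -(Complex.exp (-(2 * Real.pi * (a + 1) / p : ℂ) * Complex.I) -
      Complex.exp ((2 * Real.pi * (a + 1) / p : ℂ) * Complex.I)) * Complex.I_sq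
  rw [Finset.prod_congr rfl hterm, Finset.prod_mul_distrib, Finset.prod_const, Finset.card_range,
    ← Complex.ofReal_prod] at hsq ⊢
  set r := ∏ a ∈ Finset.range (p / 2), (2 * Real.sin (2 * Real.pi * (a + 1) / p)) with hr
  have hrpos : 0 < r := by
    refine Finset.prod_pos fun a ha => mul_pos two_pos (Real.sin_pos_of_pos_of_lt_pi ?_ ?_)
    · have : (0 : ℝ) < p := by exact_mod_cast hp.pos
      positivity
    · have ha := Finset.mem_range.1 ha
      have h0 : (0 : ℝ) < p := by exact_mod_cast hp.pos
      rw [div_lt_iff₀ h0]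
      have : (2 * (a + 1) : ℝ) < p := by exact_mod_cast (by omega : 2 * (a + 1) < p)
      nlinarith [Real.pi_pos]
  have hr2 : r ^ 2 = p := by
    have : ((r ^ 2 : ℝ) : ℂ) = (p : ℂ) := by
      rw [← hsq, mul_pow, ← mul_assoc, ← pow_mul, mul_comm (p / 2) 2, pow_mul, Complex.I_sq,
        ← mul_pow]
      simp
    exact_mod_cast this
  rw [← hr2, Real.sqrt_sq hrpos.le]

theorem qe_gaussSum_eq (p : ℕ) [Fact p.Prime] (ζ : ℂ)
    (hζ : ζ = Complex.exp (2 * Real.pi * Complex.I / p)) :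
    ∑ a ∈ Finset.range p, ((legendreSym p a : ℤ) : ℂ) * ζ ^ a =
    gaussSum ((quadraticChar (ZMod p)).ringHomComp (Int.castRingHom ℂ)) ZMod.stdAddChar := by
  rw [gaussSum, qe_sum_zmod]
  refine Finset.sum_congr rfl fun a _ => ?_
  rw [ZMod.stdAddChar_apply, ZMod.toCircle_natCast, hζ, ← Complex.exp_nat_mul]
  congr 1
  · simp [legendreSym]
  · congr 1; ring

theorem qe_gauss (p : ℕ) [Fact p.Prime] (hp2 : p ≠ 2) :
    gaussSum ((quadraticChar (ZMod p)).ringHomComp (Int.castRingHom ℂ)) ZMod.stdAddChar =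
      (if p % 4 = 1 then 1 else Complex.I) * (Real.sqrt p : ℝ) := by
  have hp := (Fact.out : p.Prime)
  have hodd := hp.eq_two_or_odd.resolve_left hp2
  have hp2' : 2 < p := lt_of_le_of_ne hp.two_le (Ne.symm hp2)
  have : Fact (2 < p) := ⟨hp2'⟩
  have hrc : ringChar (ZMod p) ≠ 2 := by rwa [ZMod.ringChar_zmod_n]
  set ζ := Complex.exp (2 * Real.pi * Complex.I / p) with hζ
  have hpr : IsPrimitiveRoot ζ p := hζ ▸ Complex.isPrimitiveRoot_exp p hp.ne_zero
  have hne : ((quadraticChar (ZMod p)).ringHomComp (Int.castRingHom ℂ)) ≠ 1 :=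
    (MulChar.ringHomComp_ne_one_iff (RingHom.injective_int _)).2 (quadraticChar_ne_one hrc)
  have hGsq := gaussSum_sq hne ((quadraticChar_isQuadratic (ZMod p)).comp _)
    (ZMod.isPrimitive_stdAddChar p)
  have hneg : ((quadraticChar (ZMod p)).ringHomComp (Int.castRingHom ℂ)) (-1) =
      (-1) ^ (p / 2) := by
    have h1 := legendreSym.at_neg_one (p := p) hp2
    rw [ZMod.χ₄_eq_neg_one_pow hodd] at h1
    have h2 : legendreSym p (-1) = quadraticChar (ZMod p) (-1) := by simp [legendreSym]
    rw [MulChar.ringHomComp_apply, ← h2, h1]; simp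
  rw [hneg, ZMod.card] at hGsq
  have hPsq := qe_P_sq p hp2 ζ hpr
  have hPv := qe_P_val p hp2 ζ hζ
  have hGe := qe_gaussSum_eq p ζ hζ
  set G := gaussSum ((quadraticChar (ZMod p)).ringHomComp (Int.castRingHom ℂ)) ZMod.stdAddChar
  have hfac : G ^ 2 = (∏ a ∈ Finset.range (p / 2), (ζ ^ (a + 1) - ζ ^ (p - (a + 1)))) ^ 2 := by
    rw [hGsq, ← hPsq, ← mul_assoc, ← mul_pow]; simp
  have hl := qe_eps p hp2
  have hl2 : legendreSym p (-2) = 1 ∨ legendreSym p (-2) = -1 := by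
    apply legendreSym.eq_one_or_neg_one
    intro h
    have h2 : ((2 : ℕ) : ZMod p) = 0 := by push_cast at h ⊢; linear_combination -h
    rw [ZMod.natCast_eq_zero_iff] at h2
    exact absurd (Nat.le_of_dvd two_pos h2) (by omega)
  have hn1 : (-1 : ZMod p) ≠ 1 := ZMod.neg_one_ne_one
  have hGP : G = (legendreSym p (-2) : ℤ) *
      ∏ a ∈ Finset.range (p / 2), (ζ ^ (a + 1) - ζ ^ (p - (a + 1))) := by
    rcases sq_eq_sq_iff_eq_or_eq_neg.1 hfac with h | h
    · have := hl 1 ζ hpr (by rw [hGe, h]; simp)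
      rcases hl2 with h2 | h2
      · rw [h2, h]; simp
      · rw [h2] at this; simp at this; exact absurd this hn1
    · have := hl (-1) ζ hpr (by rw [hGe, h]; simp)
      rcases hl2 with h2 | h2
      · rw [h2] at this; simp at this; exact absurd this hn1
      · rw [h2, h]; simp
  rw [hGP, hPv, legendreSym.at_neg_two hp2, ZMod.χ₈'_nat_eq_if_mod_eight, ← mul_assoc]
  congr 1
  have h8 : p % 8 = 1 ∨ p % 8 = 3 ∨ p % 8 = 5 ∨ p % 8 = 7 := by omega
  have hI : Complex.I ^ (p / 2) = Complex.I ^ (p / 2 % 4) := by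
    conv_lhs => rw [← Nat.div_add_mod (p / 2) 4, pow_add, pow_mul, Complex.I_pow_four, one_pow,
      one_mul]
  rw [hI]
  rcases h8 with h | h | h | h
  · rw [show p / 2 % 4 = 0 by omega, show p % 4 = 1 by omega, h, hodd]; simp
  · rw [show p / 2 % 4 = 1 by omega, show p % 4 = 3 by omega, h, hodd]; simp
  · rw [show p / 2 % 4 = 2 by omega, show p % 4 = 1 by omega, h, hodd]; simp
  · rw [show p / 2 % 4 = 3 by omega, show p % 4 = 3 by omega, h, hodd]; simp

theorem qe_gauss_nat (p : ℕ) [Fact p.Prime] (hp2 : p ≠ 2) (n : ℕ) :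
    ∑ a ∈ Finset.range p, ((legendreSym p a : ℤ) : ℂ) *
      Complex.exp (2 * Real.pi * Complex.I * ((a / p : ℝ) : ℂ) * n) =
      (legendreSym p n : ℤ) * ((if p % 4 = 1 then 1 else Complex.I) * (Real.sqrt p : ℝ)) := by
  have hp := (Fact.out : p.Prime)
  have hrc : ringChar (ZMod p) ≠ 2 := by rwa [ZMod.ringChar_zmod_n]
  have hq := (quadraticChar_isQuadratic (ZMod p)).comp (Int.castRingHom ℂ)
  have hne : ((quadraticChar (ZMod p)).ringHomComp (Int.castRingHom ℂ)) ≠ 1 :=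
    (MulChar.ringHomComp_ne_one_iff (RingHom.injective_int _)).2 (quadraticChar_ne_one hrc)
  have h1 : ∑ a ∈ Finset.range p, ((legendreSym p a : ℤ) : ℂ) *
      Complex.exp (2 * Real.pi * Complex.I * ((a / p : ℝ) : ℂ) * n) =
      gaussSum ((quadraticChar (ZMod p)).ringHomComp (Int.castRingHom ℂ))
        (ZMod.stdAddChar.mulShift (n : ZMod p)) := by
    rw [gaussSum, qe_sum_zmod]
    refine Finset.sum_congr rfl fun a _ => ?_
    rw [AddChar.mulShift_apply, ← Nat.cast_mul, ZMod.stdAddChar_apply, ZMod.toCircle_natCast]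
    congr 1
    · simp [legendreSym]
    · congr 1; push_cast; ring
  rw [h1, ← qe_gauss p hp2]
  by_cases hn : (n : ZMod p) = 0
  · rw [hn]
    have h0 : legendreSym p (n : ℤ) = 0 := by rw [legendreSym.eq_zero_iff]; exact_mod_cast hn
    rw [h0, AddChar.mulShift_zero, gaussSum_one_right hne]; simp
  · obtain ⟨u, hu⟩ := (isUnit_iff_ne_zero.2 hn)
    rw [← hu, gaussSum_mulShift_eq, hq.inv, hu]
    simp [legendreSym]

theorem qe_eq_of_re_gt_one {f g : ℂ → ℂ} (hf : ContinuousAt f 1) (hg : ContinuousAt g 1)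
    (h : ∀ s : ℂ, 1 < s.re → f s = g s) : f 1 = g 1 := by
  have hne : (nhdsWithin (1 : ℂ) {s | 1 < s.re}).NeBot := by
    rw [← mem_closure_iff_nhdsWithin_neBot, Complex.closure_setOfPred_lt_re]; simp
  refine tendsto_nhds_unique (f := f) (l := nhdsWithin (1 : ℂ) {s | 1 < s.re})
    (hf.tendsto.mono_left nhdsWithin_le_nhds) ?_
  refine (hg.tendsto.mono_left nhdsWithin_le_nhds).congr' ?_
  filter_upwards [self_mem_nhdsWithin] with s hs
  exact (h s hs).symm

open Complex Filter Topology Set MeasureTheory in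
theorem qe_expZeta_one (x : ℝ) (hx : (x : UnitAddCircle) ≠ 0) :
    HurwitzZeta.expZeta x 1 = -Complex.log (1 - Complex.exp (2 * Real.pi * I * x)) := by
  set z := Complex.exp (2 * Real.pi * I * x) with hz
  have hzn : ‖z‖ = 1 := by
    rw [hz, show (2 * Real.pi * I * x : ℂ) = ((2 * Real.pi * x : ℝ) : ℂ) * I by push_cast; ring,
      Complex.norm_exp_ofReal_mul_I]
  have hz1 : z ≠ 1 := by
    intro h
    apply hx
    rw [hz, Complex.exp_eq_one_iff] at h
    obtain ⟨n, hn⟩ := h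
    have : (x : ℂ) = n := by
      have := Complex.two_pi_I_ne_zero
      field_simp at hn
      exact hn
    have : x = n := by exact_mod_cast this
    rw [this]
    exact (AddCircle.coe_eq_zero_iff (1 : ℝ)).2 ⟨n, by simp⟩
  have hre : ∀ t : ℝ, 0 ≤ t → 0 < (1 - z * Complex.exp (-t)).re := by
    intro t ht
    have hn : ‖z * Complex.exp (-t)‖ = Real.exp (-t) := by
      rw [norm_mul, hzn, one_mul, ← ofReal_neg, Complex.norm_exp_ofReal]
    have h1 : Real.exp (-t) ≤ 1 := Real.exp_le_one_iff.2 (by linarith)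
    have h2 : z.re < 1 := by
      rcases lt_or_eq_of_le (hzn ▸ Complex.re_le_norm z) with h | h
      · exact h
      · exfalso
        apply hz1
        have h3 := Complex.sq_norm z
        rw [hzn, Complex.normSq_apply, h] at h3
        apply Complex.ext
        · simpa using h
        · simp; nlinarith
    rw [← ofReal_neg, ← ofReal_exp, sub_re, one_re, re_mul_ofReal]
    have := Real.exp_pos (-t)
    nlinarith
  have hne : ∀ t : ℝ, 0 ≤ t → 1 - z * Complex.exp (-t) ≠ 0 := by
    intro t ht h
    have := hre t ht
    rw [h] at this; simp at this
  set F : ℝ → ℂ := fun t => (1 - z * Complex.exp (-t))⁻¹ - 1 with hF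
  have hFc : ∀ t : ℝ, 0 ≤ t → ContinuousAt F t := by
    intro t ht
    have := hne t ht
    refine ContinuousAt.sub (ContinuousAt.inv₀ ?_ this) continuousAt_const
    fun_prop
  have hli : LocallyIntegrableOn F (Ioi 0) :=
    ContinuousOn.locallyIntegrableOn
      (fun t ht => (hFc t (le_of_lt ht)).continuousWithinAt) measurableSet_Ioi
  have hexp0 : Tendsto (fun t : ℝ => Complex.exp (-t)) atTop (𝓝 0) := by
    rw [tendsto_zero_iff_norm_tendsto_zero]
    simp_rw [← ofReal_neg, Complex.norm_exp_ofReal]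
    exact Real.tendsto_exp_neg_atTop_nhds_zero
  have hlim1 : Tendsto (fun t : ℝ => 1 - z * Complex.exp (-t)) atTop (𝓝 1) := by
    simpa using (tendsto_const_nhds (x := (1 : ℂ))).sub (hexp0.const_mul z)
  have htop : F =O[atTop] fun t => Real.exp (-1 * t) := by
    have h1 : (fun t : ℝ => (1 - z * Complex.exp (-t))⁻¹) =O[atTop] (fun _ => (1 : ℝ)) :=
      (hlim1.inv₀ one_ne_zero).isBigO_one ℝ
    have h2 : (fun t : ℝ => z * Complex.exp (-t)) =O[atTop] fun t => Real.exp (-1 * t) := by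
      refine Asymptotics.IsBigO.of_norm_le fun t => ?_
      rw [norm_mul, hzn, one_mul, ← ofReal_neg, Complex.norm_exp_ofReal, neg_one_mul]
    refine (h1.mul h2).congr' ?_ (by simp)
    filter_upwards [eventually_ge_atTop 0] with t ht
    have := hne t ht
    simp only [hF]
    field_simp
    ring
  have hbot : F =O[𝓝[>] 0] (· ^ (-(0 : ℝ))) := by
    have := ((hFc 0 le_rfl).tendsto.mono_left (nhdsWithin_le_nhds (s := Ioi 0))).isBigO_one ℝ
    simpa using this
  have hdiff := mellin_differentiableAt_of_isBigO_rpow_exp one_pos hli htop hbot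
    (s := 1) (by simp)
  have hconv := mellinConvergent_of_isBigO_rpow_exp one_pos hli htop hbot (s := 1) (by simp)
  have hint : IntegrableOn F (Ioi 0) := by
    simpa [MellinConvergent] using hconv
  have hmel : mellin F 1 = -Complex.log (1 - z) := by
    have h1 : mellin F 1 = ∫ t in Ioi (0 : ℝ), F t := by simp [mellin]
    have hder : ∀ t ∈ Ici (0 : ℝ),
        HasDerivAt (fun t : ℝ => Complex.log (1 - z * Complex.exp (-t))) (F t) t := by
      intro t ht
      have h0 := hne t ht
      have h2 : HasDerivAt (fun t : ℝ => 1 - z * Complex.exp (-t)) (z * Complex.exp (-t)) t := by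
        have h3 : HasDerivAt (fun t : ℝ => Complex.exp (-(t : ℂ))) (Complex.exp (-t) * (-1)) t :=
          (ofRealCLM.hasDerivAt (x := t)).neg.cexp
        have h4 := (h3.const_mul z).const_sub 1
        rwa [show -(z * (Complex.exp (-t) * (-1))) = z * Complex.exp (-t) by ring] at h4
      convert h2.clog_real (Or.inl (hre t ht)) using 1
      simp only [hF]
      field_simp
      ring
    have hl : Tendsto (fun t : ℝ => Complex.log (1 - z * Complex.exp (-t))) atTop (𝓝 0) := by
      have := hlim1.clog (by simp)
      simpa using this
    rw [h1, integral_Ioi_of_hasDerivAt_of_tendsto' hder hint hl]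
    simp
  have hser : ∀ s : ℂ, 1 < s.re → Complex.Gamma s * HurwitzZeta.expZeta x s = mellin F s := by
    intro s hs
    have h1 := (HurwitzZeta.hasSum_expZeta_of_one_lt_re x hs).mul_left (Complex.Gamma s)
    have hs0 : s ≠ 0 := by rintro rfl; simp at hs; linarith
    have h2 := hasSum_mellin (a := fun n : ℕ => if n = 0 then 0 else z ^ n)
      (p := fun n : ℕ => (n : ℝ)) (F := F) (s := s) ?_ (by linarith) ?_ ?_
    · refine h1.unique ?_
      refine HasSum.congr_fun h2 fun n => ?_
      rcases eq_or_ne n 0 with rfl | hn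
      · simp [hs0]
      · simp only [hn, if_false, hz, ← Complex.exp_nat_mul]
        rw [mul_div_assoc, mul_comm (n : ℂ)]
        simp
    · intro n
      rcases Nat.eq_zero_or_pos n with h | h
      · left; simp [h]
      · right; exact_mod_cast h
    · intro t ht
      have hn : ‖z * Complex.exp (-t)‖ < 1 := by
        rw [norm_mul, hzn, one_mul, ← ofReal_neg, Complex.norm_exp_ofReal]
        exact Real.exp_lt_one_iff.2 (by simpa using ht)
      have h3 := (hasSum_geometric_of_norm_lt_one hn).sub (hasSum_ite_eq (0 : ℕ) (1 : ℂ))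
      refine HasSum.congr_fun h3 fun n => ?_
      rcases eq_or_ne n 0 with rfl | hn
      · simp
      · simp only [hn, if_false, sub_zero, mul_pow, ← Complex.exp_nat_mul]
        push_cast
        congr 2
        ring
    · have h4 := Real.summable_one_div_nat_rpow.2 hs
      refine Summable.of_nonneg_of_le (fun n => by positivity) (fun n => ?_) h4
      gcongr
      split_ifs
      · simp
      · simp [hzn]
  have hfin := qe_eq_of_re_gt_one (f := fun s => Complex.Gamma s * HurwitzZeta.expZeta x s)
    (g := mellin F) ?_ hdiff.continuousAt hser
  · simpa [hmel] using hfin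
  · refine ContinuousAt.mul ?_ (HurwitzZeta.differentiable_expZeta_of_ne_zero hx 1).continuousAt
    refine (Complex.differentiableAt_Gamma 1 fun m h => ?_).continuousAt
    have := congrArg Complex.re h
    simp at this
    have h0 : (0 : ℝ) ≤ m := Nat.cast_nonneg m
    linarith

open Complex in
/-- the odd part of `expZeta` at `s = 1`. -/
theorem qe_expZeta_sub (x : ℝ) (h0 : 0 < x) (h1 : x < 1) :
    HurwitzZeta.expZeta x 1 - HurwitzZeta.expZeta (-(x : UnitAddCircle)) 1 =
      2 * Real.pi * I * (1 / 2 - x) := by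
  have hxne : (x : UnitAddCircle) ≠ 0 := by
    intro h
    obtain ⟨n, hn⟩ := (AddCircle.coe_eq_zero_iff (1 : ℝ)).1 h
    simp only [zsmul_eq_mul, mul_one] at hn
    rw [← hn] at h0 h1
    have a : 0 < n := by exact_mod_cast h0
    have b : n < 1 := by exact_mod_cast h1
    omega
  have hpi := Real.pi_pos
  have key : ∀ y : ℝ, 0 < y → y < 1 → Complex.log (1 - Complex.exp (2 * Real.pi * I * y)) =
      Real.log (2 * Real.sin (Real.pi * y)) + (Real.pi * y - Real.pi / 2 : ℝ) * I := by
    intro y hy0 hy1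
    have hs : 0 < 2 * Real.sin (Real.pi * y) :=
      mul_pos two_pos (Real.sin_pos_of_pos_of_lt_pi (by positivity) (by nlinarith))
    have e : 1 - Complex.exp (2 * Real.pi * I * y) =
        ((2 * Real.sin (Real.pi * y) : ℝ) : ℂ) *
          Complex.exp ((Real.pi * y - Real.pi / 2 : ℝ) * I) := by
      have e1 : Complex.exp (((Real.pi * y - Real.pi / 2 : ℝ) : ℂ) * I) =
          Complex.exp (Real.pi * y * I) * (-I) := by
        rw [show (((Real.pi * y - Real.pi / 2 : ℝ) : ℂ) * I) =
          Real.pi * y * I + (-(Real.pi / 2 * I)) by push_cast; ring, Complex.exp_add,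
          Complex.exp_neg, Complex.exp_pi_div_two_mul_I]
        simp
      rw [e1]
      push_cast
      rw [Complex.sin, show (2 * Real.pi * I * y : ℂ) = Real.pi * y * I + Real.pi * y * I by ring,
        Complex.exp_add]
      have e2 : Complex.exp (-(Real.pi * y) * I) * Complex.exp (Real.pi * y * I) = 1 := by
        rw [← Complex.exp_add]; simp
      linear_combination (-1 : ℂ) * e2 +
        (Complex.exp (-(Real.pi * y) * I) * Complex.exp (Real.pi * y * I) -
          Complex.exp (Real.pi * y * I) * Complex.exp (Real.pi * y * I)) * Complex.I_sq
    rw [e, Complex.log_ofReal_mul hs (Complex.exp_ne_zero _), Complex.log_exp]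
    · simp; nlinarith
    · simp; nlinarith
  have hneg : (-(x : UnitAddCircle)) = ((1 - x : ℝ) : UnitAddCircle) := by
    rw [AddCircle.coe_sub, show ((1 : ℝ) : UnitAddCircle) = 0 from AddCircle.coe_period 1, zero_sub]
  have hxne' : ((1 - x : ℝ) : UnitAddCircle) ≠ 0 := by
    rw [← hneg]; simpa using hxne
  rw [hneg, qe_expZeta_one x hxne, qe_expZeta_one (1 - x) hxne', key x h0 h1,
    key (1 - x) (by linarith) (by linarith),
    show Real.pi * (1 - x) = Real.pi - Real.pi * x by ring, Real.sin_pi_sub]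
  push_cast
  ring

open HurwitzZeta in
/-- Gauss-twisted sums of `expZeta`. -/
noncomputable def qeT (p : ℕ) [Fact p.Prime] (y : ℝ) (s : ℂ) : ℂ :=
  ∑ a ∈ Finset.range p, ((legendreSym p a : ℤ) : ℂ) *
    expZeta ((a / p + y : ℝ) : UnitAddCircle) s

theorem qeT_hasSum (p : ℕ) [Fact p.Prime] (hp2 : p ≠ 2) (y : ℝ) {s : ℂ} (hs : 1 < s.re) :
    HasSum (fun n : ℕ => (legendreSym p n : ℤ) *
      ((if p % 4 = 1 then 1 else Complex.I) * (Real.sqrt p : ℝ)) *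
      Complex.exp (2 * Real.pi * Complex.I * y * n) / (n : ℂ) ^ s) (qeT p y s) := by
  have h := hasSum_sum (s := Finset.range p) fun a _ =>
    (HurwitzZeta.hasSum_expZeta_of_one_lt_re (a / p + y : ℝ) hs).mul_left
      ((legendreSym p a : ℤ) : ℂ)
  refine HasSum.congr_fun h fun n => ?_
  rw [← qe_gauss_nat p hp2 n, Finset.sum_mul, Finset.sum_div]
  refine Finset.sum_congr rfl fun a _ => ?_
  rw [mul_assoc, ← Complex.exp_add, mul_div_assoc]
  congr 3
  push_cast
  ring

theorem qeT_cont (p : ℕ) [Fact p.Prime] (y : ℝ)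
    (h : ∀ a : ℕ, a < p → legendreSym p a = 0 ∨ ((a / p + y : ℝ) : UnitAddCircle) ≠ 0) :
    ContinuousAt (qeT p y) 1 := by
  unfold qeT
  refine tendsto_finsetSum _ fun a ha => ?_
  rcases h a (Finset.mem_range.1 ha) with h | h
  · simp [h]
  · exact (HurwitzZeta.differentiable_expZeta_of_ne_zero h 1).continuousAt.const_mul _ |>.tendsto

theorem qe_L_hasSum {N : ℕ} [NeZero N] (χ : DirichletCharacter ℂ N) {s : ℂ} (hs : 1 < s.re) :
    HasSum (fun n : ℕ => χ (n : ZMod N) / (n : ℂ) ^ s) (DirichletCharacter.LFunction χ s) := by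
  have h : LSeriesHasSum (fun n : ℕ => χ (n : ZMod N)) s (DirichletCharacter.LFunction χ s) := by
    rw [DirichletCharacter.LFunction_eq_LSeries χ hs]
    exact (DirichletCharacter.LSeriesSummable_of_one_lt_re χ hs).LSeriesHasSum
  refine HasSum.congr_fun h fun n => ?_
  rw [LSeries.term_of_ne_zero' (by rintro rfl; simp at hs; linarith)]

theorem qe_coe_ne (p : ℕ) [hp : Fact p.Prime] (hp3 : 3 < p) (a : ℕ) (σ : ℤ) (hσ : σ = 1 ∨ σ = -1) :
    ((a / p + σ / 3 : ℝ) : UnitAddCircle) ≠ 0 := by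
  intro h
  obtain ⟨n, hn⟩ := (AddCircle.coe_eq_zero_iff (1 : ℝ)).1 h
  simp only [zsmul_eq_mul, mul_one] at hn
  have hp0 : (p : ℝ) ≠ 0 := by exact_mod_cast hp.out.ne_zero
  field_simp at hn
  have hn' : (n : ℤ) * p * 3 = a * 3 + p * σ := by
    have : ((n * p * 3 : ℤ) : ℝ) = ((a * 3 + p * σ : ℤ) : ℝ) := by push_cast; linarith
    exact_mod_cast this
  have h3 : (3 : ℤ) ∣ p := by
    rcases hσ with rfl | rfl
    · exact ⟨n * p - a, by linarith⟩
    · exact ⟨-(n * p - a), by linarith⟩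
  have h3' : 3 ∣ p := by exact_mod_cast h3
  rcases (Nat.dvd_prime hp.out).1 h3' with h | h <;> omega

theorem qe_legendre_neg (p : ℕ) [Fact p.Prime] (x : ℤ) :
    legendreSym p (-x) = legendreSym p (-1) * legendreSym p x := by
  rw [← legendreSym.mul]; simp

theorem qe_reflect (p : ℕ) [Fact p.Prime] (f : UnitAddCircle → ℂ) :
    ∑ a ∈ Finset.range p, ((legendreSym p a : ℤ) : ℂ) * f ((a / p : ℝ) : UnitAddCircle) =
    (legendreSym p (-1) : ℤ) *
      ∑ a ∈ Finset.range p, ((legendreSym p a : ℤ) : ℂ) * f (-((a / p : ℝ) : UnitAddCircle)) := by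
  have h := qe_sum_zmod p (fun x : ZMod p => ((quadraticChar (ZMod p) x : ℤ) : ℂ) *
    f (ZMod.toAddCircle x))
  have h' := qe_sum_zmod p (fun x : ZMod p => ((quadraticChar (ZMod p) x : ℤ) : ℂ) *
    f (-ZMod.toAddCircle x))
  have e : ∀ a : ℕ, (quadraticChar (ZMod p) (a : ZMod p)) = legendreSym p a := by
    intro a; simp [legendreSym]
  have e2 : legendreSym p (-1) = quadraticChar (ZMod p) (-1) := by simp [legendreSym]
  simp only [ZMod.toAddCircle_natCast, e] at h h'
  rw [← h, ← h', ← Equiv.sum_comp (Equiv.neg _), Finset.mul_sum]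
  refine Finset.sum_congr rfl fun x _ => ?_
  have hq : quadraticChar (ZMod p) (-x) = quadraticChar (ZMod p) (-1) * quadraticChar (ZMod p) x := by
    rw [← map_mul, neg_one_mul]
  have ht : ZMod.toAddCircle (-x) = -ZMod.toAddCircle x := map_neg _ _
  rw [Equiv.neg_apply, hq, ht, e2]
  push_cast
  ring

theorem qe_sum_legendre (p : ℕ) [Fact p.Prime] (hp2 : p ≠ 2) :
    ∑ a ∈ Finset.range p, ((legendreSym p a : ℤ) : ℂ) = 0 := by
  have hrc : ringChar (ZMod p) ≠ 2 := by rwa [ZMod.ringChar_zmod_n]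
  have h := quadraticChar_sum_zero hrc
  rw [qe_sum_zmod] at h
  have : ((∑ a ∈ Finset.range p, quadraticChar (ZMod p) (a : ZMod p) : ℤ) : ℂ) = 0 := by
    rw [h]; simp
  rw [← this]
  push_cast
  refine Finset.sum_congr rfl fun a _ => by simp [legendreSym]

theorem qe_third_reflect (p : ℕ) [hp : Fact p.Prime] :
    ∑ a ∈ Finset.range p, ((legendreSym p a : ℤ) : ℂ) * (if 2 * p < 3 * a then 1 else 0) =
    (legendreSym p (-1) : ℤ) *
      (((∑ n ∈ (Finset.range p).filter (fun n : ℕ => 0 < n ∧ (n : ℚ) < (p : ℚ) / 3),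
          legendreSym p (n : ℤ) : ℤ)) : ℂ) := by
  have hf : (Finset.range p).filter (fun n : ℕ => 0 < n ∧ (n : ℚ) < (p : ℚ) / 3) =
      (Finset.range p).filter (fun n : ℕ => 0 < n ∧ 3 * n < p) := by
    refine Finset.filter_congr fun n _ => ?_
    rw [lt_div_iff₀ (by norm_num : (0 : ℚ) < 3), mul_comm]
    constructor
    · rintro ⟨h, h2⟩; exact ⟨h, by exact_mod_cast h2⟩
    · rintro ⟨h, h2⟩; exact ⟨h, by exact_mod_cast h2⟩
  simp only [mul_ite, mul_one, mul_zero]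
  rw [hf, ← Finset.sum_filter, Int.cast_sum, Finset.mul_sum]
  refine Finset.sum_bij' (fun a _ => p - a) (fun a _ => p - a) ?_ ?_ ?_ ?_ ?_
  · intro a ha; simp only [Finset.mem_filter, Finset.mem_range] at ha ⊢; omega
  · intro a ha; simp only [Finset.mem_filter, Finset.mem_range] at ha ⊢; omega
  · intro a ha; simp only [Finset.mem_filter, Finset.mem_range] at ha; omega
  · intro a ha; simp only [Finset.mem_filter, Finset.mem_range] at ha; omega
  · intro a ha
    simp only [Finset.mem_filter, Finset.mem_range] at ha
    rw [← Int.cast_mul, ← qe_legendre_neg]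
    congr 1
    rw [legendreSym, legendreSym]
    congr 1
    rw [Nat.cast_sub ha.1.le]
    simp

theorem qe_W_reflect (p : ℕ) [hp : Fact p.Prime] (hp2 : p ≠ 2) (h1 : legendreSym p (-1) = 1) :
    ∑ a ∈ Finset.range p, ((legendreSym p a : ℤ) : ℂ) * a = 0 := by
  have h : ∑ a ∈ Finset.range p, ((legendreSym p a : ℤ) : ℂ) * a =
      ∑ a ∈ Finset.range p, ((legendreSym p a : ℤ) : ℂ) * (p - a) := by
    obtain ⟨q, rfl⟩ : ∃ q, p = q + 1 := ⟨p - 1, by have := hp.out.pos; omega⟩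
    have hz : legendreSym (q + 1) (0 : ℕ) = 0 := by simp
    rw [Finset.sum_range_succ', Finset.sum_range_succ', hz, ← Finset.sum_range_reflect]
    simp only [Int.cast_zero, zero_mul, add_zero]
    refine Finset.sum_congr rfl fun a ha => ?_
    have ha := Finset.mem_range.1 ha
    have h2 : legendreSym (q + 1) ((q - 1 - a + 1 : ℕ) : ℤ) =
        legendreSym (q + 1) ((a + 1 : ℕ) : ℤ) := by
      have := qe_legendre_neg (q + 1) ((a + 1 : ℕ) : ℤ)
      rw [h1, one_mul] at this
      rw [← this, legendreSym, legendreSym]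
      congr 1
      have h0 : ((q + 1 : ℕ) : ZMod (q + 1)) = 0 := ZMod.natCast_self _
      have e : ((q - 1 - a + 1 : ℕ) : ZMod (q + 1)) + ((a + 1 : ℕ) : ZMod (q + 1)) = 0 := by
        rw [← h0, ← Nat.cast_add]; congr 1; omega
      rw [Int.cast_natCast, Int.cast_neg, Int.cast_natCast]
      linear_combination e
    rw [h2, show q - 1 - a + 1 = (q + 1) - (a + 1) by omega, Nat.cast_sub (by omega)]
  simp only [mul_sub, Finset.sum_sub_distrib, ← Finset.sum_mul, qe_sum_legendre p hp2] at h
  linear_combination h / 2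

open Complex HurwitzZeta in
theorem qe_D (p : ℕ) [hp : Fact p.Prime] (hp3 : 3 < p) :
    ∑ a ∈ Finset.range p, ((legendreSym p a : ℤ) : ℂ) *
      (expZeta ((a / p + 1 / 3 : ℝ) : UnitAddCircle) 1 -
        expZeta (-((a / p + 1 / 3 : ℝ) : UnitAddCircle)) 1) =
    2 * Real.pi * I * (-(∑ a ∈ Finset.range p, ((legendreSym p a : ℤ) : ℂ) * a) / p +
      (legendreSym p (-1) : ℤ) *
      (((∑ n ∈ (Finset.range p).filter (fun n : ℕ => 0 < n ∧ (n : ℚ) < (p : ℚ) / 3),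
          legendreSym p (n : ℤ) : ℤ)) : ℂ)) := by
  rw [← qe_third_reflect]
  have hp0 : (0 : ℝ) < p := by exact_mod_cast hp.out.pos
  have h3 : ¬ 3 ∣ p := fun h => by
    rcases (Nat.dvd_prime hp.out).1 h with h | h <;> omega
  have hterm : ∀ a ∈ Finset.range p, ((legendreSym p a : ℤ) : ℂ) *
      (expZeta ((a / p + 1 / 3 : ℝ) : UnitAddCircle) 1 -
        expZeta (-((a / p + 1 / 3 : ℝ) : UnitAddCircle)) 1) =
      2 * Real.pi * I * ((1 / 6) * ((legendreSym p a : ℤ) : ℂ) -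
        ((legendreSym p a : ℤ) : ℂ) * a / p +
        ((legendreSym p a : ℤ) : ℂ) * (if 2 * p < 3 * a then 1 else 0)) := by
    intro a ha
    have ha := Finset.mem_range.1 ha
    have ha' : (a : ℝ) < p := by exact_mod_cast ha
    split_ifs with h
    · have h' : (2 * p : ℝ) < 3 * a := by exact_mod_cast h
      have e : ((a / p + 1 / 3 : ℝ) : UnitAddCircle) = ((a / p + 1 / 3 - 1 : ℝ) : UnitAddCircle) := by
        rw [AddCircle.coe_sub _ _ (1 : ℝ),
          show ((1 : ℝ) : UnitAddCircle) = 0 from AddCircle.coe_period 1, sub_zero]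
      have hd : (2 / 3 : ℝ) < a / p := by rw [lt_div_iff₀ hp0]; linarith
      have hd2 : (a / p : ℝ) < 1 := by rw [div_lt_one hp0]; exact ha'
      rw [e, qe_expZeta_sub _ (by linarith) (by linarith)]
      push_cast
      ring
    · have hlt : 3 * a < 2 * p := by omega
      have h' : (3 * a : ℝ) < 2 * p := by exact_mod_cast hlt
      have hd : (a / p : ℝ) < 2 / 3 := by rw [div_lt_iff₀ hp0]; linarith
      have hd0 : (0 : ℝ) ≤ a / p := by positivity
      rw [qe_expZeta_sub _ (by linarith) (by linarith)]
      push_cast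
      ring
  rw [Finset.sum_congr rfl hterm, ← Finset.mul_sum, Finset.sum_add_distrib,
    Finset.sum_sub_distrib, ← Finset.mul_sum, qe_sum_legendre p (by omega), ← Finset.sum_div]
  ring

theorem qeT_neg_third (p : ℕ) [hp : Fact p.Prime] :
    qeT p (((-1 : ℤ) : ℝ) / 3) 1 = (legendreSym p (-1) : ℤ) *
      ∑ a ∈ Finset.range p, ((legendreSym p a : ℤ) : ℂ) *
        HurwitzZeta.expZeta (-((a / p + 1 / 3 : ℝ) : UnitAddCircle)) 1 := by
  have h := qe_reflect p (fun u => HurwitzZeta.expZeta (u - ((1 / 3 : ℝ) : UnitAddCircle)) 1)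
  unfold qeT
  convert h using 4 with a ha a ha
  · rw [← AddCircle.coe_sub]; congr 1; push_cast; ring
  · rw [AddCircle.coe_add]; abel_nf

open Complex in
theorem qe_exp_third (n : ℕ) (σ : ℤ) (hσ : σ = 1 ∨ σ = -1) :
    Complex.exp (2 * Real.pi * I * ((σ / 3 : ℝ) : ℂ) * n) =
      (-1 / 2 + σ * (Real.sqrt 3 / 2 : ℝ) * I) ^ (n % 3) := by
  have hw : Complex.exp (2 * Real.pi * I * ((σ / 3 : ℝ) : ℂ)) =
      (-1 / 2 + σ * (Real.sqrt 3 / 2 : ℝ) * I) := by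
    have e : (2 * Real.pi * I * ((σ / 3 : ℝ) : ℂ)) = ((σ * (Real.pi - Real.pi / 3) : ℝ) : ℂ) * I := by
      push_cast; ring
    rw [e, Complex.exp_mul_I, ← Complex.ofReal_cos, ← Complex.ofReal_sin]
    rcases hσ with rfl | rfl
    · simp only [Int.cast_one, one_mul]
      rw [Real.cos_pi_sub, Real.sin_pi_sub, Real.cos_pi_div_three, Real.sin_pi_div_three]
      push_cast; ring
    · simp only [Int.cast_neg, Int.cast_one, neg_mul, one_mul, Real.cos_neg, Real.sin_neg]
      rw [Real.cos_pi_sub, Real.sin_pi_sub, Real.cos_pi_div_three, Real.sin_pi_div_three]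
      push_cast; ring
  have hc : (Complex.exp (2 * Real.pi * I * ((σ / 3 : ℝ) : ℂ))) ^ 3 = 1 := by
    rw [← Complex.exp_nat_mul, Complex.exp_eq_one_iff]
    exact ⟨σ, by push_cast; ring⟩
  rw [← hw]
  conv_lhs => rw [mul_comm _ (n : ℂ), Complex.exp_nat_mul, ← Nat.div_add_mod n 3, pow_add, pow_mul,
    hc, one_pow, one_mul]

open Complex in
theorem qe_case1 (p : ℕ) [hp : Fact p.Prime] (hp3 : 3 < p) [NeZero (3 * p)]
    (χ : DirichletCharacter ℂ (3 * p)) [Fact (Nat.Prime 3)]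
    (hχ : ∀ n : ℤ, χ ((n : ZMod (3 * p)))
        = ((legendreSym 3 n : ℤ) : ℂ) * ((legendreSym p n : ℤ) : ℂ)) (h4 : p % 4 = 1) :
    (((∑ n ∈ (Finset.range p).filter (fun n : ℕ => 0 < n ∧ (n : ℚ) < (p : ℚ) / 3),
          legendreSym p (n : ℤ) : ℤ)) : ℂ)
        = ((Real.sqrt (3 * (p : ℝ)) / (2 * Real.pi) : ℝ) : ℂ) *
            DirichletCharacter.LFunction χ 1 := by
  have hp2 : p ≠ 2 := by omega
  have hneg : legendreSym p (-1) = 1 := by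
    rw [legendreSym.at_neg_one hp2, ZMod.χ₄_nat_one_mod_four h4]
  have hm3 : legendreSym 3 (-1) = -1 := by
    rw [legendreSym.at_neg_one (by norm_num)]; decide
  have hne : χ ≠ 1 := by
    intro h
    have h1 := hχ (-1)
    rw [hneg, hm3, h, MulChar.one_apply (by simp)] at h1
    norm_num at h1
  have hleg3 : ∀ n : ℕ, legendreSym 3 n = if n % 3 = 0 then 0 else if n % 3 = 1 then 1 else -1 := by
    intro n
    rw [legendreSym.mod, show ((n : ℤ) % ((3 : ℕ) : ℤ)) = ((n % 3 : ℕ) : ℤ) by simp]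
    have : n % 3 < 3 := Nat.mod_lt _ (by norm_num)
    interval_cases n % 3
    · simp
    · simp
    · simpa [← legendreSym.mod] using (show legendreSym 3 2 = -1 by
        rw [legendreSym.mod, show (2 : ℤ) % ((3 : ℕ) : ℤ) = (-1) % ((3 : ℕ) : ℤ) by norm_num,
          ← legendreSym.mod, hm3])
  have hs : ∀ s : ℂ, 1 < s.re → qeT p (((1 : ℤ) : ℝ) / 3) s - qeT p (((-1 : ℤ) : ℝ) / 3) s =
      (Real.sqrt p : ℝ) * ((Real.sqrt 3 : ℝ) * I) * DirichletCharacter.LFunction χ s := by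
    intro s hs
    have h1 := (qeT_hasSum p hp2 (((1 : ℤ) : ℝ) / 3) hs).sub
      (qeT_hasSum p hp2 (((-1 : ℤ) : ℝ) / 3) hs)
    have h2 := (qe_L_hasSum χ hs).mul_left ((Real.sqrt p : ℝ) * ((Real.sqrt 3 : ℝ) * I))
    refine h1.unique (HasSum.congr_fun h2 fun n => ?_)
    have h3 := hχ n
    rw [Int.cast_natCast] at h3
    rw [h3, qe_exp_third n 1 (Or.inl rfl), qe_exp_third n (-1) (Or.inr rfl), hleg3, if_pos h4]
    have : n % 3 < 3 := Nat.mod_lt _ (by norm_num)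
    interval_cases n % 3
    · simp
    · push_cast; ring
    · push_cast; ring
  have hfin := qe_eq_of_re_gt_one
    (f := fun s => qeT p (((1 : ℤ) : ℝ) / 3) s - qeT p (((-1 : ℤ) : ℝ) / 3) s)
    (g := fun s => (Real.sqrt p : ℝ) * ((Real.sqrt 3 : ℝ) * I) * DirichletCharacter.LFunction χ s)
    ((qeT_cont p _ fun a _ => Or.inr (qe_coe_ne p hp3 a 1 (Or.inl rfl))).sub
      (qeT_cont p _ fun a _ => Or.inr (qe_coe_ne p hp3 a (-1) (Or.inr rfl))))
    ((DirichletCharacter.differentiable_LFunction hne 1).continuousAt.const_mul _) hs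
  have hD := qe_D p hp3
  simp only [mul_sub, Finset.sum_sub_distrib] at hD
  simp only [qeT_neg_third] at hfin
  rw [hneg] at hfin hD
  have hT : qeT p (((1 : ℤ) : ℝ) / 3) 1 = ∑ a ∈ Finset.range p, ((legendreSym p a : ℤ) : ℂ) *
      HurwitzZeta.expZeta ((a / p + 1 / 3 : ℝ) : UnitAddCircle) 1 := by simp [qeT]
  rw [← hT] at hD
  rw [show (((1 : ℤ)) : ℂ) = 1 from Int.cast_one, one_mul] at hfin
  rw [hfin, qe_W_reflect p hp2 hneg] at hD
  have hpi : (Real.pi : ℂ) ≠ 0 := by exact_mod_cast Real.pi_ne_zero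
  rw [Real.sqrt_mul (by norm_num)]
  push_cast at hD ⊢
  have hD' := mul_left_cancel₀ Complex.I_ne_zero (a := I)
    (b := (Real.sqrt p : ℂ) * (Real.sqrt 3 : ℂ) * DirichletCharacter.LFunction χ 1)
    (c := 2 * Real.pi * ∑ n ∈ (Finset.range p).filter
      (fun n : ℕ => 0 < n ∧ (n : ℚ) < (p : ℚ) / 3), ((legendreSym p (n : ℤ) : ℤ) : ℂ))
    (by linear_combination hD)
  generalize (∑ n ∈ (Finset.range p).filter
      (fun n : ℕ => 0 < n ∧ (n : ℚ) < (p : ℚ) / 3), ((legendreSym p (n : ℤ) : ℤ) : ℂ)) = S at *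
  field_simp
  linear_combination -hD'

open Complex in
theorem qe_case2 (p : ℕ) [hp : Fact p.Prime] (hp3 : 3 < p) (h4 : p % 4 = 3) :
    (((∑ n ∈ (Finset.range p).filter (fun n : ℕ => 0 < n ∧ (n : ℚ) < (p : ℚ) / 3),
          legendreSym p (n : ℤ) : ℤ)) : ℂ)
        = ((Real.sqrt p / (2 * Real.pi) : ℝ) : ℂ) * ((3 : ℂ) - ((legendreSym p 3 : ℤ) : ℂ)) *
            DirichletCharacter.LFunction
              ((quadraticChar (ZMod p)).ringHomComp (Int.castRingHom ℂ)) 1 := by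
  have hp2 : p ≠ 2 := by omega
  have hneg : legendreSym p (-1) = -1 := by
    rw [legendreSym.at_neg_one hp2, ZMod.χ₄_nat_three_mod_four h4]
  have hrc : ringChar (ZMod p) ≠ 2 := by rwa [ZMod.ringChar_zmod_n]
  have hne : ((quadraticChar (ZMod p)).ringHomComp (Int.castRingHom ℂ)) ≠ 1 :=
    (MulChar.ringHomComp_ne_one_iff (RingHom.injective_int _)).2 (quadraticChar_ne_one hrc)
  set χ : DirichletCharacter ℂ p := (quadraticChar (ZMod p)).ringHomComp (Int.castRingHom ℂ) with hχd
  have hχ : ∀ n : ℕ, χ (n : ZMod p) = ((legendreSym p n : ℤ) : ℂ) := by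
    intro n; simp [hχd, legendreSym]
  have hLc := (DirichletCharacter.differentiable_LFunction hne 1).continuousAt
  have hp41 : ¬ p % 4 = 1 := by omega
  -- the untwisted identity
  have hs0 : ∀ s : ℂ, 1 < s.re → qeT p 0 s =
      (I * (Real.sqrt p : ℝ)) * DirichletCharacter.LFunction χ s := by
    intro s hs
    refine (qeT_hasSum p hp2 0 hs).unique
      (HasSum.congr_fun ((qe_L_hasSum χ hs).mul_left (I * (Real.sqrt p : ℝ))) fun n => ?_)
    rw [hχ, if_neg hp41]
    simp
    ring
  have hc0 : ContinuousAt (qeT p 0) 1 := by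
    refine qeT_cont p 0 fun a ha => ?_
    rcases Nat.eq_zero_or_pos a with rfl | h0
    · left; simp
    · right
      intro h
      obtain ⟨n, hn⟩ := (AddCircle.coe_eq_zero_iff (1 : ℝ)).1 h
      simp only [zsmul_eq_mul, mul_one, add_zero] at hn
      have hpp : (0 : ℝ) < p := by exact_mod_cast hp.out.pos
      have h1 : (0 : ℝ) < a / p := div_pos (by exact_mod_cast h0) hpp
      have h2 : (a / p : ℝ) < 1 := by rw [div_lt_one hpp]; exact_mod_cast ha
      rw [← hn] at h1 h2
      have b1 : 0 < n := by exact_mod_cast h1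
      have b2 : n < 1 := by exact_mod_cast h2
      omega
  have hfin0 := qe_eq_of_re_gt_one (f := qeT p 0)
    (g := fun s => (I * (Real.sqrt p : ℝ)) * DirichletCharacter.LFunction χ s) hc0
    (hLc.const_mul _) hs0
  -- value of the untwisted sum
  have hW : 2 * qeT p 0 1 = -(2 * Real.pi * I *
      ((∑ a ∈ Finset.range p, ((legendreSym p a : ℤ) : ℂ) * a) / p)) := by
    have hr := qe_reflect p (fun u => HurwitzZeta.expZeta u 1)
    have hT : qeT p 0 1 = ∑ a ∈ Finset.range p, ((legendreSym p a : ℤ) : ℂ) *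
      HurwitzZeta.expZeta ((a / p : ℝ) : UnitAddCircle) 1 := by simp [qeT]
    rw [hneg] at hr
    have h2 : 2 * qeT p 0 1 = ∑ a ∈ Finset.range p, ((legendreSym p a : ℤ) : ℂ) *
        (HurwitzZeta.expZeta ((a / p : ℝ) : UnitAddCircle) 1 -
          HurwitzZeta.expZeta (-((a / p : ℝ) : UnitAddCircle)) 1) := by
      simp only [mul_sub, Finset.sum_sub_distrib]
      rw [hT]
      push_cast at hr ⊢
      linear_combination hr
    have hterm : ∀ a ∈ Finset.range p, ((legendreSym p a : ℤ) : ℂ) *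
        (HurwitzZeta.expZeta ((a / p : ℝ) : UnitAddCircle) 1 -
          HurwitzZeta.expZeta (-((a / p : ℝ) : UnitAddCircle)) 1) =
        2 * Real.pi * I * ((1 / 2) * ((legendreSym p a : ℤ) : ℂ) -
          ((legendreSym p a : ℤ) : ℂ) * a / p) := by
      intro a ha
      have ha := Finset.mem_range.1 ha
      rcases Nat.eq_zero_or_pos a with rfl | h0
      · simp
      · have hpp : (0 : ℝ) < p := by exact_mod_cast hp.out.pos
        have h1 : (0 : ℝ) < a / p := div_pos (by exact_mod_cast h0) hpp
        have h2 : (a / p : ℝ) < 1 := by rw [div_lt_one hpp]; exact_mod_cast ha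
        rw [qe_expZeta_sub _ h1 h2]
        push_cast
        ring
    rw [h2, Finset.sum_congr rfl hterm, ← Finset.mul_sum, Finset.sum_sub_distrib, ← Finset.mul_sum,
      qe_sum_legendre p hp2, ← Finset.sum_div]
    ring
  -- the twisted identity
  have hs : ∀ s : ℂ, 1 < s.re → qeT p (((1 : ℤ) : ℝ) / 3) s + qeT p (((-1 : ℤ) : ℝ) / 3) s =
      (I * (Real.sqrt p : ℝ)) * ((3 * ((legendreSym p 3 : ℤ) : ℂ) * (3 : ℂ) ^ (-s) - 1) *
        DirichletCharacter.LFunction χ s) := by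
    intro s hs
    have hL := qe_L_hasSum χ hs
    have h1 := (qeT_hasSum p hp2 (((1 : ℤ) : ℝ) / 3) hs).add
      (qeT_hasSum p hp2 (((-1 : ℤ) : ℝ) / 3) hs)
    have hmul : HasSum (fun n : ℕ => if 3 ∣ n then ((legendreSym p n : ℤ) : ℂ) / (n : ℂ) ^ s else 0)
        (((legendreSym p 3 : ℤ) : ℂ) * (3 : ℂ) ^ (-s) * DirichletCharacter.LFunction χ s) := by
      have hinj : Function.Injective (fun k : ℕ => 3 * k) := fun a b h => by
        simp only at h; omega
      rw [← hinj.hasSum_iff]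
      · refine HasSum.congr_fun (hL.mul_left _) fun k => ?_
        simp only [Function.comp, dvd_mul_right, if_true]
        rw [hχ, Nat.cast_mul, Nat.cast_mul, legendreSym.mul,
          show ((3 : ℕ) : ℂ) = ((3 : ℝ) : ℂ) by norm_num,
          show (k : ℂ) = ((k : ℝ) : ℂ) by norm_num,
          Complex.mul_cpow_ofReal_nonneg (by norm_num) (Nat.cast_nonneg k), Complex.cpow_neg]
        push_cast
        rw [div_eq_mul_inv, mul_inv]
        ring
      · intro x hx
        rw [if_neg]
        rintro ⟨k, rfl⟩
        exact hx ⟨k, rfl⟩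
    have h2 := ((hmul.mul_left 3).sub hL).mul_left (I * (Real.sqrt p : ℝ))
    have h3 := h1.unique (HasSum.congr_fun h2 fun n => ?_)
    · rw [h3]; ring
    rw [hχ, qe_exp_third n 1 (Or.inl rfl), qe_exp_third n (-1) (Or.inr rfl), if_neg hp41]
    have hsq : ((Real.sqrt 3 : ℝ) : ℂ) ^ 2 = 3 := by
      rw [← Complex.ofReal_pow, Real.sq_sqrt (by norm_num)]; norm_num
    have : n % 3 < 3 := Nat.mod_lt _ (by norm_num)
    simp only [Nat.dvd_iff_mod_eq_zero]
    interval_cases n % 3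
    · simp; ring
    · push_cast; ring
    · push_cast
      linear_combination ((legendreSym p n : ℤ) : ℂ) * I * (Real.sqrt p : ℂ) / (n : ℂ) ^ s *
        (1 / 2) * (I ^ 2 * hsq + 3 * Complex.I_sq)
  have hfin := qe_eq_of_re_gt_one
    (f := fun s => qeT p (((1 : ℤ) : ℝ) / 3) s + qeT p (((-1 : ℤ) : ℝ) / 3) s)
    (g := fun s => (I * (Real.sqrt p : ℝ)) *
      ((3 * ((legendreSym p 3 : ℤ) : ℂ) * (3 : ℂ) ^ (-s) - 1) *
        DirichletCharacter.LFunction χ s))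
    ((qeT_cont p _ fun a _ => Or.inr (qe_coe_ne p hp3 a 1 (Or.inl rfl))).add
      (qeT_cont p _ fun a _ => Or.inr (qe_coe_ne p hp3 a (-1) (Or.inr rfl))))
    (by
      refine ContinuousAt.const_mul (ContinuousAt.mul ?_ hLc) _
      refine ContinuousAt.sub (ContinuousAt.const_mul ?_ _) continuousAt_const
      exact ContinuousAt.const_cpow continuousAt_neg (Or.inl (by norm_num))) hs
  have hD := qe_D p hp3
  simp only [mul_sub, Finset.sum_sub_distrib] at hD
  simp only [qeT_neg_third] at hfin
  rw [hneg] at hfin hD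
  have hT : qeT p (((1 : ℤ) : ℝ) / 3) 1 = ∑ a ∈ Finset.range p, ((legendreSym p a : ℤ) : ℂ) *
      HurwitzZeta.expZeta ((a / p + 1 / 3 : ℝ) : UnitAddCircle) 1 := by simp [qeT]
  rw [← hT] at hD
  have h3' : (3 : ℂ) ^ (-(1 : ℂ)) = 1 / 3 := by rw [Complex.cpow_neg_one]; norm_num
  rw [h3'] at hfin
  have hpi : (Real.pi : ℂ) ≠ 0 := by exact_mod_cast Real.pi_ne_zero
  generalize DirichletCharacter.LFunction χ 1 = Lv at *
  generalize (∑ a ∈ Finset.range p, ((legendreSym p a : ℤ) : ℂ) * a) = W at *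
  push_cast at hD hfin ⊢
  have hD' := mul_left_cancel₀ Complex.I_ne_zero (a := I)
    (b := (Real.sqrt p : ℂ) * (3 - ((legendreSym p 3 : ℤ) : ℂ)) * Lv)
    (c := 2 * Real.pi * ∑ n ∈ (Finset.range p).filter
      (fun n : ℕ => 0 < n ∧ (n : ℚ) < (p : ℚ) / 3), ((legendreSym p (n : ℤ) : ℤ) : ℂ))
    (by linear_combination hfin - hD - 2 * hfin0 + hW)
  generalize (∑ n ∈ (Finset.range p).filter
      (fun n : ℕ => 0 < n ∧ (n : ℚ) < (p : ℚ) / 3), ((legendreSym p (n : ℤ) : ℤ) : ℂ)) = S at *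
  field_simp
  linear_combination -hD'



/-- Theorem 7.4: let `p > 3` be prime and let `χ` be the Dirichlet character of modulus `3p`
with `χ(n) = χ₃(n) χ_p(n)` for all integers `n` (`χ₃` the Legendre symbol mod 3). Then:
(i) if `p ≡ 1 mod 4`, `∑_{0<n<p/3} χ_p(n) = (√(3p)/(2π)) L(1, χ)`;
(ii) if `p ≡ 3 mod 4`, `∑_{0<n<p/3} χ_p(n) = (√p/(2π)) (3 - χ_p(3)) L(1, χ̃_p)`. -/
theorem quadratic_excess_third_eq (p : ℕ) [hp : Fact p.Prime] (hp3 : 3 < p)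
    (χ : DirichletCharacter ℂ (3 * p))
    (hχ : ∀ n : ℤ, χ ((n : ZMod (3 * p)))
        = ((@legendreSym 3 ⟨by norm_num⟩ n : ℤ) : ℂ) * ((legendreSym p n : ℤ) : ℂ)) :
    (p % 4 = 1 →
      (((∑ n ∈ (Finset.range p).filter (fun n : ℕ => 0 < n ∧ (n : ℚ) < (p : ℚ) / 3),
          legendreSym p (n : ℤ) : ℤ)) : ℂ)
        = ((Real.sqrt (3 * (p : ℝ)) / (2 * Real.pi) : ℝ) : ℂ) *
            @DirichletCharacter.LFunction (3 * p)
              ⟨mul_ne_zero (by norm_num) hp.out.ne_zero⟩ χ 1) ∧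
    (p % 4 = 3 →
      (((∑ n ∈ (Finset.range p).filter (fun n : ℕ => 0 < n ∧ (n : ℚ) < (p : ℚ) / 3),
          legendreSym p (n : ℤ) : ℤ)) : ℂ)
        = ((Real.sqrt p / (2 * Real.pi) : ℝ) : ℂ) * ((3 : ℂ) - ((legendreSym p 3 : ℤ) : ℂ)) *
            DirichletCharacter.LFunction
              ((quadraticChar (ZMod p)).ringHomComp (Int.castRingHom ℂ)) 1) := by
  haveI : NeZero (3 * p) := ⟨mul_ne_zero (by norm_num) hp.out.ne_zero⟩
  haveI : Fact (Nat.Prime 3) := ⟨by norm_num⟩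
  exact ⟨fun h => qe_case1 p hp3 χ hχ h, fun h => qe_case2 p hp3 h⟩
end

section
/- Let p be an odd prime and let ζ = exp(2πi/p) ∈ ℂ. The quadratic Gauss sum G(1, p) = ∑_{n=0}^{p-1} χ_p(n)·ζ^n satisfies: G(1, p) = √p if p ≡ 1 (mod 4), and G(1, p) = i·√p if p ≡ 3 (mod 4). -/
/-- Gaussian binomial coefficients, by the Pascal rule. -/
def qBin (q : ℂ) : ℕ → ℕ → ℂ
  | _, 0 => 1
  | 0, _ + 1 => 0
  | m + 1, j + 1 => qBin q m j + q ^ (j + 1) * qBin q m (j + 1)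

lemma qBin_zero_right (q : ℂ) (m : ℕ) : qBin q m 0 = 1 := by cases m <;> rfl

lemma qBin_succ (q : ℂ) (m j : ℕ) :
    qBin q (m + 1) (j + 1) = qBin q m j + q ^ (j + 1) * qBin q m (j + 1) := rfl

lemma qBin_eq_zero (q : ℂ) (m : ℕ) : ∀ j, m < j → qBin q m j = 0 := by
  induction m with
  | zero => intro j hj; cases j with
    | zero => omega
    | succ j => rfl
  | succ m ih => intro j hj; cases j with
    | zero => omega
    | succ j => rw [qBin_succ, ih j (by omega), ih (j + 1) (by omega)]; simp

lemma qBin_absorb (q : ℂ) (m : ℕ) :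
    ∀ j, (1 - q ^ (j + 1)) * qBin q (m + 1) (j + 1) = (1 - q ^ (m + 1)) * qBin q m j := by
  induction m with
  | zero => intro j; cases j with
    | zero => simp [qBin]
    | succ j => simp [qBin]
  | succ m ih => intro j; cases j with
    | zero =>
      have := ih 0
      rw [qBin_succ]
      simp only [qBin_zero_right] at *
      linear_combination q * this
    | succ j =>
      have h1 := ih j
      have h2 := ih (j + 1)
      have h3 := qBin_succ q m j
      rw [qBin_succ q (m + 1)]
      linear_combination q ^ (j + 2) * h2 + q * h1 - q * (1 - q ^ (m + 1)) * h3

lemma qBin_ratio (q : ℂ) (m j : ℕ) :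
    q ^ (j + 1) * (1 - q ^ (j + 1)) * qBin q m (j + 1)
      = (q ^ (j + 1) - q ^ (m + 1)) * qBin q m j := by
  have h1 := qBin_absorb q m j
  rw [qBin_succ] at h1
  linear_combination h1

lemma qBin_alt (q : ℂ) (m : ℕ) :
    ∑ j ∈ Finset.range (m + 3), (-1 : ℂ) ^ j * qBin q (m + 2) j
      = (1 - q ^ (m + 1)) * ∑ j ∈ Finset.range (m + 1), (-1 : ℂ) ^ j * qBin q m j := by
  have key : ∀ j, (-1 : ℂ) ^ (j + 1) * qBin q (m + 2) (j + 1)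
      = (-1) ^ (j + 1) * qBin q (m + 1) (j + 1) - (-1) ^ j * qBin q (m + 1) j
        + (1 - q ^ (m + 1)) * ((-1) ^ j * qBin q m j) := by
    intro j
    rw [qBin_succ q (m + 1)]
    linear_combination (-1) ^ j * qBin_absorb q m j
  rw [Finset.sum_range_succ' _ (m + 2), Finset.sum_congr rfl (fun j _ => key j),
    Finset.sum_add_distrib, Finset.sum_range_sub (fun j => (-1 : ℂ) ^ j * qBin q (m + 1) j),
    ← Finset.mul_sum, Finset.sum_range_succ _ (m + 1), qBin_eq_zero q (m + 1) (m + 2) (by omega),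
    qBin_eq_zero q m (m + 1) (by omega)]
  simp [qBin_zero_right]

lemma qBin_gauss (q : ℂ) (n : ℕ) :
    ∑ j ∈ Finset.range (2 * n + 1), (-1 : ℂ) ^ j * qBin q (2 * n) j
      = ∏ k ∈ Finset.range n, (1 - q ^ (2 * k + 1)) := by
  induction n with
  | zero => simp [qBin_zero_right]
  | succ n ih =>
    rw [Finset.prod_range_succ, ← ih, show 2 * (n + 1) = 2 * n + 2 by ring, qBin_alt]
    ring

lemma root_sum (z : ℂ) (m : ℕ) (hz : IsPrimitiveRoot z (2 * m + 1)) :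
    z ^ ((m + 1) ^ 2) * ∑ j ∈ Finset.range (2 * m + 1), z ^ (j * (j + 1))
      = ∏ k ∈ Finset.range m, (z ^ (2 * k + 1) - (z ^ (2 * k + 1))⁻¹) := by
  have hz0 : z ≠ 0 := hz.ne_zero (by omega)
  set q := (z ^ 2)⁻¹ with hq
  have hqp : IsPrimitiveRoot q (2 * m + 1) :=
    (hz.pow_of_coprime 2 (by simp)).inv
  have hq0 : q ≠ 0 := hqp.ne_zero (by omega)
  have ev : ∀ j, j < 2 * m + 1 → (-1 : ℂ) ^ j * qBin q (2 * m) j = z ^ (j * (j + 1)) := by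
    intro j
    induction j with
    | zero => intro _; simp [qBin_zero_right]
    | succ j ih =>
      intro hj
      have h1 := qBin_ratio q (2 * m) j
      have h2 : q ^ (j + 1) ≠ 1 := hqp.pow_ne_one_of_pos_of_lt (by omega) hj
      rw [hqp.pow_eq_one] at h1
      have h3 : q ^ (j + 1) * qBin q (2 * m) (j + 1) = - qBin q (2 * m) j := by
        apply mul_left_cancel₀ (sub_ne_zero.2 h2.symm)
        linear_combination h1
      have h4 : z ^ (2 * (j + 1)) * q ^ (j + 1) = 1 := by
        rw [hq, pow_mul, ← mul_pow, mul_inv_cancel₀ (pow_ne_zero _ hz0), one_pow]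
      have h5 := ih (by omega)
      rw [show (j + 1) * (j + 1 + 1) = 2 * (j + 1) + j * (j + 1) by ring, pow_add z, ← h5]
      linear_combination (-1) ^ j * qBin q (2 * m) (j + 1) * h4
        - (-1) ^ j * z ^ (2 * (j + 1)) * h3
  rw [← Finset.sum_congr rfl (fun j hj => ev j (Finset.mem_range.1 hj)), qBin_gauss]
  have h6 : z ^ ((m + 1) ^ 2) = z ^ (m ^ 2) := by
    rw [show (m + 1) ^ 2 = m ^ 2 + (2 * m + 1) by ring, pow_add, hz.pow_eq_one, mul_one]
  have h7 : ∀ m : ℕ, z ^ (m ^ 2) = ∏ k ∈ Finset.range m, z ^ (2 * k + 1) := by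
    intro m
    induction m with
    | zero => simp
    | succ m ih => rw [Finset.prod_range_succ, ← ih]; ring
  rw [h6, h7, ← Finset.prod_mul_distrib]
  refine Finset.prod_congr rfl fun k _ => ?_
  have : z ^ (2 * k + 1) ≠ 0 := pow_ne_zero _ hz0
  rw [hq, inv_pow, ← pow_mul, mul_comm 2, pow_mul]
  field_simp
  ring

lemma zmod_sum_range (p : ℕ) [NeZero p] (F : ZMod p → ℂ) :
    ∑ n ∈ Finset.range p, F (n : ZMod p) = ∑ x : ZMod p, F x := by
  refine Finset.sum_bij' (fun n _ => (n : ZMod p)) (fun x _ => x.val) ?_ ?_ ?_ ?_ ?_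
  · intro a _; simp
  · intro a _; simpa using ZMod.val_lt a
  · intro a ha; exact ZMod.val_cast_of_lt (by simpa using ha)
  · intro a _; simp
  · intro a _; rfl

lemma sum_sq_eq (p : ℕ) [Fact p.Prime] (hp2 : p ≠ 2) (ψ : AddChar (ZMod p) ℂ) (hψ : ψ ≠ 1) :
    ∑ x : ZMod p, ψ (x ^ 2) = ∑ a : ZMod p, (quadraticChar (ZMod p) a : ℂ) * ψ a := by
  have h1 : ∀ a : ZMod p, (quadraticChar (ZMod p) a : ℂ) * ψ a
      = (∑ x : ZMod p, if x ^ 2 = a then ψ a else 0) - ψ a := by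
    intro a
    have := quadraticChar_card_sqrts ((ZMod.ringChar_zmod_n p).substr hp2) a
    rw [← Finset.sum_filter, Finset.sum_const, nsmul_eq_mul]
    have h2 : ({x : ZMod p | x ^ 2 = a}.toFinset) = Finset.univ.filter (fun x => x ^ 2 = a) := by
      ext; simp
    rw [h2] at this
    have h3 : ((Finset.univ.filter (fun x : ZMod p => x ^ 2 = a)).card : ℂ)
        = (quadraticChar (ZMod p) a : ℂ) + 1 := by exact_mod_cast this
    rw [h3]; ring
  rw [Finset.sum_congr rfl (fun a _ => h1 a), Finset.sum_sub_distrib,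
    AddChar.sum_eq_zero_of_ne_one hψ, Finset.sum_comm]
  simp

lemma gauss_prod (p m : ℕ) [Fact p.Prime] (hm : p = 2 * m + 1) (hp2 : p ≠ 2) :
    ∑ n ∈ Finset.range p, ((legendreSym p (n : ℤ) : ℤ) : ℂ) *
          Complex.exp (2 * (Real.pi : ℂ) * Complex.I / (p : ℂ)) ^ n
    = ∏ k ∈ Finset.range m, (2 * Complex.I * ((Real.sin (2 * Real.pi * (2 * k + 1) / p) : ℝ) : ℂ))
    ∧ (∑ n ∈ Finset.range p, ((legendreSym p (n : ℤ) : ℤ) : ℂ) *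
          Complex.exp (2 * (Real.pi : ℂ) * Complex.I / (p : ℂ)) ^ n) ^ 2
      = ((ZMod.χ₄ p : ℤ) : ℂ) * p := by
  have hp0 : p ≠ 0 := by omega
  set z := Complex.exp (2 * (Real.pi : ℂ) * Complex.I / (p : ℂ)) with hz
  have hprim : IsPrimitiveRoot z p := Complex.isPrimitiveRoot_exp p hp0
  have hpc : (p : ℂ) ≠ 0 := by exact_mod_cast hp0
  have hψ : ∀ n : ℕ, ZMod.stdAddChar (n : ZMod p) = z ^ n := by
    intro n
    have := ZMod.stdAddChar_coe (N := p) n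
    rw [hz, ← Complex.exp_nat_mul]
    push_cast at this
    rw [this]; congr 1; ring
  have hψp := ZMod.isPrimitive_stdAddChar p
  have hψ1 : ZMod.stdAddChar (N := p) ≠ 1 := by
    intro h
    have h1 := hψ 1
    rw [h] at h1
    exact hprim.ne_one (Fact.out : p.Prime).one_lt (by simpa using h1.symm)
  have hsum : ∑ n ∈ Finset.range p, ((legendreSym p (n : ℤ) : ℤ) : ℂ) * z ^ n
      = ∑ a : ZMod p, (quadraticChar (ZMod p) a : ℂ) * ZMod.stdAddChar a := by
    rw [← zmod_sum_range]
    refine Finset.sum_congr rfl fun n _ => ?_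
    rw [hψ, legendreSym]; simp
  rw [hsum]
  constructor
  · rw [← sum_sq_eq p hp2 _ hψ1, ← Equiv.sum_comp (Equiv.addRight ((m + 1 : ℕ) : ZMod p)),
      ← zmod_sum_range]
    have h1 := root_sum z m (hm ▸ hprim)
    rw [← hm, Finset.mul_sum] at h1
    have h2 : ∀ n : ℕ, ZMod.stdAddChar
        ((Equiv.addRight ((m + 1 : ℕ) : ZMod p) (n : ZMod p)) ^ 2)
        = z ^ ((m + 1) ^ 2) * z ^ (n * (n + 1)) := by
      intro n
      rw [← pow_add, ← hψ]
      congr 1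
      have : ((p : ℕ) : ZMod p) = 0 := ZMod.natCast_self p
      have h3 : (2 * m + 1 : ZMod p) = 0 := by
        have h4 := congrArg (Nat.cast : ℕ → ZMod p) hm
        rw [this] at h4
        push_cast at h4
        exact h4.symm
      simp only [Equiv.coe_addRight]
      push_cast
      linear_combination (n : ZMod p) * h3
    rw [Finset.sum_congr rfl (fun n _ => h2 n), h1]
    refine Finset.prod_congr rfl fun k _ => ?_
    rw [hz, ← Complex.exp_nat_mul, ← Complex.exp_neg, Complex.ofReal_sin, Complex.sin]
    have e1 : ((2 * k + 1 : ℕ) : ℂ) * (2 * (Real.pi : ℂ) * Complex.I / (p : ℂ))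
      = ((2 * Real.pi * (2 * k + 1) / p : ℝ) : ℂ) * Complex.I := by push_cast; ring
    rw [e1, neg_mul]
    linear_combination (Complex.exp (((2 * Real.pi * (2 * k + 1) / p : ℝ) : ℂ) * Complex.I) -
      Complex.exp (-(((2 * Real.pi * (2 * k + 1) / p : ℝ) : ℂ) * Complex.I))) * Complex.I_sq
  · have hr : ringChar (ZMod p) ≠ 2 := (ZMod.ringChar_zmod_n p).substr hp2
    have hχ : (quadraticChar (ZMod p)).ringHomComp (Int.castRingHom ℂ) ≠ 1 := by
      rw [MulChar.ringHomComp_ne_one_iff (RingHom.injective_int _)]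
      exact quadraticChar_ne_one hr
    have h := gaussSum_sq hχ ((quadraticChar_isQuadratic (ZMod p)).comp _) hψp
    rw [gaussSum] at h
    simp only [MulChar.ringHomComp_apply, quadraticChar_neg_one hr, ZMod.card] at h
    simpa using h

lemma prod_pos_form (n : ℕ) (c : ℂ) (f : ℕ → ℂ) (h : ∀ k < n, ∃ r : ℝ, 0 < r ∧ f k = c * r) :
    ∃ r : ℝ, 0 < r ∧ ∏ k ∈ Finset.range n, f k = c ^ n * r := by
  induction n with
  | zero => exact ⟨1, one_pos, by simp⟩
  | succ n ih =>
    obtain ⟨r, hr, h1⟩ := ih fun k hk => h k (by omega)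
    obtain ⟨s, hs, h2⟩ := h n (by omega)
    refine ⟨r * s, mul_pos hr hs, ?_⟩
    rw [Finset.prod_range_succ, h1, h2]
    push_cast
    ring

lemma sin_prod (p a b : ℕ) (hp : 0 < p) (ha : ∀ k, k < a → 2 * (2 * k + 1) < p)
    (hb : ∀ k, k < b → p < 2 * (2 * (a + k) + 1) ∧ 2 * (a + k) + 1 < p) :
    ∃ r : ℝ, 0 < r ∧
      ∏ k ∈ Finset.range (a + b),
        (2 * Complex.I * ((Real.sin (2 * Real.pi * (2 * k + 1) / p) : ℝ) : ℂ))
        = Complex.I ^ a * (-Complex.I) ^ b * (r : ℂ) := by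
  have hp' : (0 : ℝ) < p := by exact_mod_cast hp
  have hpi := Real.pi_pos
  rw [Finset.prod_range_add]
  obtain ⟨r, hr, h1⟩ := prod_pos_form a Complex.I
    (fun k => 2 * Complex.I * ((Real.sin (2 * Real.pi * (2 * k + 1) / p) : ℝ) : ℂ)) (by
      intro k hk
      refine ⟨2 * Real.sin (2 * Real.pi * (2 * k + 1) / p), mul_pos two_pos ?_, by push_cast; ring⟩
      have h := ha k hk
      have h' : (2 * (2 * k + 1) : ℝ) < p := by exact_mod_cast h
      apply Real.sin_pos_of_pos_of_lt_pi
      · positivity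
      · rw [div_lt_iff₀ hp']; nlinarith)
  obtain ⟨s, hs, h2⟩ := prod_pos_form b (-Complex.I)
    (fun k => 2 * Complex.I *
      ((Real.sin (2 * Real.pi * (2 * ((a + k : ℕ) : ℝ) + 1) / p) : ℝ) : ℂ)) (by
      intro k hk
      refine ⟨2 * Real.sin (2 * Real.pi * (2 * ((a + k : ℕ) : ℝ) + 1) / p - Real.pi),
        mul_pos two_pos ?_, by rw [Real.sin_sub_pi]; push_cast; ring⟩
      obtain ⟨h3, h4⟩ := hb k hk
      have h3' : (p : ℝ) < (2 * (2 * ((a + k : ℕ) : ℝ) + 1)) := by exact_mod_cast h3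
      have h4' : (2 * ((a + k : ℕ) : ℝ) + 1) < (p : ℝ) := by exact_mod_cast h4
      apply Real.sin_pos_of_pos_of_lt_pi
      · rw [sub_pos, lt_div_iff₀ hp']; nlinarith
      · rw [sub_lt_iff_lt_add, div_lt_iff₀ hp']; nlinarith)
  refine ⟨r * s, mul_pos hr hs, ?_⟩
  rw [h1, h2]
  push_cast
  ring

lemma pos_sq_eq (p : ℕ) (r : ℝ) (hr : 0 < r) (h : (r : ℂ) ^ 2 = p) : r = Real.sqrt p := by
  have h' : r ^ 2 = (p : ℝ) := by exact_mod_cast h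
  rw [← h', Real.sqrt_sq hr.le]

lemma I_cancel (t : ℕ) : Complex.I ^ t * (-Complex.I) ^ t = 1 := by
  rw [← mul_pow]; simp



/-- Theorem 7.6 (Gauss): the value of the quadratic Gauss sum
`G(1, p) = ∑_{n=0}^{p-1} χ_p(n) ζ^n` with `ζ = exp(2πi/p)` is `√p` if `p ≡ 1 mod 4` and
`i √p` if `p ≡ 3 mod 4`. -/
theorem gauss_sum_value (p : ℕ) [Fact p.Prime] (hp2 : p ≠ 2) :
    (p % 4 = 1 →
      ∑ n ∈ Finset.range p, ((legendreSym p (n : ℤ) : ℤ) : ℂ) *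
          Complex.exp (2 * (Real.pi : ℂ) * Complex.I / (p : ℂ)) ^ n
        = ((Real.sqrt p : ℝ) : ℂ)) ∧
    (p % 4 = 3 →
      ∑ n ∈ Finset.range p, ((legendreSym p (n : ℤ) : ℤ) : ℂ) *
          Complex.exp (2 * (Real.pi : ℂ) * Complex.I / (p : ℂ)) ^ n
        = Complex.I * ((Real.sqrt p : ℝ) : ℂ)) := by
  constructor
  · intro h
    obtain ⟨t, ht⟩ : ∃ t, p = 4 * t + 1 := ⟨p / 4, by omega⟩
    obtain ⟨h1, h2⟩ := gauss_prod p (t + t) (by omega) hp2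
    obtain ⟨r, hr, h3⟩ := sin_prod p t t (by omega) (by intros; omega) (by intros; omega)
    rw [I_cancel, one_mul] at h3
    rw [h1, h3, ZMod.χ₄_nat_one_mod_four h] at h2
    rw [h1, h3, ← pos_sq_eq p r hr (by simpa using h2)]
  · intro h
    obtain ⟨t, ht⟩ : ∃ t, p = 4 * t + 3 := ⟨p / 4, by omega⟩
    obtain ⟨h1, h2⟩ := gauss_prod p (t + 1 + t) (by omega) hp2
    obtain ⟨r, hr, h3⟩ := sin_prod p (t + 1) t (by omega) (by intros; omega) (by intros; omega)
    rw [pow_succ, mul_right_comm (Complex.I ^ t), I_cancel, one_mul] at h3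
    rw [h1, h3, ZMod.χ₄_nat_three_mod_four h, mul_pow, Complex.I_sq] at h2
    rw [h1, h3, ← pos_sq_eq p r hr (by simpa using h2)]
end

section
/- Let b > 1 be an integer, let χ be a primitive Dirichlet character of modulus b all of whose values are real, and set d = χ(-1)·b ∈ ℤ (so d = ±b according as χ(-1) = ±1). Let K be any number field with [K : ℚ] = 2 whose discriminant equals d, let h be the class number of K, let w be the number of roots of unity in the ring of integers of K, and let R be the regulator of K. If d < 0, then L(1, χ) = 2π·h/(w·√|d|). If d > 0, then L(1, χ) = 2·R·h/√d. -/
open NumberField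

lemma aux_gauss_sq {E : Type*} [Field E] {b : ℕ} [NeZero b] (χ : DirichletCharacter E b)
    (hprim : χ.IsPrimitive) (hinv : χ⁻¹ = χ) (ψ : AddChar (ZMod b) E) (hψ : ψ.IsPrimitive) :
    gaussSum χ ψ * gaussSum χ ψ = χ (-1) * b := by
  classical
  calc gaussSum χ ψ * gaussSum χ ψ = ∑ a, ψ a * (χ⁻¹ a * gaussSum χ ψ) := by
        conv_lhs => enter [1]; rw [gaussSum]
        rw [Finset.sum_mul, hinv]
        exact Finset.sum_congr rfl fun a _ => by ring
    _ = ∑ a, ψ a * ∑ c, χ c * ψ (a * c) := by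
        refine Finset.sum_congr rfl fun a _ => ?_
        rw [← gaussSum_mulShift_of_isPrimitive ψ hprim]
        rfl
    _ = ∑ c, χ c * ∑ a, ψ (a * (1 + c)) := by
        simp_rw [Finset.mul_sum]
        rw [Finset.sum_comm]
        refine Finset.sum_congr rfl fun c _ => Finset.sum_congr rfl fun a _ => ?_
        rw [mul_add, AddChar.map_add_eq_mul, mul_one]; ring
    _ = χ (-1) * b := by
        simp_rw [AddChar.sum_mulShift _ hψ]
        rw [Finset.sum_eq_single (-1)]
        · simp [ZMod.card]
        · intro c _ hc
          rw [if_neg]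
          · simp
          · intro h; exact hc (eq_neg_of_add_eq_zero_right h)
        · simp

lemma aux_prim_transfer {E : Type*} [Field E] [CharZero E] {b : ℕ} [NeZero b]
    (χ : DirichletCharacter ℤ b)
    (hprim : DirichletCharacter.IsPrimitive (χ.ringHomComp (Int.castRingHom ℂ))) :
    DirichletCharacter.IsPrimitive (χ.ringHomComp (Int.castRingHom E)) := by
  unfold DirichletCharacter.IsPrimitive at *
  refine Eq.trans ?_ hprim
  unfold DirichletCharacter.conductor DirichletCharacter.conductorSet
  congr 1
  ext d
  simp only [Set.mem_ofPred_eq]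
  have key : ∀ (F : Type _) [Field F] [CharZero F] (hd : d ∣ b),
      DirichletCharacter.FactorsThrough (χ.ringHomComp (Int.castRingHom F)) d ↔
      ∀ x ∈ (ZMod.unitsMap hd).ker, χ x = 1 := by
    intro F _ _ hd
    rw [DirichletCharacter.factorsThrough_iff_ker_unitsMap hd]
    refine forall₂_congr fun x _ => ?_
    rw [MonoidHom.mem_ker, Units.ext_iff, MulChar.coe_toUnitHom]
    simp
  have key2 : ∀ (hd : d ∣ b),
      DirichletCharacter.FactorsThrough (χ.ringHomComp (Int.castRingHom E)) d ↔
      ∀ x ∈ (ZMod.unitsMap hd).ker, χ x = 1 := by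
    intro hd
    rw [DirichletCharacter.factorsThrough_iff_ker_unitsMap hd]
    refine forall₂_congr fun x _ => ?_
    rw [MonoidHom.mem_ker, Units.ext_iff, MulChar.coe_toUnitHom]
    simp
  constructor <;> intro h
  · exact (key ℂ h.dvd).2 ((key2 h.dvd).1 h)
  · exact (key2 h.dvd).2 ((key ℂ h.dvd).1 h)

/-- splitting law -/
lemma aux_split' {b : ℕ} [NeZero b] (E : Type) [Field E] [NumberField E]
    [IsCyclotomicExtension {b} ℚ E] (χ : DirichletCharacter ℤ b)
    (hprim : DirichletCharacter.IsPrimitive (χ.ringHomComp (Int.castRingHom ℂ)))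
    (hquad : ∀ a, IsUnit a → χ a = 1 ∨ χ a = -1)
    (t n : ℤ) (htn : t ^ 2 - 4 * n = χ (-1) * b) (p : ℕ) (hp : p.Prime) (hpb : ¬ p ∣ b) :
    (∃ r : ℤ, (p : ℤ) ∣ r ^ 2 - t * r + n) ↔ χ p = 1 := by
  classical
  have : Fact p.Prime := ⟨hp⟩
  have hζ : IsPrimitiveRoot (IsCyclotomicExtension.zeta b ℚ E) b := IsCyclotomicExtension.zeta_spec b ℚ E
  set ζ := IsCyclotomicExtension.zeta b ℚ E
  have : IsGalois ℚ E := IsCyclotomicExtension.isGalois {b} ℚ E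
  let χE : DirichletCharacter E b := χ.ringHomComp (Int.castRingHom E)
  have hχE : χE.IsPrimitive := aux_prim_transfer χ hprim
  have hinv : χE⁻¹ = χE := by
    have : χE * χE = 1 := by
      ext a
      rcases hquad a a.isUnit with h | h <;> simp [χE, h]
    exact (eq_inv_of_mul_eq_one_left this).symm
  have hψ := AddChar.zmodChar_primitive_of_primitive_root b hζ
  set ψ := AddChar.zmodChar b ((IsPrimitiveRoot.iff_def ζ b).mp hζ).left with hψdef
  set g := gaussSum χE ψ with hg
  have hg2 : g * g = ((t ^ 2 - 4 * n : ℤ) : E) := by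
    rw [hg, aux_gauss_sq χE hχE hinv ψ hψ, htn]; push_cast; rfl
  obtain ⟨P, hPm, hPp⟩ : ∃ P : Ideal (𝓞 E), P.IsMaximal ∧ (p : 𝓞 E) ∈ P := by
    have : Ideal.span {(p : 𝓞 E)} ≠ ⊤ := by
      rw [Ne, Ideal.span_singleton_eq_top]
      intro h
      have h2 := h.map (Algebra.norm ℤ)
      rw [show (p : 𝓞 E) = algebraMap ℤ (𝓞 E) p by simp, Algebra.norm_algebraMap,
        isUnit_pow_iff (Module.finrank_pos.ne')] at h2
      exact hp.one_lt.ne' (by simpa [Int.isUnit_iff_natAbs_eq] using h2)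
    obtain ⟨P, h1, h2⟩ := Ideal.exists_le_maximal _ this
    exact ⟨P, h1, h2 (Ideal.mem_span_singleton_self _)⟩
  have hPunder : P.under ℤ = Ideal.span {(p : ℤ)} := by
    symm
    have : (Ideal.span {(p : ℤ)}).IsMaximal :=
      Ideal.IsPrime.isMaximal ((Ideal.span_singleton_prime (by exact_mod_cast hp.ne_zero)).2 (Nat.prime_iff_prime_int.1 hp)) (by simp [hp.ne_zero])
    refine this.eq_of_le (Ideal.IsPrime.ne_top inferInstance) ?_
    rw [Ideal.span_singleton_le_iff_mem]
    simpa [Ideal.under, Ideal.mem_comap] using hPp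
  have hmemP : ∀ z : ℤ, (z : 𝓞 E) ∈ P ↔ (p : ℤ) ∣ z := by
    intro z
    rw [← Ideal.mem_span_singleton, ← hPunder, Ideal.under, Ideal.mem_comap, eq_intCast]
  have hPbot : P ≠ ⊥ := by
    rintro rfl
    simp [hp.ne_zero] at hPp
  have : Finite (𝓞 E ⧸ P) := Ring.HasFiniteQuotients.finiteQuotient hPbot
  obtain ⟨σ, hσ⟩ := IsArithFrobAt.exists_of_isInvariant ℤ Gal(E/ℚ) P
  have hcard : Nat.card (ℤ ⧸ P.under ℤ) = p := by
    rw [hPunder, Nat.card_congr (Int.quotientSpanEquivZMod p).toEquiv]; simp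
  have hσ' : ∀ x : 𝓞 E, σ • x - x ^ p ∈ P := by
    intro x
    have := hσ x
    rw [hcard] at this
    exact this
  have hσζ : σ ζ = ζ ^ p := by
    have h1 := AlgHom.IsArithFrobAt.apply_of_pow_eq_one hσ (ζ := hζ.toInteger) (m := b)
      (hζ.toInteger_isPrimitiveRoot.pow_eq_one)
      (by rw [← Int.cast_natCast, hmemP]; exact_mod_cast hpb)
    rw [hcard] at h1
    have := congrArg (algebraMap (𝓞 E) E) h1
    rw [map_pow] at this
    exact this
  have hpu : IsUnit (p : ZMod b) := (ZMod.isUnit_iff_coprime p b).2 ((Nat.Prime.coprime_iff_not_dvd hp).2 hpb)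
  have hσg : σ g = (χ p : E) * g := by
    have : σ g = gaussSum χE (ψ.mulShift p) := by
      rw [hg, gaussSum, gaussSum, map_sum]
      refine Finset.sum_congr rfl fun a _ => ?_
      rw [map_mul, AddChar.mulShift_apply]
      congr 1
      · simp [χE]
      · rw [mul_comm, ← Nat.cast_comm, ← nsmul_eq_mul, AddChar.map_nsmul_eq_pow, hψdef, AddChar.zmodChar_apply,
          map_pow, hσζ]; ring
    rw [this, gaussSum_mulShift_of_isPrimitive ψ hχE, hinv]
    rfl
  have hη : IsIntegral ℤ (((t : E) + g) / 2) := by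
    refine ⟨Polynomial.X ^ 2 - Polynomial.C t * Polynomial.X + Polynomial.C n, ?_, ?_⟩
    · monicity!
    · simp only [Polynomial.eval₂_add, Polynomial.eval₂_sub, Polynomial.eval₂_mul,
        Polynomial.eval₂_pow, Polynomial.eval₂_X, Polynomial.eval₂_C]
      simp only [eq_intCast]
      push_cast at hg2
      linear_combination hg2 / 4
  let η : 𝓞 E := ⟨((t : E) + g) / 2, hη⟩
  have hηf : η ^ 2 - t * η + n = 0 := by
    apply RingOfIntegers.ext
    have h1 : ((η : 𝓞 E) : E) = (t + g) / 2 := rfl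
    simp only [map_add, map_sub, map_mul, map_pow, map_intCast, map_zero, h1]
    push_cast at hg2
    linear_combination hg2 / 4
  have hση : ((σ • η : 𝓞 E) : E) = ((t : E) + χ p * g) / 2 := by
    have : ((σ • η : 𝓞 E) : E) = σ (η : E) := rfl
    have h1 : ((η : 𝓞 E) : E) = (t + g) / 2 := rfl
    rw [this, h1, map_div₀, map_add, hσg, map_intCast, map_ofNat]
  have hd : ((t ^ 2 - 4 * n : ℤ) : 𝓞 E) ∉ P := by
    rw [hmemP, htn]
    have hu : IsUnit (χ (-1)) := (isUnit_one.neg).map χ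
    rw [hu.dvd_mul_left]
    exact_mod_cast hpb
  let k := 𝓞 E ⧸ P
  let : Field k := Ideal.Quotient.field P
  have hk0 : ∀ z : ℤ, (z : k) = 0 ↔ (p : ℤ) ∣ z := by
    intro z
    rw [← hmemP, ← Ideal.Quotient.eq_zero_iff_mem]; simp [k]
  have : CharP k p := ⟨fun x => by
    rw [← Int.cast_natCast, hk0]; exact Int.natCast_dvd_natCast⟩
  let e : k := Ideal.Quotient.mk P η
  have he : e ^ 2 - t * e + n = 0 := by
    have := congrArg (Ideal.Quotient.mk P) hηf
    simpa [e] using this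
  have hfe : Ideal.Quotient.mk P (σ • η) = e ^ p := by
    have := (Ideal.Quotient.eq.2 (hσ' η)); simpa [e] using this
  have hbot : (∃ r : ℤ, (p : ℤ) ∣ r ^ 2 - t * r + n) ↔ e ^ p = e := by
    rw [← Subfield.mem_bot_iff_pow_eq_self (F := k) p, mem_bot_iff_intCast p k]
    constructor
    · rintro ⟨r, hr⟩
      have hr' := (hk0 _).2 hr
      push_cast at hr'
      have : (e - r) * (e - (t - r)) = 0 := by linear_combination he - hr'
      rcases mul_eq_zero.1 this with h | h
      · exact ⟨r, (sub_eq_zero.1 h).symm⟩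
      · exact ⟨t - r, by push_cast; exact (sub_eq_zero.1 h).symm⟩
    · rintro ⟨r, hr⟩
      refine ⟨r, (hk0 _).1 ?_⟩
      push_cast
      rw [hr]; exact he
  rw [hbot, ← hfe]
  constructor
  · intro h
    rcases hquad _ hpu with h1 | h1
    · exact h1
    exfalso
    rw [h1] at hση
    have h2 : σ • η = t - η := by
      apply RingOfIntegers.ext
      rw [hση]
      have h1 : ((η : 𝓞 E) : E) = (t + g) / 2 := rfl
      simp only [map_sub, map_intCast, h1]
      push_cast
      ring
    rw [h2, Ideal.Quotient.eq] at h
    apply hd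
    have : ((t ^ 2 - 4 * n : ℤ) : 𝓞 E) = (t - η - η) * (t - η - η) := by
      push_cast
      linear_combination -4 * hηf
    rw [this]
    exact Ideal.mul_mem_left _ _ h
  · intro h
    rw [h] at hση
    have h2 : σ • η = η := by
      apply RingOfIntegers.ext
      rw [hση]
      have h1 : ((η : 𝓞 E) : E) = (t + g) / 2 := rfl
      rw [h1]; push_cast; ring
    rw [h2]

lemma aux_split {b : ℕ} [NeZero b] (χ : DirichletCharacter ℤ b)
    (hprim : DirichletCharacter.IsPrimitive (χ.ringHomComp (Int.castRingHom ℂ)))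
    (hquad : ∀ a, IsUnit a → χ a = 1 ∨ χ a = -1)
    (t n : ℤ) (htn : t ^ 2 - 4 * n = χ (-1) * b) (p : ℕ) (hp : p.Prime) (hpb : ¬ p ∣ b) :
    (∃ r : ℤ, (p : ℤ) ∣ r ^ 2 - t * r + n) ↔ χ p = 1 := by
  have : NeZero ((b : ℕ) : ℚ) := ⟨by exact_mod_cast NeZero.ne b⟩
  have h0 := CyclotomicField.isCyclotomicExtension b ℚ
  have h1 : IsCyclotomicExtension {b} ℚ (CyclotomicField b ℚ) := by
    convert! h0
  have h2 : NumberField (CyclotomicField b ℚ) :=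
    @IsCyclotomicExtension.numberField {b} ℚ _ _ _ _ _ _ h1
  exact aux_split' (CyclotomicField b ℚ) χ hprim hquad t n htn p hp hpb

lemma aux_basis (K : Type) [Field K] [NumberField K] (hK2 : Module.finrank ℚ K = 2) :
    ∃ (θ : 𝓞 K) (t n : ℤ), θ ^ 2 - t * θ + n = 0 ∧
      (∀ x : 𝓞 K, ∃ u v : ℤ, x = u + v * θ) ∧
      (∀ u v : ℤ, (u : 𝓞 K) + v * θ = 0 → u = 0 ∧ v = 0) ∧
      discr K = t ^ 2 - 4 * n := by
  have hr : Module.finrank ℤ (𝓞 K) = 2 := by rw [RingOfIntegers.rank, hK2]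
  let B : Module.Basis (Fin 2) ℤ (𝓞 K) := Module.finBasisOfFinrankEq ℤ (𝓞 K) hr
  obtain ⟨a, ha⟩ : ∃ a, a = B.repr 1 0 := ⟨_, rfl⟩
  obtain ⟨b, hb⟩ : ∃ b, b = B.repr 1 1 := ⟨_, rfl⟩
  have h1 : (1 : 𝓞 K) = a * B 0 + b * B 1 := by
    have := B.sum_repr 1
    rw [Fin.sum_univ_two, zsmul_eq_mul, zsmul_eq_mul] at this
    rw [ha, hb, this]
  have hcop : IsCoprime a b := by
    rw [Int.isCoprime_iff_gcd_eq_one]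
    have hdvd : ((Int.gcd a b : ℤ) : 𝓞 K) ∣ 1 := by
      rw [h1]
      refine dvd_add (Dvd.dvd.mul_right ?_ _) (Dvd.dvd.mul_right ?_ _)
      · exact Int.cast_dvd_cast _ _ (Int.gcd_dvd_left _ _)
      · exact Int.cast_dvd_cast _ _ (Int.gcd_dvd_right _ _)
    have h2 := (isUnit_of_dvd_one hdvd).map (Algebra.norm ℤ)
    rw [show ((Int.gcd a b : ℤ) : 𝓞 K) = algebraMap ℤ (𝓞 K) (Int.gcd a b) by simp, Algebra.norm_algebraMap,
      isUnit_pow_iff (Module.finrank_pos.ne')] at h2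
    simpa [Int.isUnit_iff_natAbs_eq] using h2
  obtain ⟨u, v, huv⟩ := hcop
  have huv' : (u : 𝓞 K) * a + v * b = 1 := by exact_mod_cast congrArg (Int.cast : ℤ → 𝓞 K) huv
  let θ : 𝓞 K := -v * B 0 + u * B 1
  have hB0 : B 0 = u - b * θ := by
    simp only [θ]; linear_combination (-(B 0)) * huv' - u * h1
  have hB1 : B 1 = v + a * θ := by
    simp only [θ]; linear_combination (-(B 1)) * huv' - v * h1
  have hspan : ∀ x : 𝓞 K, ∃ u v : ℤ, x = u + v * θ := by
    intro x
    have := B.sum_repr x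
    rw [Fin.sum_univ_two, zsmul_eq_mul, zsmul_eq_mul] at this
    refine ⟨B.repr x 0 * u + B.repr x 1 * v, - B.repr x 0 * b + B.repr x 1 * a, ?_⟩
    push_cast
    rw [hB0, hB1] at this
    linear_combination -this
  have hspan' : ⊤ ≤ Submodule.span ℤ (Set.range ![(1 : 𝓞 K), θ]) := by
    intro x _
    obtain ⟨u, v, rfl⟩ := hspan x
    have e : (u : 𝓞 K) + v * θ = u • ![(1 : 𝓞 K), θ] 0 + v • ![(1 : 𝓞 K), θ] 1 := by simp
    rw [e]
    exact add_mem (Submodule.smul_mem _ _ (Submodule.subset_span ⟨0, rfl⟩))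
      (Submodule.smul_mem _ _ (Submodule.subset_span ⟨1, rfl⟩))
  let C : Module.Basis (Fin 2) ℤ (𝓞 K) := basisOfTopLeSpanOfCardEqFinrank _ hspan' (by simp [hr])
  have hC : (C : Fin 2 → 𝓞 K) = ![1, θ] := coe_basisOfTopLeSpanOfCardEqFinrank _ _ _
  have hC0 : C 0 = 1 := by rw [hC]; rfl
  have hC1 : C 1 = θ := by rw [hC]; rfl
  have hind : ∀ u v : ℤ, (u : 𝓞 K) + v * θ = 0 → u = 0 ∧ v = 0 := by
    intro u v h
    have := (LinearIndependent.pair_iff (R := ℤ) (x := C 0) (y := C 1)).1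
      (by simpa [hC] using C.linearIndependent) u v (by simpa [hC0, hC1] using h)
    exact this
  obtain ⟨m, t, ht⟩ := hspan (θ ^ 2)
  have htr1 : Algebra.trace ℤ (𝓞 K) 1 = 2 := by
    have := Algebra.trace_algebraMap (R := ℤ) (S := 𝓞 K) 1
    rw [hr] at this
    simpa using this
  have hrep : ∀ u v : ℤ, C.repr ((u : 𝓞 K) + v * θ) = Finsupp.single 0 u + Finsupp.single 1 v := by
    intro u v
    have : (u : 𝓞 K) + v * θ = u • C 0 + v • C 1 := by simp [hC0, hC1]
    rw [this, map_add, map_zsmul, map_zsmul, C.repr_self, C.repr_self]; simp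
  have htrθ : Algebra.trace ℤ (𝓞 K) θ = t := by
    rw [Algebra.trace_eq_matrix_trace C, Matrix.trace_fin_two, Algebra.leftMulMatrix_eq_repr_mul,
      Algebra.leftMulMatrix_eq_repr_mul, hC0, hC1, ← pow_two, ht, hrep, mul_one]
    have := hrep 0 1
    simp at this
    simp [this]
  have htrθ2 : Algebra.trace ℤ (𝓞 K) (θ ^ 2) = t ^ 2 + 2 * m := by
    rw [ht]
    have : (m : 𝓞 K) + t * θ = m • 1 + t • θ := by simp
    rw [this, map_add, map_zsmul, map_zsmul, htr1, htrθ]; simp; ring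
  refine ⟨θ, t, -m, by rw [ht]; push_cast; ring, hspan, hind, ?_⟩
  rw [← discr_eq_discr K C, Algebra.discr_def, Matrix.det_fin_two]
  simp only [Algebra.traceMatrix_apply, Algebra.traceForm_apply, hC0, hC1, ← pow_two, one_pow, mul_one, one_mul,
    htr1, htrθ, htrθ2]
  ring

section counts
variable {K : Type} [Field K] [NumberField K]

lemma aux_absNorm_p (hK2 : Module.finrank ℚ K = 2) (p : ℕ) :
    Ideal.absNorm (Ideal.span {(p : 𝓞 K)}) = p ^ 2 := by
  rw [Ideal.absNorm_span_singleton, show (p : 𝓞 K) = algebraMap ℤ (𝓞 K) p by simp,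
    Algebra.norm_algebraMap, RingOfIntegers.rank, hK2]
  simp [Int.natAbs_pow]

lemma aux_dvd_pow (p k : ℕ) (I : Ideal (𝓞 K)) (hI : Ideal.absNorm I = p ^ k) :
    I ∣ (Ideal.span {(p : 𝓞 K)}) ^ k := by
  rw [Ideal.span_singleton_pow, Ideal.dvd_span_singleton]
  have := Ideal.absNorm_mem I
  rw [hI] at this
  exact_mod_cast this

lemma aux_count_inert (hK2 : Module.finrank ℚ K = 2) (p : ℕ) (hp : p.Prime)
    (h : Prime (Ideal.span {(p : 𝓞 K)})) (k : ℕ) :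
    Nat.card {I : Ideal (𝓞 K) // Ideal.absNorm I = p ^ k} = if Even k then 1 else 0 := by
  have key : ∀ I : Ideal (𝓞 K), Ideal.absNorm I = p ^ k →
      ∃ i, k = 2 * i ∧ I = Ideal.span {(p : 𝓞 K)} ^ i := by
    intro I hI
    obtain ⟨i, -, hi⟩ := (dvd_prime_pow h k).1 (aux_dvd_pow p k I hI)
    have hi := associated_iff_eq.1 hi
    refine ⟨i, ?_, hi⟩
    rw [hi, map_pow, aux_absNorm_p hK2, ← pow_mul] at hI
    exact (Nat.pow_right_injective hp.two_le hI).symm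
  split_ifs with hk
  · obtain ⟨i, hi⟩ := hk
    rw [Nat.card_eq_one_iff_exists]
    refine ⟨⟨Ideal.span {(p : 𝓞 K)} ^ i, ?_⟩, ?_⟩
    · rw [map_pow, aux_absNorm_p hK2, ← pow_mul, hi, two_mul]
    · rintro ⟨I, hI⟩
      obtain ⟨j, hj, rfl⟩ := key I hI
      have : i = j := by omega
      subst this; rfl
  · rw [Nat.card_eq_zero]
    left
    refine ⟨fun ⟨I, hI⟩ => hk ?_⟩
    obtain ⟨j, hj, -⟩ := key I hI
    exact ⟨j, by omega⟩

lemma aux_count_ram (p : ℕ) (hp : p.Prime) (P : Ideal (𝓞 K))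
    (hP : Prime P) (hNP : Ideal.absNorm P = p)
    (h : P * P = (Ideal.span {(p : 𝓞 K)})) (k : ℕ) :
    Nat.card {I : Ideal (𝓞 K) // Ideal.absNorm I = p ^ k} = 1 := by
  rw [Nat.card_eq_one_iff_exists]
  refine ⟨⟨P ^ k, by rw [map_pow, hNP]⟩, ?_⟩
  rintro ⟨I, hI⟩
  have h1 := aux_dvd_pow p k I hI
  rw [← h, ← pow_two, ← pow_mul] at h1
  obtain ⟨i, -, hi⟩ := (dvd_prime_pow hP _).1 h1
  have hi := associated_iff_eq.1 hi
  rw [hi, map_pow, hNP] at hI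
  have := Nat.pow_right_injective hp.two_le hI
  subst this
  exact Subtype.ext hi

lemma aux_count_split (p : ℕ) (hp : p.Prime) (P Q : Ideal (𝓞 K))
    (hP : Prime P) (hQ : Prime Q) (hPQ : P ≠ Q) (hNP : Ideal.absNorm P = p)
    (hNQ : Ideal.absNorm Q = p)
    (h : P * Q = (Ideal.span {(p : 𝓞 K)})) (k : ℕ) :
    Nat.card {I : Ideal (𝓞 K) // Ideal.absNorm I = p ^ k} = k + 1 := by
  let f : Fin (k + 1) → {I : Ideal (𝓞 K) // Ideal.absNorm I = p ^ k} := fun i =>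
    ⟨P ^ (i : ℕ) * Q ^ (k - i), by
      rw [map_mul, map_pow, map_pow, hNP, hNQ, ← pow_add]; congr 1; omega⟩
  have hnd : ¬ P ∣ Q := fun hd => hPQ (associated_iff_eq.1 ((hP.dvd_prime_iff_associated hQ).1 hd))
  have hlt : ∀ i j : ℕ, i < j → j ≤ k → P ^ i * Q ^ (k - i) ≠ P ^ j * Q ^ (k - j) := by
    intro i j hij hj he
    have : j = i + (j - i) := by omega
    rw [this, pow_add, mul_assoc] at he
    have he := mul_left_cancel₀ (pow_ne_zero _ hP.ne_zero) he
    have : P ∣ Q ^ (k - i) := by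
      rw [he]
      exact Dvd.dvd.mul_right (dvd_pow_self _ (by omega)) _
    exact hnd (hP.dvd_of_dvd_pow this)
  have hf : Function.Bijective f := by
    constructor
    · intro i j hij
      have := congrArg Subtype.val hij
      simp only [f] at this
      rcases lt_trichotomy (i : ℕ) j with h | h | h
      · exact absurd this (hlt _ _ h (by omega))
      · exact Fin.ext h
      · exact absurd this.symm (hlt _ _ h (by omega))
    · rintro ⟨I, hI⟩
      have h1 := aux_dvd_pow p k I hI
      rw [← h, mul_pow] at h1
      obtain ⟨A, B, hA, hB, rfl⟩ := exists_dvd_and_dvd_of_dvd_mul h1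
      obtain ⟨i, -, hi⟩ := (dvd_prime_pow hP _).1 hA
      obtain ⟨j, -, hj⟩ := (dvd_prime_pow hQ _).1 hB
      have hi := associated_iff_eq.1 hi
      have hj := associated_iff_eq.1 hj
      subst hi hj
      rw [map_mul, map_pow, map_pow, hNP, hNQ, ← pow_add] at hI
      have := Nat.pow_right_injective hp.two_le hI
      have this : i + j = k := this
      refine ⟨⟨i, by omega⟩, Subtype.ext ?_⟩
      simp only [f]
      congr 2
      omega
  rw [← Nat.card_eq_of_bijective f hf]
  simp

lemma aux_mult (hK2 : Module.finrank ℚ K = 2) (m n : ℕ) (hm : m ≠ 0) (hn : n ≠ 0)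
    (hmn : m.Coprime n) :
    Nat.card {I : Ideal (𝓞 K) // Ideal.absNorm I = m * n} =
    Nat.card {I : Ideal (𝓞 K) // Ideal.absNorm I = m} *
    Nat.card {I : Ideal (𝓞 K) // Ideal.absNorm I = n} := by
  have hcop : ∀ I J : Ideal (𝓞 K), Ideal.absNorm I = m → Ideal.absNorm J = n → IsCoprime I J := by
    intro I J hI hJ
    rw [Ideal.isCoprime_iff_exists]
    obtain ⟨u, v, huv⟩ := Nat.isCoprime_iff_coprime.2 hmn
    refine ⟨u * m, I.mul_mem_left _ (hI ▸ Ideal.absNorm_mem I), v * n,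
      J.mul_mem_left _ (hJ ▸ Ideal.absNorm_mem J), ?_⟩
    exact_mod_cast congrArg (Int.cast : ℤ → 𝓞 K) huv
  rw [← Nat.card_prod]
  symm
  refine Nat.card_eq_of_bijective
    (fun x => ⟨x.1.1 * x.2.1, by rw [map_mul, x.1.2, x.2.2]⟩) ⟨?_, ?_⟩
  · rintro ⟨⟨I, hI⟩, ⟨J, hJ⟩⟩ ⟨⟨I', hI'⟩, ⟨J', hJ'⟩⟩ h
    have h : I * J = I' * J' := congrArg Subtype.val h
    have h1 : I = I' := by
      apply dvd_antisymm
      · exact (hcop I J' hI hJ').dvd_of_dvd_mul_right (h ▸ dvd_mul_right I J)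
      · exact (hcop I' J hI' hJ).dvd_of_dvd_mul_right (h ▸ dvd_mul_right I' J')
    have h2 : J = J' := by
      apply dvd_antisymm
      · exact (hcop I' J hI' hJ).symm.dvd_of_dvd_mul_left (h ▸ dvd_mul_left J I)
      · exact (hcop I J' hI hJ').symm.dvd_of_dvd_mul_left (h ▸ dvd_mul_left J' I')
    subst h1 h2; rfl
  · rintro ⟨L, hL⟩
    have hprod : (L ⊔ Ideal.span {(m : 𝓞 K)}) * (L ⊔ Ideal.span {(n : 𝓞 K)}) = L := by
      have hmnL : (m : 𝓞 K) * n ∈ L := by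
        have := Ideal.absNorm_mem L
        rw [hL] at this
        exact_mod_cast this
      apply le_antisymm
      · rw [Ideal.sup_mul, Ideal.mul_sup, Ideal.mul_sup, Ideal.span_singleton_mul_span_singleton]
        refine sup_le (sup_le Ideal.mul_le_left Ideal.mul_le_left) (sup_le Ideal.mul_le_right ?_)
        rwa [Ideal.span_singleton_le_iff_mem]
      · intro x hx
        obtain ⟨u, v, huv⟩ := Nat.isCoprime_iff_coprime.2 hmn
        have huv' : (u : 𝓞 K) * m + v * n = 1 := by
          exact_mod_cast congrArg (Int.cast : ℤ → 𝓞 K) huv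
        have : x = (u * m) * x + x * (v * n) := by linear_combination (-x) * huv'
        rw [this]
        refine add_mem (Ideal.mul_mem_mul (Ideal.mem_sup_right ?_) (Ideal.mem_sup_left hx))
          (Ideal.mul_mem_mul (Ideal.mem_sup_left hx) (Ideal.mem_sup_right ?_))
        · exact Ideal.mul_mem_left _ _ (Ideal.mem_span_singleton_self _)
        · exact Ideal.mul_mem_left _ _ (Ideal.mem_span_singleton_self _)
    have hN := congrArg Ideal.absNorm hprod
    rw [map_mul, hL] at hN
    have hA : Ideal.absNorm (L ⊔ Ideal.span {(m : 𝓞 K)}) ∣ m ^ 2 := by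
      rw [← aux_absNorm_p hK2]
      exact Ideal.absNorm_dvd_absNorm_of_le le_sup_right
    have hB : Ideal.absNorm (L ⊔ Ideal.span {(n : 𝓞 K)}) ∣ n ^ 2 := by
      rw [← aux_absNorm_p hK2]
      exact Ideal.absNorm_dvd_absNorm_of_le le_sup_right
    have hA' : Ideal.absNorm (L ⊔ Ideal.span {(m : 𝓞 K)}) ∣ m := by
      refine Nat.Coprime.dvd_of_dvd_mul_right (?_ : Nat.Coprime _ n) (hN ▸ dvd_mul_right _ _)
      exact Nat.Coprime.coprime_dvd_left hA (hmn.pow_left 2)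
    have hB' : Ideal.absNorm (L ⊔ Ideal.span {(n : 𝓞 K)}) ∣ n := by
      refine Nat.Coprime.dvd_of_dvd_mul_left (?_ : Nat.Coprime _ m) (hN ▸ dvd_mul_left _ _)
      exact Nat.Coprime.coprime_dvd_left hB (hmn.symm.pow_left 2)
    have hA'' := Nat.le_of_dvd (Nat.pos_of_ne_zero hm) hA'
    have hB'' := Nat.le_of_dvd (Nat.pos_of_ne_zero hn) hB'
    have e1 : Ideal.absNorm (L ⊔ Ideal.span {(m : 𝓞 K)}) = m := by
      refine le_antisymm hA'' ?_
      refine Nat.le_of_mul_le_mul_right (c := n) ?_ (Nat.pos_of_ne_zero hn)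
      rw [← hN]; exact Nat.mul_le_mul_left _ hB''
    have e2 : Ideal.absNorm (L ⊔ Ideal.span {(n : 𝓞 K)}) = n := by
      rw [e1] at hN
      exact Nat.eq_of_mul_eq_mul_left (Nat.pos_of_ne_zero hm) hN
    exact ⟨(⟨_, e1⟩, ⟨_, e2⟩), Subtype.ext hprod⟩

end counts
section primes
variable {K : Type} [Field K] [NumberField K]

lemma aux_normP (θ : 𝓞 K) (hspan : ∀ x : 𝓞 K, ∃ u v : ℤ, x = u + v * θ)
    (p : ℕ) (hp : p.Prime) (r : ℤ) (P : Ideal (𝓞 K)) (hpP : (p : 𝓞 K) ∈ P)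
    (hr : θ - r ∈ P) (hP : P ≠ ⊤) : Ideal.absNorm P = p := by
  have hpp : (Int.castAddHom (𝓞 K ⧸ P)) (p : ℤ) = 0 := by
    simpa using (Ideal.Quotient.eq_zero_iff_mem).2 hpP
  have hbij : Function.Bijective (ZMod.lift p ⟨Int.castAddHom (𝓞 K ⧸ P), hpp⟩) := by
    constructor
    · rw [injective_iff_map_eq_zero]
      intro x hx
      obtain ⟨z, rfl⟩ := ZMod.intCast_surjective x
      rw [ZMod.lift_coe] at hx
      simp only [Int.coe_castAddHom] at hx
      have hz : (z : 𝓞 K) ∈ P := by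
        rw [← Ideal.Quotient.eq_zero_iff_mem]
        simpa using hx
      rw [ZMod.intCast_zmod_eq_zero_iff_dvd]
      by_contra hnd
      have hc : IsCoprime (p : ℤ) z :=
        (Prime.coprime_iff_not_dvd (Nat.prime_iff_prime_int.1 hp)).2 hnd
      obtain ⟨u, v, huv⟩ := hc
      apply hP
      rw [Ideal.eq_top_iff_one]
      have huv' : (u : 𝓞 K) * p + v * z = 1 := by
        exact_mod_cast congrArg (Int.cast : ℤ → 𝓞 K) huv
      rw [← huv']
      exact add_mem (P.mul_mem_left _ hpP) (P.mul_mem_left _ hz)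
    · intro y
      obtain ⟨x, rfl⟩ := Ideal.Quotient.mk_surjective y
      obtain ⟨u, v, rfl⟩ := hspan x
      refine ⟨((u + v * r : ℤ) : ZMod p), ?_⟩
      rw [ZMod.lift_coe]
      simp only [Int.coe_castAddHom]
      rw [← map_intCast (Ideal.Quotient.mk P), eq_comm, Ideal.Quotient.eq]
      have : (u : 𝓞 K) + v * θ - ((u + v * r : ℤ) : 𝓞 K) = v * (θ - r) := by push_cast; ring
      rw [this]
      exact P.mul_mem_left _ hr
  rw [Ideal.absNorm_apply, Submodule.cardQuot_apply, ← Nat.card_eq_of_bijective _ hbij, Nat.card_zmod]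

lemma aux_inert (hK2 : Module.finrank ℚ K = 2) (θ : 𝓞 K) (t n : ℤ)
    (h0 : θ ^ 2 - t * θ + n = 0)
    (p : ℕ) (hp : p.Prime) (hroot : ¬ ∃ r : ℤ, (p : ℤ) ∣ r ^ 2 - t * r + n) :
    Prime (Ideal.span {(p : 𝓞 K)}) := by
  have hN := aux_absNorm_p hK2 p
  have hne : Ideal.span {(p : 𝓞 K)} ≠ ⊤ := by
    intro h
    rw [h, Ideal.absNorm_top] at hN
    have := hp.one_lt
    nlinarith
  obtain ⟨P, hPmax, hle⟩ := Ideal.exists_le_maximal _ hne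
  have hpP : (p : 𝓞 K) ∈ P := hle (Ideal.mem_span_singleton_self _)
  have hdvd : Ideal.absNorm P ∣ p ^ 2 := hN ▸ Ideal.absNorm_dvd_absNorm_of_le hle
  obtain ⟨i, hi, hPi⟩ := (Nat.dvd_prime_pow hp).1 hdvd
  have hi0 : i ≠ 0 := by
    rintro rfl
    rw [pow_zero, Ideal.absNorm_eq_one_iff] at hPi
    exact hPmax.ne_top hPi
  have hi1 : i ≠ 1 := by
    rintro rfl
    rw [pow_one] at hPi
    apply hroot
    haveI : Fact p.Prime := ⟨hp⟩
    have hpp : (Int.castAddHom (𝓞 K ⧸ P)) (p : ℤ) = 0 := by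
      simpa using (Ideal.Quotient.eq_zero_iff_mem).2 hpP
    have key : ∀ z : ℤ, (z : 𝓞 K) ∈ P → (p : ℤ) ∣ z := by
      intro z hz
      by_contra hnd
      obtain ⟨u, v, huv⟩ := (Prime.coprime_iff_not_dvd (Nat.prime_iff_prime_int.1 hp)).2 hnd
      apply hPmax.ne_top
      rw [Ideal.eq_top_iff_one]
      have huv' : (u : 𝓞 K) * p + v * z = 1 := by
        exact_mod_cast congrArg (Int.cast : ℤ → 𝓞 K) huv
      rw [← huv']
      exact add_mem (P.mul_mem_left _ hpP) (P.mul_mem_left _ hz)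
    let φ := ZMod.lift p ⟨Int.castAddHom (𝓞 K ⧸ P), hpp⟩
    have hinj : Function.Injective φ := by
      rw [injective_iff_map_eq_zero]
      intro x hx
      obtain ⟨z, rfl⟩ := ZMod.intCast_surjective x
      simp only [φ] at hx
      rw [ZMod.lift_coe] at hx
      simp only [Int.coe_castAddHom] at hx
      rw [ZMod.intCast_zmod_eq_zero_iff_dvd]
      apply key
      rw [← Ideal.Quotient.eq_zero_iff_mem]
      simpa using hx
    have hcard : Nat.card (𝓞 K ⧸ P) = Nat.card (ZMod p) := by
      rw [Nat.card_zmod, ← hPi, Ideal.absNorm_apply, Submodule.cardQuot_apply]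
    haveI : Finite (𝓞 K ⧸ P) := Nat.finite_of_card_ne_zero (by
      rw [hcard, Nat.card_zmod]; exact hp.ne_zero)
    have hbij : Function.Bijective φ := (Nat.bijective_iff_injective_and_card φ).2 ⟨hinj, hcard.symm⟩
    obtain ⟨x, hx⟩ := hbij.2 (Ideal.Quotient.mk P θ)
    obtain ⟨r, rfl⟩ := ZMod.intCast_surjective x
    simp only [φ] at hx
    rw [ZMod.lift_coe] at hx
    simp only [Int.coe_castAddHom] at hx
    refine ⟨r, key _ ?_⟩
    rw [← map_intCast (Ideal.Quotient.mk P), Ideal.Quotient.eq] at hx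
    have : ((r ^ 2 - t * r + n : ℤ) : 𝓞 K) = (r + θ - t) * (r - θ) := by
      push_cast
      linear_combination h0
    rw [this]
    exact P.mul_mem_left _ hx
  have hi2 : i = 2 := by omega
  subst hi2
  have hPp : Ideal.span {(p : 𝓞 K)} = P := by
    obtain ⟨J, hJ⟩ := Ideal.dvd_iff_le.2 hle
    have h1 := congrArg Ideal.absNorm hJ
    rw [map_mul, hN, hPi] at h1
    have h2 : Ideal.absNorm J = 1 := by
      have : 0 < p ^ 2 := pow_pos hp.pos 2
      exact Nat.eq_of_mul_eq_mul_left this (by rw [← h1, mul_one])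
    rw [Ideal.absNorm_eq_one_iff] at h2
    rw [hJ, h2, Ideal.mul_top]
  rw [hPp]
  refine Ideal.prime_of_isPrime ?_ hPmax.isPrime
  rintro rfl
  simp at hPi
  exact pow_ne_zero 2 hp.ne_zero hPi.symm

lemma aux_split_ideals (hK2 : Module.finrank ℚ K = 2) (θ : 𝓞 K) (t n : ℤ)
    (h0 : θ ^ 2 - t * θ + n = 0) (hspan : ∀ x : 𝓞 K, ∃ u v : ℤ, x = u + v * θ)
    (hind : ∀ u v : ℤ, (u : 𝓞 K) + v * θ = 0 → u = 0 ∧ v = 0)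
    (p : ℕ) (hp : p.Prime) (r : ℤ) (hr : (p : ℤ) ∣ r ^ 2 - t * r + n) :
    ∃ P Q : Ideal (𝓞 K), Prime P ∧ Prime Q ∧ Ideal.absNorm P = p ∧ Ideal.absNorm Q = p ∧
      P * Q = Ideal.span {(p : 𝓞 K)} ∧ (P = Q ↔ (p : ℤ) ∣ 2 * r - t) := by
  obtain ⟨c, hc⟩ := hr
  have hc' : ((r : 𝓞 K) ^ 2 - t * r + n) = p * c := by
    exact_mod_cast congrArg (Int.cast : ℤ → 𝓞 K) hc
  have hnd : ∀ s : ℤ, ¬ (p : 𝓞 K) ∣ θ - s := by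
    rintro s ⟨x, hx⟩
    obtain ⟨u, v, rfl⟩ := hspan x
    have := (hind (-s - p * u) (1 - p * v) (by push_cast; linear_combination hx)).2
    have h1 : (p : ℤ) ∣ 1 := ⟨v, by linarith⟩
    exact hp.one_lt.ne' (by exact_mod_cast Int.eq_one_of_dvd_one (by positivity) h1)
  let P := fun s : ℤ => Ideal.span {(p : 𝓞 K), θ - s}
  have hpm : ∀ s, (p : 𝓞 K) ∈ P s := fun s => Ideal.subset_span (by simp)
  have hθm : ∀ s : ℤ, θ - s ∈ P s := fun s => Ideal.subset_span (by simp)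
  have hle : P r * P (t - r) ≤ Ideal.span {(p : 𝓞 K)} := by
    simp only [P]
    rw [Ideal.span_mul_span', Ideal.span_le]
    rintro _ ⟨a, ha, b, hb, rfl⟩
    simp only [Set.mem_insert_iff, Set.mem_singleton_iff] at ha hb
    simp only [SetLike.mem_coe, Ideal.mem_span_singleton]
    rcases ha with rfl | rfl
    · exact dvd_mul_right _ _
    · rcases hb with rfl | rfl
      · exact dvd_mul_left _ _
      · refine ⟨-c, ?_⟩
        push_cast
        linear_combination h0 - hc'
  have hPt : P r ≠ ⊤ := by
    intro h
    rw [h, Ideal.top_mul] at hle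
    exact hnd _ (Ideal.mem_span_singleton.1 (hle (hθm (t - r))))
  have hQt : P (t - r) ≠ ⊤ := by
    intro h
    rw [h, Ideal.mul_top] at hle
    exact hnd _ (Ideal.mem_span_singleton.1 (hle (hθm r)))
  have hNP := aux_normP θ hspan p hp r _ (hpm r) (hθm r) hPt
  have hNQ := aux_normP θ hspan p hp (t - r) _ (hpm (t - r)) (hθm (t - r)) hQt
  have hprime : ∀ I : Ideal (𝓞 K), Ideal.absNorm I = p → Prime I := by
    intro I hI
    refine Ideal.prime_of_isPrime ?_ (Ideal.isPrime_of_irreducible_absNorm (by rw [hI]; exact hp))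
    rintro rfl
    simp at hI
    exact hp.ne_zero hI.symm
  refine ⟨P r, P (t - r), hprime _ hNP, hprime _ hNQ, hNP, hNQ, ?_, ?_⟩
  · obtain ⟨J, hJ⟩ := Ideal.dvd_iff_le.2 hle
    have h1 := congrArg Ideal.absNorm hJ
    rw [map_mul, map_mul, hNP, hNQ, aux_absNorm_p hK2, ← pow_two] at h1
    have h2 : Ideal.absNorm J = 1 := by
      have : 0 < p ^ 2 := pow_pos hp.pos 2
      exact Nat.eq_of_mul_eq_mul_left this (by rw [← h1, mul_one])
    rw [Ideal.absNorm_eq_one_iff] at h2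
    rw [hJ, h2, Ideal.mul_top]
  · constructor
    · intro h
      by_contra hnd'
      obtain ⟨u, v, huv⟩ := (Prime.coprime_iff_not_dvd (Nat.prime_iff_prime_int.1 hp)).2 hnd'
      apply hPt
      rw [Ideal.eq_top_iff_one]
      have huv' : (u : 𝓞 K) * p + v * (2 * r - t) = 1 := by
        exact_mod_cast congrArg (Int.cast : ℤ → 𝓞 K) huv
      have h3 : θ - ((t - r : ℤ) : 𝓞 K) ∈ P r := h ▸ hθm (t - r)
      have h4 := sub_mem h3 (hθm r)
      have h5 : (1 : 𝓞 K) = u * p + v * (θ - ((t - r : ℤ) : 𝓞 K) - (θ - r)) := by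
        push_cast
        linear_combination -huv'
      rw [h5]
      exact add_mem (Ideal.mul_mem_left _ _ (hpm r)) (Ideal.mul_mem_left _ _ h4)
    · rintro ⟨e, he⟩
      have he' : (2 * r - t : 𝓞 K) = p * e := by
        exact_mod_cast congrArg (Int.cast : ℤ → 𝓞 K) he
      have hsub : ∀ s s' : ℤ, (p : 𝓞 K) ∣ s - s' → P s ≤ P s' := by
        rintro s s' ⟨g, hg⟩
        simp only [P]
        rw [Ideal.span_le]
        intro x hx
        simp only [Set.mem_insert_iff, Set.mem_singleton_iff] at hx
        rcases hx with rfl | rfl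
        · exact hpm s'
        · have : θ - (s : 𝓞 K) = (θ - s') - g * p := by linear_combination -hg
          rw [this]
          exact sub_mem (hθm s') (Ideal.mul_mem_left _ _ (hpm s'))
      apply le_antisymm
      · exact hsub _ _ ⟨e, by push_cast; linear_combination he'⟩
      · exact hsub _ _ ⟨-e, by push_cast; linear_combination -he'⟩

lemma aux_root_of_dvd (t n : ℤ) (p : ℕ) (hp : p.Prime) (hd : (p : ℤ) ∣ t ^ 2 - 4 * n) :
    ∃ r : ℤ, (p : ℤ) ∣ r ^ 2 - t * r + n := by
  have hpi := Nat.prime_iff_prime_int.1 hp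
  rcases hp.eq_two_or_odd' with rfl | hodd
  · refine ⟨n, ?_⟩
    have h1 : (2 : ℤ) ∣ t := by
      have : (2 : ℤ) ∣ t ^ 2 := by
        have := dvd_add hd (⟨2 * n, by push_cast; ring⟩ : ((2 : ℕ) : ℤ) ∣ 4 * n)
        simpa using this
      exact Int.prime_two.dvd_of_dvd_pow this
    have h2 : (2 : ℤ) ∣ n ^ 2 + n := by
      have := Int.even_mul_succ_self n
      have := this.two_dvd
      rwa [show n ^ 2 + n = n * (n + 1) by ring]
    have : n ^ 2 - t * n + n = (n ^ 2 + n) - t * n := by ring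
    rw [this]
    exact dvd_sub h2 (Dvd.dvd.mul_right h1 n)
  · obtain ⟨m, hm⟩ := hodd
    refine ⟨t * (m + 1), ?_⟩
    have h4 : IsCoprime (p : ℤ) 4 := by
      rw [Prime.coprime_iff_not_dvd hpi]
      intro h
      have h' : p ∣ 2 ^ 2 := by exact_mod_cast h
      have := (Nat.prime_dvd_prime_iff_eq hp Nat.prime_two).1 (hp.dvd_of_dvd_pow h')
      omega
    refine h4.dvd_of_dvd_mul_left (?_ : (p : ℤ) ∣ 4 * _)
    have hm' : (p : ℤ) = 2 * m + 1 := by exact_mod_cast hm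
    have : (4 : ℤ) * ((t * (m + 1)) ^ 2 - t * (t * (m + 1)) + n) =
        p * (p * t ^ 2) - (t ^ 2 - 4 * n) := by
      rw [hm']; ring
    rw [this]
    exact dvd_sub (dvd_mul_right _ _) hd

end primes

lemma aux_intChar {b : ℕ} [NeZero b] (χ : DirichletCharacter ℂ b)
    (hreal : ∀ a : ZMod b, (χ a).im = 0) :
    ∃ χz : DirichletCharacter ℤ b, χz.ringHomComp (Int.castRingHom ℂ) = χ ∧
      ∀ a, IsUnit a → χz a = 1 ∨ χz a = -1 := by
  classical
  have h1 : ∀ a, IsUnit a → χ a = 1 ∨ χ a = -1 := by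
    intro a ha
    have hn : ‖χ a‖ = 1 := by
      obtain ⟨u, rfl⟩ := ha
      exact DirichletCharacter.unit_norm_eq_one χ u
    have hre : χ a = ((χ a).re : ℂ) := Complex.ext (by simp) (by simp [hreal a])
    rw [hre, Complex.norm_real, Real.norm_eq_abs] at hn
    rcases eq_or_eq_neg_of_abs_eq hn with h | h
    · left; rw [hre, h]; simp
    · right; rw [hre, h]; simp
  have h2 : ∀ a, χ a = 0 ∨ χ a = 1 ∨ χ a = -1 := by
    intro a
    by_cases ha : IsUnit a
    · exact Or.inr (h1 a ha)
    · exact Or.inl (χ.map_nonunit ha)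
  have hne : (-1 : ℂ) ≠ 1 := by norm_num
  let χz : DirichletCharacter ℤ b :=
    { toFun := fun a => if χ a = 0 then 0 else if χ a = 1 then 1 else -1
      map_one' := by simp
      map_mul' := by
        intro x y
        simp only [map_mul]
        rcases h2 x with h | h | h <;> rcases h2 y with h' | h' | h' <;>
          simp [h, h', hne]
      map_nonunit' := by
        intro a ha
        simp [χ.map_nonunit ha] }
  have hval : ∀ a, χz a = if χ a = 0 then 0 else if χ a = 1 then 1 else -1 := fun a => rfl
  refine ⟨χz, ?_, ?_⟩
  · apply MulChar.ext'
    intro a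
    rw [MulChar.ringHomComp_apply, hval]
    rcases h2 a with h | h | h <;> simp [h, hne]
  · intro a ha
    rw [hval]
    rcases h1 a ha with h | h <;> simp [h, hne]

lemma aux_zetaMul_ppow {b : ℕ} (χ : DirichletCharacter ℂ b) (p k : ℕ) (hp : p.Prime) :
    χ.zetaMul (p ^ k) = ∑ i ∈ Finset.range (k + 1), χ (p : ZMod b) ^ i := by
  rw [DirichletCharacter.zetaMul, ArithmeticFunction.coe_zeta_mul_apply,
    Nat.sum_divisors_prime_pow hp]
  refine Finset.sum_congr rfl fun i _ => ?_
  simp [toArithmeticFunction, hp.ne_zero]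

lemma aux_count_ppow {b : ℕ} [NeZero b] (χ : DirichletCharacter ℂ b) (hprim : χ.IsPrimitive)
    (hreal : ∀ a : ZMod b, (χ a).im = 0) (d : ℤ) (hd : (d : ℂ) = χ (-1) * (b : ℂ))
    (K : Type) [Field K] [NumberField K]
    (hK2 : Module.finrank ℚ K = 2) (hKd : NumberField.discr K = d) (p k : ℕ) (hp : p.Prime) :
    (Nat.card {I : Ideal (𝓞 K) // Ideal.absNorm I = p ^ k} : ℂ) = χ.zetaMul (p ^ k) := by
  obtain ⟨χz, rfl, hquad⟩ := aux_intChar χ hreal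
  obtain ⟨θ, t, n, h0, hspan, hind, hdisc⟩ := aux_basis K hK2
  rw [MulChar.ringHomComp_apply] at hd
  have hd' : d = χz (-1) * b := by
    simp only [eq_intCast] at hd
    exact_mod_cast hd
  have htn : t ^ 2 - 4 * n = χz (-1) * b := by rw [← hdisc, hKd, hd']
  have hm1 : IsUnit (χz (-1)) := (isUnit_one.neg).map χz
  have hpd : (p : ℤ) ∣ t ^ 2 - 4 * n ↔ p ∣ b := by
    rw [htn, hm1.dvd_mul_left]
    exact Int.natCast_dvd_natCast
  rw [aux_zetaMul_ppow _ _ _ hp, MulChar.ringHomComp_apply]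
  by_cases hpb : p ∣ b
  · have hχ : χz (p : ZMod b) = 0 := by
      apply χz.map_nonunit
      rw [ZMod.isUnit_iff_coprime]
      intro h
      exact hp.one_lt.ne' (Nat.eq_one_of_dvd_coprimes h dvd_rfl hpb)
    obtain ⟨r, hr⟩ := aux_root_of_dvd t n p hp (hpd.2 hpb)
    obtain ⟨P, Q, hP, hQ, hNP, hNQ, hPQ, hiff⟩ :=
      aux_split_ideals hK2 θ t n h0 hspan hind p hp r hr
    have : P = Q := by
      rw [hiff]
      apply (Nat.prime_iff_prime_int.1 hp).dvd_of_dvd_pow (n := 2)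
      have : (2 * r - t) ^ 2 = (t ^ 2 - 4 * n) + 4 * (r ^ 2 - t * r + n) := by ring
      rw [this]
      exact dvd_add (hpd.2 hpb) (Dvd.dvd.mul_left hr 4)
    subst this
    rw [aux_count_ram p hp P hP hNP hPQ k, hχ]
    rw [Finset.sum_range_succ']
    simp
  · by_cases hroot : ∃ r : ℤ, (p : ℤ) ∣ r ^ 2 - t * r + n
    · have hχ := (aux_split χz hprim hquad t n htn p hp hpb).1 hroot
      obtain ⟨r, hr⟩ := hroot
      obtain ⟨P, Q, hP, hQ, hNP, hNQ, hPQ, hiff⟩ :=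
        aux_split_ideals hK2 θ t n h0 hspan hind p hp r hr
      have : P ≠ Q := by
        intro h
        rw [hiff] at h
        apply hpb
        rw [← hpd]
        have : t ^ 2 - 4 * n = (2 * r - t) * (2 * r - t) - 4 * (r ^ 2 - t * r + n) := by ring
        rw [this]
        exact dvd_sub (Dvd.dvd.mul_left h _) (Dvd.dvd.mul_left hr 4)
      rw [aux_count_split p hp P Q hP hQ this hNP hNQ hPQ k, hχ]
      simp
    · have hχ := mt (aux_split χz hprim hquad t n htn p hp hpb).2 hroot
      have hu : IsUnit (p : ZMod b) := by
        rw [ZMod.isUnit_iff_coprime]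
        exact (Nat.Prime.coprime_iff_not_dvd hp).2 hpb
      have hχz := (hquad _ hu).resolve_left hχ
      rw [aux_count_inert hK2 p hp (aux_inert hK2 θ t n h0 p hp hroot) k, hχz]
      have : (Int.castRingHom ℂ) (-1) = -1 := by simp
      rw [this, neg_one_geom_sum]
      by_cases hk : Even k
      · simp [hk, Nat.even_add_one]
      · simp [hk, Nat.even_add_one]

lemma aux_count {b : ℕ} [NeZero b] (χ : DirichletCharacter ℂ b) (hprim : χ.IsPrimitive)
    (hreal : ∀ a : ZMod b, (χ a).im = 0) (d : ℤ) (hd : (d : ℂ) = χ (-1) * (b : ℂ))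
    (K : Type) [Field K] [NumberField K]
    (hK2 : Module.finrank ℚ K = 2) (hKd : NumberField.discr K = d) (m : ℕ) (hm : m ≠ 0) :
    (Nat.card {I : Ideal (𝓞 K) // Ideal.absNorm I = m} : ℂ) = χ.zetaMul m := by
  let F : ArithmeticFunction ℂ :=
    toArithmeticFunction fun m => (Nat.card {I : Ideal (𝓞 K) // Ideal.absNorm I = m} : ℂ)
  have hF : ∀ m, m ≠ 0 → F m = (Nat.card {I : Ideal (𝓞 K) // Ideal.absNorm I = m} : ℂ) := by
    intro m hm
    simp [F, toArithmeticFunction, hm]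
  have hFm : F.IsMultiplicative := by
    refine ArithmeticFunction.IsMultiplicative.iff_ne_zero.mpr ⟨?_, ?_⟩
    · rw [hF 1 one_ne_zero]
      have : Nat.card {I : Ideal (𝓞 K) // Ideal.absNorm I = 1} = 1 := by
        rw [Nat.card_eq_one_iff_exists]
        refine ⟨⟨⊤, by simp⟩, ?_⟩
        rintro ⟨I, hI⟩
        exact Subtype.ext (Ideal.absNorm_eq_one_iff.1 hI)
      rw [this]; simp
    · intro m n hm hn hmn
      rw [hF m hm, hF n hn, hF _ (mul_ne_zero hm hn), aux_mult hK2 m n hm hn hmn]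
      push_cast; rfl
  have := (ArithmeticFunction.IsMultiplicative.eq_iff_eq_on_prime_powers F hFm χ.zetaMul
    χ.isMultiplicative_zetaMul).2 (fun p i hp => by
      rw [hF _ (pow_ne_zero _ hp.ne_zero)]
      exact aux_count_ppow χ hprim hreal d hd K hK2 hKd p i hp)
  rw [← hF m hm, this]

lemma aux_LFunction {b : ℕ} [NeZero b] (hb : 1 < b) (χ : DirichletCharacter ℂ b)
    (hprim : χ.IsPrimitive)
    (hreal : ∀ a : ZMod b, (χ a).im = 0) (d : ℤ) (hd : (d : ℂ) = χ (-1) * (b : ℂ))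
    (K : Type) [Field K] [NumberField K]
    (hK2 : Module.finrank ℚ K = 2) (hKd : NumberField.discr K = d) :
    DirichletCharacter.LFunction χ 1 = (dedekindZeta_residue K : ℂ) := by
  have hχ : χ ≠ 1 := by
    rintro rfl
    have h1 : (1 : DirichletCharacter ℂ b).conductor = b := hprim
    rw [DirichletCharacter.conductor_one] at h1
    omega
  have hfact : ∀ s : ℝ, 1 < s → dedekindZeta K s =
      riemannZeta s * DirichletCharacter.LFunction χ s := by
    intro s hs
    have hs' : 1 < (s : ℂ).re := by simpa using hs
    have hS : LSeriesSummable (fun n => toArithmeticFunction (fun n : ℕ => χ (n : ZMod b)) n) (s : ℂ) :=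
      (LSeriesSummable_congr (s : ℂ)
        (fun {n} hn => DirichletCharacter.apply_eq_toArithmeticFunction_apply χ hn)).1
        (χ.LSeriesSummable_of_one_lt_re hs')
    have hE : LSeries (fun n => toArithmeticFunction (fun n : ℕ => χ (n : ZMod b)) n) (s : ℂ) =
        DirichletCharacter.LFunction χ s := by
      rw [DirichletCharacter.LFunction_eq_LSeries χ hs']
      exact (LSeries_congr
        (fun {n} hn => DirichletCharacter.apply_eq_toArithmeticFunction_apply χ hn) _).symm
    rw [dedekindZeta, LSeries_congr (g := fun n => χ.zetaMul n)
      (fun {n} hn => aux_count χ hprim hreal d hd K hK2 hKd n hn), DirichletCharacter.zetaMul,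
      ArithmeticFunction.LSeries_mul' ?_ hS, hE]
    · congr 1
      exact ArithmeticFunction.LSeries_zeta_eq_riemannZeta hs'
    · exact ArithmeticFunction.LSeriesSummable_zeta_iff.2 hs'
  have hlim := tendsto_sub_one_mul_dedekindZeta_nhdsGT K
  have hof : Filter.Tendsto (fun s : ℝ => (s : ℂ)) (nhdsWithin 1 (Set.Ioi 1))
      (nhdsWithin 1 {1}ᶜ) := by
    refine tendsto_nhdsWithin_iff.2 ⟨?_, ?_⟩
    · exact (Complex.continuous_ofReal.tendsto' 1 1 (by simp)).mono_left nhdsWithin_le_nhds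
    · filter_upwards [self_mem_nhdsWithin] with s hs
      simp only [Set.mem_compl_iff, Set.mem_singleton_iff]
      intro h
      have : s = 1 := by exact_mod_cast h
      exact (ne_of_gt (Set.mem_Ioi.1 hs)) this
  have hz := riemannZeta_residue_one.comp hof
  have hL : Filter.Tendsto (fun s : ℝ => DirichletCharacter.LFunction χ (s : ℂ))
      (nhdsWithin 1 (Set.Ioi 1)) (nhds (DirichletCharacter.LFunction χ 1)) :=
    (((DirichletCharacter.differentiable_LFunction hχ).continuous.tendsto 1).mono_left
      nhdsWithin_le_nhds).comp hof
  have hprod := hz.mul hL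
  rw [one_mul] at hprod
  refine tendsto_nhds_unique hprod (hlim.congr' ?_)
  filter_upwards [self_mem_nhdsWithin] with s hs
  rw [hfact s hs]
  simp only [Function.comp]
  ring

lemma aux_real {K : Type} [Field K] [NumberField K] (hr : 0 < InfinitePlace.nrRealPlaces K) :
    Units.torsionOrder K = 2 := by
  refine le_antisymm ?_ ?_
  · by_contra! hc
    have hcard : Nat.card (Units.torsion K) = Units.torsionOrder K := rfl
    obtain ⟨g, hg⟩ := IsCyclic.exists_generator (α := Units.torsion K)
    have ho : orderOf g = Units.torsionOrder K := by
      rw [← hcard]; exact orderOf_eq_card_of_forall_mem_zpowers hg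
    have ho2 : orderOf ((g.1 : 𝓞 K) : K) = orderOf g := by
      rw [← Subgroup.orderOf_coe, ← orderOf_units]
      exact orderOf_injective (algebraMap (𝓞 K) K).toMonoidHom
        RingOfIntegers.coe_injective (g.1 : 𝓞 K)
    have h3 : 2 < orderOf ((g.1 : 𝓞 K) : K) := by rw [ho2, ho]; exact hc
    have := NumberField.InfinitePlace.IsPrimitiveRoot.nrRealPlaces_eq_zero_of_two_lt h3 (IsPrimitiveRoot.orderOf _)
    omega
  · have h1 := (Units.even_torsionOrder K).two_dvd
    exact Nat.le_of_dvd (Units.torsionOrder_pos K) h1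

lemma aux_det_empty {ι : Type*} {_ : DecidableEq ι} {_ : Fintype ι} (h : IsEmpty ι)
    (M : Matrix ι ι ℝ) : |M.det| = 1 := by
  rw [Matrix.det_eq_one_of_card_eq_zero (Fintype.card_eq_zero_iff.2 h), abs_one]

lemma aux_reg {K : Type} [Field K] [NumberField K] (h : Units.rank K = 0) :
    Units.regulator K = 1 := by
  have h1 : IsEmpty (Fin (Units.rank K)) := by rw [h]; infer_instance
  rw [Units.regulator_eq_det']
  exact aux_det_empty (Units.equivFinRank K).symm.isEmpty _

/-- Theorem 8.4 (Dirichlet's class-number formula): let `χ` be a real primitive Dirichlet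
character of modulus `b > 1` and set `d = χ(-1)·b`. Let `K` be a quadratic number field of
discriminant `d`, with class number `h`, regulator `R`, and `w` roots of unity. If `d < 0`
then `L(1, χ) = 2π h / (w √|d|)`; if `d > 0` then `L(1, χ) = 2 R h / √d`. -/
theorem dirichlet_class_number_formula (b : ℕ) (hb : 1 < b)
    (χ : DirichletCharacter ℂ b) (hprim : χ.IsPrimitive)
    (hreal : ∀ a : ZMod b, (χ a).im = 0)
    (d : ℤ) (hd : (d : ℂ) = χ (-1) * (b : ℂ))
    (K : Type) [Field K] [NumberField K]
    (hK2 : Module.finrank ℚ K = 2) (hKd : NumberField.discr K = d) :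
    (d < 0 →
      @DirichletCharacter.LFunction b ⟨by omega⟩ χ 1
        = ((2 * Real.pi * (NumberField.classNumber K : ℝ) /
            ((NumberField.Units.torsionOrder K : ℕ) * Real.sqrt |(d : ℝ)|) : ℝ) : ℂ)) ∧
    (0 < d →
      @DirichletCharacter.LFunction b ⟨by omega⟩ χ 1
        = ((2 * NumberField.Units.regulator K * (NumberField.classNumber K : ℝ) /
            Real.sqrt (d : ℝ) : ℝ) : ℂ)) := by
  haveI : NeZero b := ⟨by omega⟩
  have hL := aux_LFunction hb χ hprim hreal d hd K hK2 hKd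
  have hsum := InfinitePlace.card_add_two_mul_card_eq_rank K
  rw [hK2] at hsum
  have hsign := sign_discr K
  rw [hKd] at hsign
  rw [dedekindZeta_residue_def, hKd] at hL
  constructor
  · intro hneg
    rw [Int.sign_eq_neg_one_of_neg hneg] at hsign
    have hr2 : InfinitePlace.nrComplexPlaces K = 1 := by
      have : InfinitePlace.nrComplexPlaces K ≠ 0 := by
        intro h; rw [h] at hsign; norm_num at hsign
      omega
    have hr1 : InfinitePlace.nrRealPlaces K = 0 := by omega
    have hrank : Units.rank K = 0 := by
      rw [Units.rank, InfinitePlace.card_eq_nrRealPlaces_add_nrComplexPlaces, hr1, hr2]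
    rw [aux_reg hrank, hr1, hr2] at hL
    refine Eq.trans hL ?_
    norm_num
  · intro hpos
    rw [Int.sign_eq_one_of_pos hpos] at hsign
    have hr2 : InfinitePlace.nrComplexPlaces K = 0 := by
      have : InfinitePlace.nrComplexPlaces K ≠ 1 := by
        intro h; rw [h] at hsign; norm_num at hsign
      omega
    have hr1 : InfinitePlace.nrRealPlaces K = 2 := by omega
    rw [aux_real (by omega), hr1, hr2] at hL
    refine Eq.trans hL ?_
    rw [abs_of_pos (by exact_mod_cast hpos : (0 : ℝ) < d)]
    congr 1
    push_cast
    rw [pow_zero, mul_one, show (2 : ℝ) ^ 2 = 2 * 2 by norm_num, mul_assoc, mul_assoc,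
      mul_div_mul_left _ _ (two_ne_zero)]
    ring
end

section
/- Let p be an odd prime, let d ≥ 1 be an integer, and let f be a monic polynomial over 𝔽_p = ℤ/pℤ of degree d which is a product of d distinct monic linear factors (equivalently, f has d distinct roots in 𝔽_p). Then |∑_{x ∈ 𝔽_p} η_p(f(x))| < d·√p. -/
open Polynomial

namespace WeilSV

section Abstract

variable {A F : Type*} [CommRing A] [Field F] (D : Derivation ℤ A A) (ev : A →+* F)

/-- Vanishing to order at least `m`, in terms of the derivation. -/
def Van (m : ℕ) (h : A) : Prop := ∀ j < m, ev (D^[j] h) = 0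

lemma Van.mono {m m' : ℕ} {h : A} (hm : m' ≤ m) (H : Van D ev m h) : Van D ev m' h :=
  fun j hj => H j (by omega)

lemma van_succ {m : ℕ} {h : A} : Van D ev (m+1) h ↔ ev h = 0 ∧ Van D ev m (D h) := by
  constructor
  · intro H
    refine ⟨H 0 (by omega), fun j hj => ?_⟩
    have := H (j+1) (by omega)
    rwa [Function.iterate_succ_apply] at this
  · rintro ⟨h0, H⟩ j hj
    cases j with
    | zero => simpa using h0
    | succ j =>
      rw [Function.iterate_succ_apply]
      exact H j (by omega)

lemma iter_add (j : ℕ) (a b : A) : D^[j] (a + b) = D^[j] a + D^[j] b := by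
  induction j generalizing a b with
  | zero => rfl
  | succ j ih => simp only [Function.iterate_succ_apply, map_add, ih]

lemma Van.add {m : ℕ} {a b : A} (ha : Van D ev m a) (hb : Van D ev m b) :
    Van D ev m (a + b) := by
  intro j hj
  rw [iter_add, map_add, ha j hj, hb j hj, add_zero]

lemma Van.mul {m a b : ℕ} {h k : A} (hab : m ≤ a + b) (ha : Van D ev a h) (hb : Van D ev b k) :
    Van D ev m (h * k) := by
  induction m generalizing a b h k with
  | zero => intro j hj; omega
  | succ m ih =>
    rw [van_succ]
    constructor
    · rw [map_mul]
      rcases Nat.eq_zero_or_pos a with h0 | h0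
      · have := hb 0 (by omega)
        simp only [Function.iterate_zero, id] at this
        rw [this, mul_zero]
      · have := ha 0 (by omega)
        simp only [Function.iterate_zero, id] at this
        rw [this, zero_mul]
    · rw [D.leibniz, smul_eq_mul, smul_eq_mul]
      apply Van.add
      · refine ih (a := a) (b := b - 1) (by omega) ha ?_
        cases b with
        | zero => intro j hj; omega
        | succ b => exact ((van_succ D ev).1 hb).2
      · refine ih (a := b) (b := a - 1) (by omega) hb ?_
        cases a with
        | zero => intro j hj; omega
        | succ b => exact ((van_succ D ev).1 ha).2

lemma ev_iter_ne {p : ℕ} [CharP F p] {t : A} (ht : ev t = 0) (hDt : ev (D t) ≠ 0) (μ : ℕ)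
    (hμ : μ < p) (u : A) (hu : ev u ≠ 0) : ev (D^[μ] (t ^ μ * u)) ≠ 0 := by
  induction μ generalizing u with
  | zero => simpa using hu
  | succ μ ih =>
    rw [Function.iterate_succ_apply]
    have : D (t ^ (μ+1) * u) = t ^ μ * (((μ+1 : ℕ) : A) * D t * u + t * D u) := by
      rw [D.leibniz, D.leibniz_pow]
      simp only [smul_eq_mul, nsmul_eq_mul, Nat.add_sub_cancel]
      ring
    rw [this]
    apply ih (by omega)
    rw [map_add, map_mul, map_mul, map_mul, ht, zero_mul, add_zero, map_natCast]
    refine mul_ne_zero (mul_ne_zero ?_ hDt) hu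
    intro h0
    rw [CharP.cast_eq_zero_iff F p] at h0
    exact absurd (Nat.le_of_dvd (by omega) h0) (by omega)

lemma Van.le_of_pow {p m μ : ℕ} [CharP F p] (hm : m ≤ p) {t u : A} (ht : ev t = 0)
    (hDt : ev (D t) ≠ 0) (hu : ev u ≠ 0) (H : Van D ev m (t ^ μ * u)) : m ≤ μ := by
  by_contra hlt
  exact ev_iter_ne D ev ht hDt μ (by omega) u hu (H μ (by omega))

lemma deriv_prod {ι : Type*} [DecidableEq ι] (s : Finset ι) (g : ι → A) :
    D (∏ i ∈ s, g i) = ∑ i ∈ s, ∏ j ∈ s, (if j = i then D (g j) else g j) := by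
  induction s using Finset.induction_on with
  | empty => simp
  | insert a s ha ih =>
    rw [Finset.prod_insert ha, D.leibniz, Finset.sum_insert ha, Finset.prod_insert ha, if_pos rfl,
      ih, smul_eq_mul, smul_eq_mul, Finset.mul_sum, add_comm]
    congr 1
    · rw [mul_comm]
      congr 1
      refine Finset.prod_congr rfl fun j hj => ?_
      rw [if_neg]; rintro rfl; exact ha hj
    · refine Finset.sum_congr rfl fun i hi => ?_
      rw [Finset.prod_insert ha, if_neg]
      rintro rfl; exact ha hi

lemma deriv_det {ι : Type*} [DecidableEq ι] [Fintype ι] (M : Matrix ι ι A) :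
    D M.det = ∑ i, (M.updateRow i (fun j => D (M i j))).det := by
  rw [← Matrix.det_transpose]
  simp_rw [← Matrix.det_transpose (M.updateRow _ _), Matrix.det_apply]
  rw [map_sum, Finset.sum_comm]
  refine Finset.sum_congr rfl fun σ _ => ?_
  have : ∀ x : A, D (Equiv.Perm.sign σ • x) = Equiv.Perm.sign σ • D x := by
    intro x
    rcases Int.units_eq_one_or (Equiv.Perm.sign σ) with h | h <;> simp [h]
  rw [this, deriv_prod, Finset.smul_sum, ← Equiv.sum_comp σ]
  rw [← Equiv.sum_comp σ.symm]
  refine Finset.sum_congr rfl fun i _ => ?_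
  congr 1
  refine Finset.prod_congr rfl fun j _ => ?_
  simp only [Matrix.transpose_apply, Matrix.updateRow_apply, Equiv.apply_symm_apply]
  by_cases h : j = i
  · subst h; simp
  · simp [h]

variable {N : ℕ} (p : ℕ) (u : Fin (N+1) → A)

/-- The Wronskian-type matrix with Frobenius first row. -/
def WM (k : Fin N → ℕ) : Matrix (Fin (N+1)) (Fin (N+1)) A :=
  Matrix.of (Fin.cons (fun j => u j ^ p) (fun i j => D^[k i] (u j)))

lemma deriv_WM [CharP A p] (k : Fin N → ℕ) :
    D (WM D p u k).det = ∑ i, (WM D p u (Function.update k i (k i + 1))).det := by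
  rw [deriv_det, Fin.sum_univ_succ]
  have h0 : ((WM D p u k).updateRow 0 (fun j => D (WM D p u k 0 j))).det = 0 := by
    apply Matrix.det_eq_zero_of_row_eq_zero 0
    intro j
    simp [WM, D.leibniz_pow]
  rw [h0, zero_add]
  refine Finset.sum_congr rfl fun i _ => ?_
  congr 1
  ext a b
  refine Fin.cases ?_ (fun a => ?_) a
  · simp [WM, Matrix.updateRow_apply, (Fin.succ_ne_zero i).symm]
  · by_cases h : a = i
    · subst h; simp [WM, Function.iterate_succ_apply']
    · simp [WM, Matrix.updateRow_apply, h]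

lemma sum_inj_pos (k : Fin N → ℕ) (hk : Function.Injective k) (h0 : ∀ i, k i ≠ 0) :
    N * (N + 1) ≤ 2 * ∑ i, k i := by
  have h1 : ∑ i, k i = ∑ x ∈ Finset.univ.image k, x := by
    rw [Finset.sum_image (fun a _ b _ h => hk h)]
  have h2 : (Finset.univ.image k).card = N := by
    rw [Finset.card_image_of_injective _ hk]; simp
  have key : ∀ (N : ℕ) (s : Finset ℕ), s.card = N → (∀ x ∈ s, x ≠ 0) →
      N * (N+1) ≤ 2 * ∑ x ∈ s, x := by
    intro N
    induction N with
    | zero => intros; simp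
    | succ N ih =>
      intro s hs hpos
      have hne : s.Nonempty := by rw [← Finset.card_pos]; omega
      set m := s.max' hne
      have hm : m ∈ s := s.max'_mem hne
      have hmge : N + 1 ≤ m := by
        have : s ⊆ Finset.Icc 1 m := fun x hx =>
          Finset.mem_Icc.2 ⟨Nat.pos_of_ne_zero (hpos x hx), s.le_max' x hx⟩
        have := Finset.card_le_card this
        simp at this; omega
      have h3 := ih (s.erase m) (by rw [Finset.card_erase_of_mem hm]; omega)
        (fun x hx => hpos x (Finset.mem_of_mem_erase hx))
      rw [← Finset.add_sum_erase s _ hm]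
      nlinarith
  rw [h1]
  apply key _ _ h2
  intro x hx
  obtain ⟨i, -, rfl⟩ := Finset.mem_image.1 hx
  exact h0 i

lemma ev_iter_WM [CharP A p] (hev : ∀ a, ev a ^ p = ev a) (j : ℕ) (k : Fin N → ℕ)
    (h : 2 * (∑ i, k i) + 2 * j < N * (N + 1)) : ev (D^[j] (WM D p u k).det) = 0 := by
  induction j generalizing k with
  | zero =>
    simp only [Function.iterate_zero, id]
    rw [RingHom.map_det]
    by_cases hinj : Function.Injective k
    · have : ∃ i, k i = 0 := by
        by_contra hc
        push Not at hc
        have := sum_inj_pos k hinj hc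
        omega
      obtain ⟨i, hi⟩ := this
      apply Matrix.det_zero_of_row_eq (i := 0) (j := i.succ) (Fin.succ_ne_zero i).symm
      ext b
      simp [WM, hi, hev]
    · simp only [Function.Injective, not_forall] at hinj
      obtain ⟨a, b, hab, hne⟩ := hinj
      apply Matrix.det_zero_of_row_eq (i := a.succ) (j := b.succ) (by simpa using hne)
      ext c
      simp [WM, hab]
  | succ j ih =>
    rw [Function.iterate_succ_apply, deriv_WM]
    have hs : ∀ (s : Finset (Fin N)) (g : Fin N → A),
        D^[j] (∑ i ∈ s, g i) = ∑ i ∈ s, D^[j] (g i) := by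
      intro s g
      induction s using Finset.induction_on with
      | empty => simp
      | insert a s ha ih => rw [Finset.sum_insert ha, Finset.sum_insert ha, iter_add, ih]
    rw [hs, map_sum]
    refine Finset.sum_eq_zero fun i _ => ih _ ?_
    have : ∑ x, Function.update k i (k i + 1) x = ∑ x, k x + 1 := by
      rw [Finset.sum_update_of_mem (Finset.mem_univ i),
        ← Finset.add_sum_erase Finset.univ k (Finset.mem_univ i), Finset.sdiff_singleton_eq_erase]
      ring
    omega

/-- The determinant vanishes to order `N` at every rational point. -/
lemma van_WM [CharP A p] (hev : ∀ a, ev a ^ p = ev a) :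
    Van D ev N (WM D p u (fun i : Fin N => (i : ℕ))).det := by
  intro j hj
  apply ev_iter_WM D ev p u hev
  have := Finset.sum_range_id_mul_two N
  rw [Fin.sum_univ_eq_sum_range (fun i => i) N]
  have h2 : N * (N - 1) + 2 * N = N * (N+1) := by
    cases N with
    | zero => omega
    | succ N => simp; ring
  omega

end Abstract

section Curve

variable {F : Type*} [Field F]

/-- Coordinate ring of `y ^ 2 = f x`. -/
abbrev CR (f : F[X]) := QuadraticAlgebra F[X] f 0

/-- Derivations of a commutative ring into itself. -/
abbrev DerZ (A : Type*) [CommRing A] := Derivation ℤ A A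

/-- The derivation `2 y d/dx`. -/
noncomputable def Dy (f : F[X]) : DerZ (CR f) :=
  Derivation.mk' (AddMonoidHom.toIntLinearMap
    { toFun := fun h => ⟨2 * derivative h.im * f + h.im * derivative f, 2 * derivative h.re⟩
      map_zero' := by ext <;> simp
      map_add' := by
        intro a b
        ext1
        · simp only [QuadraticAlgebra.im_add, QuadraticAlgebra.re_add, derivative_add]; ring
        · simp only [QuadraticAlgebra.im_add, QuadraticAlgebra.re_add, derivative_add]; ring })
    (by
      intro a b
      ext1
      · simp
        ring
      · simp
        ring)

lemma Dy_apply (f : F[X]) (h : CR f) :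
    Dy f h = ⟨2 * derivative h.im * f + h.im * derivative f, 2 * derivative h.re⟩ := rfl

/-- Evaluation at a rational point. -/
noncomputable def evP (f : F[X]) (x y : F) (hy : y ^ 2 = f.eval x) : CR f →+* F where
  toFun h := h.re.eval x + h.im.eval x * y
  map_one' := by simp [QuadraticAlgebra.re_one, QuadraticAlgebra.im_one]
  map_zero' := by simp
  map_add' := by intro a b; simp; ring
  map_mul' := by
    intro a b
    simp only [QuadraticAlgebra.re_mul, QuadraticAlgebra.im_mul, eval_add, eval_mul, zero_mul,
      add_zero, ← hy]
    ring

lemma evP_apply (f : F[X]) (x y : F) (hy : y ^ 2 = f.eval x) (h : CR f) :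
    evP f x y hy h = h.re.eval x + h.im.eval x * y := rfl

/-- conjugation -/
noncomputable def bar {f : F[X]} (h : CR f) : CR f := ⟨h.re, -h.im⟩

lemma Dy_bar {f : F[X]} (h : CR f) : Dy f (bar h) = - bar (Dy f h) := by
  rw [Dy_apply, Dy_apply]
  ext1
  · simp [bar]; ring
  · simp [bar]

lemma bar_neg {f : F[X]} (h : CR f) : bar (-h) = - bar h := by
  ext1 <;> simp [bar]

lemma iter_bar {f : F[X]} (j : ℕ) (h : CR f) :
    (Dy f)^[j] (bar h) = bar ((Dy f)^[j] h) ∨ (Dy f)^[j] (bar h) = - bar ((Dy f)^[j] h) := by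
  induction j with
  | zero => left; rfl
  | succ j ih =>
    rw [Function.iterate_succ_apply', Function.iterate_succ_apply']
    rcases ih with h1 | h1
    · right; rw [h1, Dy_bar]
    · left; rw [h1, map_neg, Dy_bar, neg_neg]

lemma van_bar {f : F[X]} {x y : F} (hy : y ^ 2 = f.eval x) (hy' : (-y) ^ 2 = f.eval x) {m : ℕ}
    {h : CR f} (H : Van (Dy f) (evP f x (-y) hy') m h) : Van (Dy f) (evP f x y hy) m (bar h) := by
  intro j hj
  have h1 := H j hj
  have h2 : evP f x y hy (bar ((Dy f)^[j] h)) = 0 := by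
    rw [evP_apply] at h1 ⊢
    simpa [bar] using h1
  rcases iter_bar j h with h3 | h3
  · rw [h3, h2]
  · rw [h3, map_neg, h2, neg_zero]

/-- The norm polynomial. -/
noncomputable def nm {f : F[X]} (h : CR f) : F[X] := h.re ^ 2 - f * h.im ^ 2

lemma nm_eq {f : F[X]} (h : CR f) : h * bar h = ⟨nm h, 0⟩ := by
  ext1
  · simp [bar, nm]; ring
  · simp [bar]; ring

lemma mk_pow {f : F[X]} (a : F[X]) (k : ℕ) : (⟨a, 0⟩ : CR f) ^ k = ⟨a ^ k, 0⟩ :=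
  (QuadraticAlgebra.C_pow k a).symm

lemma mk_mul {f : F[X]} (a b : F[X]) : (⟨a, 0⟩ : CR f) * ⟨b, 0⟩ = ⟨a * b, 0⟩ :=
  (QuadraticAlgebra.C_mul a b).symm

/-- Multiplicity of the norm of a function vanishing at all points above `x`. -/
lemma mult_bound [DecidableEq F] {p : ℕ} [CharP F p] (hp2 : (2 : F) ≠ 0) {f : F[X]}
    (hsep : ∀ x, f.eval x = 0 → (derivative f).eval x ≠ 0) {N : ℕ} (hN : 2 * N ≤ p)
    {h : CR f} (hh : nm h ≠ 0) {x y : F} (hy : y ^ 2 = f.eval x) (hy' : (-y) ^ 2 = f.eval x)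
    (H : Van (Dy f) (evP f x y hy) N h) (H' : Van (Dy f) (evP f x (-y) hy') N h) :
    (if y = 0 then N else 2 * N) ≤ (nm h).rootMultiplicity x := by
  have HV : Van (Dy f) (evP f x y hy) (2 * N) ⟨nm h, 0⟩ := by
    rw [← nm_eq]
    exact Van.mul _ _ (by omega) H (van_bar hy hy' H')
  obtain ⟨R, hR, hR1⟩ := exists_eq_pow_rootMultiplicity_mul_and_not_dvd (nm h) hh x
  set μ := (nm h).rootMultiplicity x
  clear_value μ
  rw [dvd_iff_isRoot, IsRoot.def] at hR1
  have hu : evP f x y hy ⟨R, 0⟩ ≠ 0 := by simpa [evP_apply] using hR1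
  split_ifs with h0
  · have hf0 : f.eval x = 0 := by rw [← hy, h0]; simp
    obtain ⟨G, hG⟩ : (X - C x) ∣ f := dvd_iff_isRoot.2 hf0
    have h1 : Van (Dy f) (evP f x y hy) (2 * N) (⟨G ^ μ, 0⟩ * ⟨nm h, 0⟩) :=
      Van.mul (a := 0) (b := 2 * N) _ _ (by omega) (fun j hj => by omega) HV
    have h3 : G ^ μ * nm h = f ^ μ * R := by
      calc G ^ μ * nm h = G ^ μ * ((X - C x) ^ μ * R) := by rw [← hR]
        _ = ((X - C x) * G) ^ μ * R := by rw [mul_pow]; ring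
        _ = f ^ μ * R := by rw [← hG]
    have h2 : (⟨G ^ μ, 0⟩ * ⟨nm h, 0⟩ : CR f) = (⟨0, 1⟩ : CR f) ^ (2 * μ) * ⟨R, 0⟩ := by
      have : (⟨0, 1⟩ : CR f) ^ 2 = ⟨f, 0⟩ := by
        rw [pow_two]; ext1 <;> simp
      rw [pow_mul, this, mk_pow, mk_mul, mk_mul, h3]
    rw [h2] at h1
    have := Van.le_of_pow (p := p) _ _ hN (by simp [evP_apply, h0])
      (by simpa [Dy_apply, evP_apply] using hsep x hf0) hu h1
    omega
  · rw [hR, ← mk_mul, ← mk_pow] at HV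
    exact Van.le_of_pow (p := p) _ _ hN (by simp [evP_apply])
      (by simpa [Dy_apply, evP_apply] using ⟨hp2, h0⟩) hu HV

end Curve

section Leading

variable {F : Type*} [Field F]

/-- `h` has pole order at most `w` at infinity, with `w`-th coefficient `c`. -/
def Lead {f : F[X]} (n w : ℕ) (c : F) (h : CR f) : Prop :=
  (expand F 2 h.re).natDegree ≤ w ∧ (expand F 2 h.im * X ^ n).natDegree ≤ w ∧
    (expand F 2 h.re + expand F 2 h.im * X ^ n).coeff w = c

lemma Lead.add {f : F[X]} {n w : ℕ} {c d : F} {h k : CR f} (H : Lead n w c h)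
    (K : Lead n w d k) : Lead n w (c + d) (h + k) := by
  obtain ⟨h1, h2, h3⟩ := H
  obtain ⟨k1, k2, k3⟩ := K
  refine ⟨?_, ?_, ?_⟩
  · rw [QuadraticAlgebra.re_add, map_add]
    exact natDegree_add_le_of_degree_le h1 k1
  · rw [QuadraticAlgebra.im_add, map_add, add_mul]
    exact natDegree_add_le_of_degree_le h2 k2
  · rw [QuadraticAlgebra.re_add, QuadraticAlgebra.im_add, map_add, map_add, ← h3, ← k3]
    simp only [coeff_add, add_mul]
    ring

lemma Lead.zero {f : F[X]} {n w : ℕ} : Lead n w 0 (0 : CR f) := by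
  refine ⟨?_, ?_, ?_⟩ <;> simp

lemma Lead.neg {f : F[X]} {n w : ℕ} {c : F} {h : CR f} (H : Lead n w c h) :
    Lead n w (-c) (-h) := by
  obtain ⟨h1, h2, h3⟩ := H
  refine ⟨?_, ?_, ?_⟩
  · simpa using h1
  · simpa using h2
  · rw [← h3]
    simp
    ring

lemma Lead.mono {f : F[X]} {n w w' : ℕ} {c : F} {h : CR f} (H : Lead n w c h) (hw : w < w') :
    Lead n w' 0 h := by
  obtain ⟨h1, h2, h3⟩ := H
  refine ⟨by omega, by omega, ?_⟩
  rw [coeff_add, coeff_eq_zero_of_natDegree_lt (by omega), coeff_eq_zero_of_natDegree_lt (by omega),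
    add_zero]

lemma Lead.one {f : F[X]} {n : ℕ} : Lead n 0 1 (1 : CR f) := by
  refine ⟨?_, ?_, ?_⟩ <;> simp [QuadraticAlgebra.re_one, QuadraticAlgebra.im_one]

lemma key_mul {f : F[X]} {n w v : ℕ} (hf : f.Monic) (hn : f.natDegree = n) {B B' : F[X]}
    (hB : (B * X ^ n).natDegree ≤ w) (hB' : (B' * X ^ n).natDegree ≤ v) :
    (expand F 2 f * B * B').natDegree ≤ w + v ∧
    (expand F 2 f * B * B').coeff (w + v) = (B * X ^ n * (B' * X ^ n)).coeff (w + v) := by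
  by_cases h0 : B = 0
  · simp [h0]
  by_cases h0' : B' = 0
  · simp [h0']
  rw [natDegree_mul_X_pow _ h0] at hB
  rw [natDegree_mul_X_pow _ h0'] at hB'
  have hφ : (expand F 2 f).natDegree = 2 * n := by rw [natDegree_expand, hn, mul_comm]
  have hφm : (expand F 2 f).coeff (2 * n) = 1 := by
    rw [mul_comm, coeff_expand_mul (by norm_num), ← hn]
    exact hf
  obtain ⟨a, rfl⟩ := Nat.exists_eq_add_of_le (show n ≤ w by omega)
  obtain ⟨b, rfl⟩ := Nat.exists_eq_add_of_le (show n ≤ v by omega)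
  have hBB : (B * B').natDegree ≤ a + b := natDegree_mul_le_of_le (by omega) (by omega)
  have e : n + a + (n + b) = 2 * n + (a + b) := by ring
  rw [e, mul_assoc]
  constructor
  · exact natDegree_mul_le_of_le hφ.le hBB
  · rw [coeff_mul_add_eq_of_natDegree_le hφ.le hBB, hφm, one_mul]
    rw [show B * X ^ n * (B' * X ^ n) = B * B' * X ^ (2 * n) by ring, add_comm (2 * n),
      coeff_mul_X_pow]

lemma Lead.mul {f : F[X]} {n w v : ℕ} (hf : f.Monic) (hn : f.natDegree = n) {c d : F}
    {h k : CR f} (H : Lead n w c h) (K : Lead n v d k) : Lead n (w + v) (c * d) (h * k) := by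
  obtain ⟨h1, h2, h3⟩ := H
  obtain ⟨k1, k2, k3⟩ := K
  obtain ⟨e1, e2⟩ := key_mul hf hn h2 k2
  refine ⟨?_, ?_, ?_⟩
  · rw [QuadraticAlgebra.re_mul, map_add, map_mul, map_mul, map_mul]
    exact natDegree_add_le_of_degree_le (natDegree_mul_le_of_le h1 k1) e1
  · have e3 : expand F 2 (h * k).im * X ^ n = expand F 2 h.re * (expand F 2 k.im * X ^ n)
        + (expand F 2 h.im * X ^ n) * expand F 2 k.re := by
      rw [QuadraticAlgebra.im_mul]
      simp only [zero_mul, add_zero, map_add, map_mul]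
      ring
    rw [e3]
    exact natDegree_add_le_of_degree_le (natDegree_mul_le_of_le h1 k2)
      (natDegree_mul_le_of_le h2 k1)
  · rw [← h3, ← k3, ← coeff_mul_add_eq_of_natDegree_le (natDegree_add_le_of_degree_le h1 h2)
      (natDegree_add_le_of_degree_le k1 k2)]
    rw [QuadraticAlgebra.re_mul, QuadraticAlgebra.im_mul]
    simp only [zero_mul, add_zero, map_add, map_mul]
    rw [coeff_add, coeff_add, e2, ← coeff_add, ← coeff_add]
    congr 1
    ring

lemma Lead.prod {f : F[X]} {n : ℕ} (hf : f.Monic) (hn : f.natDegree = n) {ι : Type*}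
    (s : Finset ι) (w : ι → ℕ) (c : ι → F) (h : ι → CR f) (H : ∀ i ∈ s, Lead n (w i) (c i) (h i)) :
    Lead n (∑ i ∈ s, w i) (∏ i ∈ s, c i) (∏ i ∈ s, h i) := by
  classical
  induction s using Finset.induction_on with
  | empty => simpa using Lead.one
  | insert a s ha ih =>
    rw [Finset.sum_insert ha, Finset.prod_insert ha, Finset.prod_insert ha]
    exact Lead.mul hf hn (H a (by simp)) (ih fun i hi => H i (by simp [hi]))

lemma Lead.sum {f : F[X]} {n w : ℕ} {ι : Type*}
    (s : Finset ι) (c : ι → F) (h : ι → CR f) (H : ∀ i ∈ s, Lead n w (c i) (h i)) :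
    Lead n w (∑ i ∈ s, c i) (∑ i ∈ s, h i) := by
  classical
  induction s using Finset.induction_on with
  | empty => simpa using Lead.zero
  | insert a s ha ih =>
    rw [Finset.sum_insert ha, Finset.sum_insert ha]
    exact Lead.add (H a (by simp)) (ih fun i hi => H i (by simp [hi]))

lemma Lead.pow {f : F[X]} {n w : ℕ} (hf : f.Monic) (hn : f.natDegree = n) {c : F}
    {h : CR f} (H : Lead n w c h) (k : ℕ) : Lead n (k * w) (c ^ k) (h ^ k) := by
  have := Lead.prod hf hn (Finset.range k) (fun _ => w) (fun _ => c) (fun _ => h) (fun _ _ => H)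
  simpa using this

lemma Lead.det {f : F[X]} {n : ℕ} (hf : f.Monic) (hn : f.natDegree = n) {ι : Type*} [Fintype ι]
    [DecidableEq ι] (r e : ι → ℕ) (c : Matrix ι ι F) (M : Matrix ι ι (CR f))
    (H : ∀ i j, Lead n (r i + e j) (c i j) (M i j)) :
    Lead n (∑ i, r i + ∑ i, e i) c.det M.det := by
  rw [Matrix.det_apply, Matrix.det_apply]
  apply Lead.sum
  intro σ _
  have h1 : Lead n (∑ i, r i + ∑ i, e i) (∏ i, c (σ i) i) (∏ i, M (σ i) i) := by
    have := Lead.prod hf hn Finset.univ (fun i => r (σ i) + e i) (fun i => c (σ i) i)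
      (fun i => M (σ i) i) (fun i _ => H _ _)
    rwa [Finset.sum_add_distrib, Equiv.sum_comp σ r] at this
  rcases Int.units_eq_one_or (Equiv.Perm.sign σ) with h | h
  · rw [h]; simpa using h1
  · rw [h]; simpa using h1.neg

lemma Lead.deriv_re {f : F[X]} {m w : ℕ} {c : F} {a : F[X]}
    (H : Lead (m + 2) w c (⟨a, 0⟩ : CR f)) : Lead (m + 2) (w + m) (c * w) (Dy f ⟨a, 0⟩) := by
  obtain ⟨h1, -, h3⟩ := H
  simp only [map_zero, zero_mul, add_zero] at h1 h3
  have e : expand F 2 (2 * derivative a) * X ^ (m + 2)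
      = derivative (expand F 2 a) * X ^ (m + 1) := by
    rw [derivative_expand, two_mul, map_add]
    push_cast
    ring
  have h4 : (derivative (expand F 2 a) * X ^ (m + 1)).natDegree ≤ w + m := by
    by_cases h0 : derivative (expand F 2 a) = 0
    · simp [h0]
    · rw [natDegree_mul_X_pow _ h0]
      have h5 : (expand F 2 a).natDegree ≠ 0 := by
        intro h5
        exact h0 (derivative_of_natDegree_zero h5)
      have := natDegree_derivative_lt h5
      omega
  rw [Dy_apply]
  refine ⟨by simp, ?_, ?_⟩
  · simp only
    rw [e]; exact h4
  · simp only
    rw [e]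
    simp only [derivative_zero, mul_zero, zero_mul, add_zero, map_zero, zero_add]
    rcases Nat.eq_zero_or_pos w with h0 | h0
    · subst h0
      have : derivative (expand F 2 a) = 0 := derivative_of_natDegree_zero (by omega)
      simp [this]
    · obtain ⟨v, rfl⟩ : ∃ v, w = v + 1 := ⟨w - 1, by omega⟩
      rw [show v + 1 + m = v + (m + 1) by ring, coeff_mul_X_pow, coeff_derivative, h3]
      push_cast
      ring

lemma Lead.deriv_im {f : F[X]} {m w : ℕ} {c : F} {b : F[X]} (hf : f.Monic)
    (hn : f.natDegree = m + 2)
    (H : Lead (m + 2) w c (⟨0, b⟩ : CR f)) : Lead (m + 2) (w + m) (c * w) (Dy f ⟨0, b⟩) := by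
  obtain ⟨-, h2, h3⟩ := H
  simp only [map_zero, zero_add] at h2 h3
  by_cases h0 : b = 0
  · subst h0
    simp only [map_zero, zero_mul, coeff_zero] at h3
    subst h3
    rw [zero_mul]
    have : Dy f (⟨0, 0⟩ : CR f) = 0 := map_zero (Dy f)
    rw [this]
    exact Lead.zero
  have h0' : expand F 2 b ≠ 0 := by rwa [Ne, expand_eq_zero (by norm_num)]
  rw [natDegree_mul_X_pow _ h0', natDegree_expand] at h2
  set k := b.natDegree with hk
  set q := 2 * derivative b * f + b * derivative f with hq
  have hfd : (derivative f).natDegree ≤ m + 1 := by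
    have := natDegree_derivative_le f; omega
  have hfc : (derivative f).coeff (m + 1) = (m : F) + 2 := by
    rw [coeff_derivative]
    have : f.coeff (m + 1 + 1) = 1 := by rw [← hf.coeff_natDegree, hn]
    rw [this]; push_cast; ring
  have hqd : q.natDegree ≤ k + (m + 1) ∧ q.coeff (k + (m+1)) = b.coeff k * (2 * k + (m + 2)) := by
    have h6 : (b * derivative f).natDegree ≤ k + (m + 1) := natDegree_mul_le_of_le le_rfl hfd
    have h7 : (b * derivative f).coeff (k + (m + 1)) = b.coeff k * (m + 2) := by
      rw [coeff_mul_add_eq_of_natDegree_le le_rfl hfd, hfc]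
    rcases Nat.eq_zero_or_pos k with hk0 | hk0
    · have : derivative b = 0 := derivative_of_natDegree_zero (by omega)
      rw [hq, this, mul_zero, zero_mul, zero_add]
      refine ⟨h6, ?_⟩
      rw [h7, hk0]; simp
    · obtain ⟨v, hv⟩ : ∃ v, k = v + 1 := ⟨k - 1, by omega⟩
      have hb' : (2 * derivative b).natDegree ≤ v := by
        have h8 := natDegree_derivative_le b
        have h9 : (2 * derivative b).natDegree ≤ 0 + (derivative b).natDegree :=
          natDegree_mul_le_of_le (by simp) le_rfl
        omega
      have e : k + (m + 1) = v + (m + 2) := by omega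
      have h8 : (2 * derivative b * f).natDegree ≤ k + (m + 1) := by
        rw [e]; exact natDegree_mul_le_of_le hb' hn.le
      refine ⟨natDegree_add_le_of_degree_le h8 h6, ?_⟩
      rw [hq, coeff_add, h7, e, coeff_mul_add_eq_of_natDegree_le hb' hn.le]
      have : f.coeff (m + 2) = 1 := by rw [← hf.coeff_natDegree, hn]
      rw [this, two_mul, coeff_add, coeff_derivative, hv]
      push_cast
      ring
  obtain ⟨q1, q2⟩ := hqd
  rw [Dy_apply]
  refine ⟨?_, by simp, ?_⟩
  · simp only
    rw [← hq, natDegree_expand]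
    omega
  · simp only
    rw [← hq]
    simp only [derivative_zero, mul_zero, zero_mul, add_zero, map_zero]
    rcases Nat.lt_or_ge (k * 2 + (m + 2)) w with hlt | hge
    · rw [coeff_eq_zero_of_natDegree_lt (by rw [natDegree_expand]; omega)]
      rw [coeff_eq_zero_of_natDegree_lt
        (by rw [natDegree_mul_X_pow _ h0', natDegree_expand]; omega)] at h3
      rw [← h3, zero_mul]
    · obtain rfl : w = k * 2 + (m + 2) := by omega
      rw [coeff_mul_X_pow, coeff_expand_mul (by norm_num)] at h3
      rw [show k * 2 + (m + 2) + m = (k + (m + 1)) * 2 by ring, coeff_expand_mul (by norm_num), q2,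
        h3]
      push_cast
      ring

lemma Lead.deriv {f : F[X]} {m w : ℕ} {c : F} {h : CR f} (hf : f.Monic)
    (hn : f.natDegree = m + 2)
    (H : Lead (m + 2) w c h) : Lead (m + 2) (w + m) (c * w) (Dy f h) := by
  obtain ⟨h1, h2, h3⟩ := H
  have e : h = ⟨h.re, 0⟩ + ⟨0, h.im⟩ := by ext1 <;> simp
  have H1 : Lead (m + 2) w ((expand F 2 h.re).coeff w) (⟨h.re, 0⟩ : CR f) :=
    ⟨h1, by simp, by simp⟩
  have H2 : Lead (m + 2) w ((expand F 2 h.im * X ^ (m + 2)).coeff w) (⟨0, h.im⟩ : CR f) :=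
    ⟨by simp, h2, by simp⟩
  have := H1.deriv_re.add (H2.deriv_im hf hn)
  rw [← map_add, ← e, ← add_mul, ← coeff_add, h3] at this
  exact this

lemma Lead.iter {f : F[X]} {m w : ℕ} {h : CR f} (hf : f.Monic)
    (hn : f.natDegree = m + 2) (H : Lead (m + 2) w 1 h) (k : ℕ) :
    Lead (m + 2) (w + k * m) ((∏ i ∈ Finset.range k, (X + C ((i * m : ℕ) : F))).eval (w : F))
      ((Dy f)^[k] h) := by
  induction k with
  | zero => simpa using H
  | succ k ih =>
    rw [Function.iterate_succ_apply', Finset.prod_range_succ, eval_mul]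
    have := ih.deriv hf hn
    convert this using 1
    · ring
    · simp

lemma Lead.exists {f : F[X]} {n : ℕ} (hn : Odd n) (e : ℕ) (he : Even e ∨ n ≤ e) :
    ∃ h : CR f, Lead n e 1 h := by
  rcases Nat.even_or_odd e with h | h
  · obtain ⟨k, rfl⟩ := h
    refine ⟨⟨X ^ k, 0⟩, ?_, by simp, ?_⟩
    · simp [natDegree_expand]; omega
    · simp only [map_zero, zero_mul, add_zero]
      rw [show k + k = k * 2 by ring, coeff_expand_mul (by norm_num)]; simp
  · have hne : n ≤ e := by
      rcases he with h' | h'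
      · exact absurd h (by simpa using h')
      · exact h'
    obtain ⟨k, hk⟩ : ∃ k, e = k * 2 + n := by
      obtain ⟨a, rfl⟩ := h
      obtain ⟨b, rfl⟩ := hn
      exact ⟨a - b, by omega⟩
    refine ⟨⟨0, X ^ k⟩, by simp, ?_, ?_⟩
    · simp only
      rw [natDegree_mul_X_pow _ (by simp), natDegree_expand]
      simp; omega
    · simp only [map_zero, zero_add]
      rw [hk, coeff_mul_X_pow, coeff_expand_mul (by norm_num)]; simp

lemma Lead.nm {f : F[X]} {n w : ℕ} {c : F} {h : CR f} (hf : f.Monic) (hn : f.natDegree = n)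
    (hodd : Odd n) (hc : c ≠ 0) (H : Lead n w c h) : nm h ≠ 0 ∧ (nm h).natDegree ≤ w := by
  obtain ⟨h1, h2, h3⟩ := H
  set α := (expand F 2 h.re).coeff w with hα
  set β := (expand F 2 h.im * X ^ n).coeff w with hβ
  rw [coeff_add, ← hα, ← hβ] at h3
  have hb : Lead n w (α - β) (bar h) := by
    refine ⟨h1, ?_, ?_⟩
    · simpa [bar] using h2
    · simp only [bar, map_neg, neg_mul]
      rw [coeff_add, coeff_neg, ← hα, ← hβ]; ring
  have hz : α = 0 ∨ β = 0 := by
    rw [hα, hβ, coeff_expand (by norm_num), coeff_mul_X_pow', coeff_expand (by norm_num)]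
    by_cases h2w : 2 ∣ w
    · right
      split_ifs with h4 h5
      · obtain ⟨b, rfl⟩ := hodd
        omega
      · rfl
      · rfl
    · left; rw [if_neg h2w]
  have hab : α - β ≠ 0 := by
    rcases hz with h0 | h0
    · rw [h0, zero_add] at h3; rw [h0, zero_sub, h3]; simpa using hc
    · rw [h0, add_zero] at h3; rw [h0, sub_zero, h3]; exact hc
  have H : Lead n w c h := ⟨h1, h2, by rw [coeff_add, ← hα, ← hβ, h3]⟩
  have HH := Lead.mul hf hn H hb
  rw [nm_eq] at HH
  obtain ⟨g1, -, g3⟩ := HH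
  simp only [map_zero, zero_mul, add_zero] at g1 g3
  constructor
  · intro h0
    rw [h0] at g3
    simp only [map_zero, coeff_zero] at g3
    exact mul_ne_zero hc hab g3.symm
  · rw [natDegree_expand] at g1; omega

end Leading

section Main

variable {p : ℕ} [Fact p.Prime]

/-- Pole orders used in the construction. -/
def ee (g i : ℕ) : ℕ := i + min i g

/-- The polynomials governing the leading coefficients. -/
noncomputable def PP (p m k : ℕ) : (ZMod p)[X] :=
  ∏ i ∈ Finset.range k, (X + C ((i * m : ℕ) : ZMod p))

lemma PP_monic (m k : ℕ) : (PP p m k).Monic :=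
  monic_prod_of_monic _ _ fun _ _ => monic_X_add_C _

lemma PP_natDegree (m k : ℕ) : (PP p m k).natDegree = k := by
  rw [PP, natDegree_prod_of_monic _ _ (fun _ _ => monic_X_add_C _)]
  simp only [natDegree_X_add_C]
  simp

/-- The matrix of leading coefficients. -/
noncomputable def cM (p m g N : ℕ) : Matrix (Fin (N+1)) (Fin (N+1)) (ZMod p) :=
  Matrix.of (Fin.cons (fun j => if j = Fin.last N then 1 else 0)
    (fun i j => (PP p m i).eval ((ee g j : ℕ) : ZMod p)))

lemma cM_det (m g N : ℕ) (h : N + g ≤ p) : (cM p m g N).det ≠ 0 := by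
  rw [Matrix.det_succ_row_zero, Finset.sum_eq_single (Fin.last N)]
  · have h1 : cM p m g N 0 (Fin.last N) = 1 := by simp [cM]
    rw [h1, mul_one]
    refine mul_ne_zero (pow_ne_zero _ (by simp)) ?_
    have h2 : (cM p m g N).submatrix Fin.succ (Fin.last N).succAbove =
        (Matrix.of (fun i j : Fin N =>
          ((PP p m j).eval ((ee g i : ℕ) : ZMod p)))).transpose := by
      ext i j
      simp [cM]
    rw [h2, Matrix.det_transpose,
      ← Matrix.det_eval_matrixOfPolynomials_eq_det_vandermonde (fun i : Fin N =>
        ((ee g i : ℕ) : ZMod p)) (fun j : Fin N => PP p m j) (fun i => PP_natDegree m i)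
        (fun i => PP_monic m i), Matrix.det_vandermonde_ne_zero_iff]
    intro i j hij
    simp only at hij
    rw [ZMod.natCast_eq_natCast_iff', Nat.mod_eq_of_lt, Nat.mod_eq_of_lt] at hij
    · unfold ee at hij
      ext; omega
    · unfold ee; omega
    · unfold ee; omega
  · intro j _ hj
    have : cM p m g N 0 j = 0 := by simp [cM, hj]
    rw [this]; simp
  · simp

instance charP_CR (f : (ZMod p)[X]) : CharP (CR f) p :=
  charP_of_injective_algebraMap (QuadraticAlgebra.algebraMap_injective (R := (ZMod p)[X])) p

lemma exists_fun (f : (ZMod p)[X]) (hf : f.Monic) (g N : ℕ) (hg : 1 ≤ g)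
    (hn : f.natDegree = 2 * g + 1) (hgN : g ≤ N) (h : N + g ≤ p) :
    ∃ H : CR f, nm H ≠ 0 ∧ (nm H).natDegree ≤ p * (N + g) + g * N ^ 2 ∧
      ∀ x y (hy : y ^ 2 = f.eval x), Van (Dy f) (evP f x y hy) N H := by
  have hp := (Fact.out : p.Prime).two_le
  obtain ⟨m, hm⟩ : ∃ m, 2 * g = m + 1 := ⟨2 * g - 1, by omega⟩
  have hn' : f.natDegree = m + 2 := by omega
  have hodd : Odd (m + 2) := ⟨g, by omega⟩
  have hex : ∀ j : Fin (N+1), ∃ u : CR f, Lead (m+2) (ee g j) 1 u := by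
    intro j
    apply Lead.exists hodd
    unfold ee
    rcases le_total (j : ℕ) g with h1 | h1
    · left; rw [min_eq_left h1]; exact ⟨_, rfl⟩
    · rw [min_eq_right h1]
      rcases Nat.eq_or_lt_of_le h1 with h2 | h2
      · left; exact ⟨g, by omega⟩
      · right; omega
  choose u hu using hex
  refine ⟨(WM (Dy f) p u (fun i : Fin N => (i : ℕ))).det, ?_⟩
  have hL : Lead (m+2) (∑ i : Fin (N+1), (Fin.cons ((p-1) * ee g N) (fun i : Fin N => (i : ℕ) * m) :
      Fin (N+1) → ℕ) i + ∑ i : Fin (N+1), ee g i) (cM p m g N).det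
      (WM (Dy f) p u (fun i : Fin N => (i : ℕ))).det := by
    apply Lead.det hf hn'
    intro i j
    refine Fin.cases ?_ (fun i => ?_) i
    · simp only [Fin.cons_zero, WM, cM, Matrix.of_apply]
      have h1 := (hu j).pow hf hn' p
      rw [one_pow] at h1
      split_ifs with hj
      · subst hj
        convert h1 using 1
        simp only [Fin.val_last]
        obtain ⟨q, rfl⟩ : ∃ q, p = q + 1 := ⟨p - 1, by omega⟩
        simp; ring
      · apply h1.mono
        have hlt : (j : ℕ) < N := by
          have := j.2
          have h3 : (j : ℕ) ≠ N := fun h3 => hj (Fin.ext (by simpa using h3))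
          omega
        have hee : ee g j < ee g N := by unfold ee; omega
        obtain ⟨q, rfl⟩ : ∃ q, p = q + 1 := ⟨p - 1, by omega⟩
        simp only [Nat.add_sub_cancel]
        rw [add_mul, one_mul]
        have : q * ee g j < q * ee g N := Nat.mul_lt_mul_of_pos_left hee (by omega)
        omega
    · simp only [Fin.cons_succ, WM, cM, Matrix.of_apply]
      have := (hu j).iter hf hn' (i : ℕ)
      rw [add_comm ((i : ℕ) * m)]
      exact this
  have hW : (∑ i : Fin (N+1), (Fin.cons ((p-1) * ee g N) (fun i : Fin N => (i : ℕ) * m) :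
      Fin (N+1) → ℕ) i + ∑ i : Fin (N+1), ee g i) ≤ p * (N + g) + g * N ^ 2 := by
    rw [Fin.sum_univ_succ, Fin.sum_univ_castSucc (n := N)]
    simp only [Fin.cons_zero, Fin.cons_succ, Fin.val_castSucc, Fin.val_last]
    have e1 : ee g N = N + g := by unfold ee; omega
    have h1 : ∑ i : Fin N, ee g i ≤ ∑ i : Fin N, ((i : ℕ) + g) :=
      Finset.sum_le_sum fun i _ => by unfold ee; omega
    rw [Finset.sum_add_distrib] at h1
    have h2 : (∑ i : Fin N, (i : ℕ)) * 2 = N * (N - 1) := by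
      rw [Fin.sum_univ_eq_sum_range (fun i => i) N]; exact Finset.sum_range_id_mul_two N
    rw [← Finset.sum_mul, e1]
    simp only [Finset.sum_const, Finset.card_univ, Fintype.card_fin, smul_eq_mul] at h1
    set s := ∑ i : Fin N, (i : ℕ)
    have h3 : s * m + s + N * g = g * N ^ 2 := by
      have : s * m + s = s * 2 * g := by rw [mul_assoc, hm]; ring
      rw [this, h2]
      cases N with
      | zero => simp
      | succ N => simp; ring
    have h4 : (p - 1) * (N + g) + (N + g) = p * (N + g) := by
      obtain ⟨q, rfl⟩ : ∃ q, p = q + 1 := ⟨p - 1, by omega⟩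
      simp; ring
    omega
  obtain ⟨k1, k2⟩ := hL.nm hf hn' hodd (cM_det m g N h)
  refine ⟨k1, k2.trans hW, ?_⟩
  intro x y hy
  exact van_WM (Dy f) (evP f x y hy) p u (fun a => ZMod.pow_card _)

lemma curve_bound (hp2 : p ≠ 2) (f : (ZMod p)[X]) (hf : f.Monic) (g N : ℕ) (hg : 1 ≤ g)
    (hn : f.natDegree = 2 * g + 1) (hgN : g ≤ N) (h : N + g ≤ p) (hN : 2 * N ≤ p)
    (hsep : ∀ x, f.eval x = 0 → (derivative f).eval x ≠ 0) :
    (N : ℤ) * ∑ x : ZMod p, quadraticChar (ZMod p) (f.eval x) ≤ p * g + g * N ^ 2 := by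
  obtain ⟨H, h0, hdeg, hvan⟩ := exists_fun f hf g N hg hn hgN h
  have h2 : (2 : ZMod p) ≠ 0 := by
    have := Ring.two_ne_zero (R := ZMod p) (by rwa [ZMod.ringChar_zmod_n])
    exact this
  have key : ∀ x : ZMod p, (N : ℤ) * (quadraticChar (ZMod p) (f.eval x) + 1) ≤
      ((nm H).rootMultiplicity x : ℤ) := by
    intro x
    by_cases hfx : f.eval x = 0
    · have hy : (0 : ZMod p) ^ 2 = f.eval x := by rw [hfx]; simp
      have hy' : (-0 : ZMod p) ^ 2 = f.eval x := by rw [hfx]; simp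
      have := mult_bound (p := p) h2 hsep hN h0 hy hy' (hvan _ _ _) (hvan _ _ _)
      rw [if_pos rfl] at this
      rw [hfx]
      simpa using this
    · rcases quadraticChar_dichotomy hfx with h1 | h1
      · rw [quadraticChar_one_iff_isSquare hfx] at h1
        have h1' := (quadraticChar_one_iff_isSquare hfx).2 h1
        obtain ⟨y, hyy⟩ := h1
        have hy : y ^ 2 = f.eval x := by rw [hyy]; ring
        have hy' : (-y) ^ 2 = f.eval x := by rw [hyy]; ring
        have hy0 : y ≠ 0 := by rintro rfl; apply hfx; rw [hyy]; simp
        have := mult_bound (p := p) h2 hsep hN h0 hy hy' (hvan _ _ _) (hvan _ _ _)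
        rw [if_neg hy0] at this
        rw [h1']
        have : ((2 * N : ℕ) : ℤ) ≤ ((nm H).rootMultiplicity x : ℤ) := by exact_mod_cast this
        push_cast at this
        linarith
      · rw [h1]; simp
  have hsum := Finset.sum_le_sum (s := Finset.univ) fun x _ => key x
  have hroots : ∑ x : ZMod p, (nm H).rootMultiplicity x ≤ (nm H).natDegree := by
    simp_rw [← count_roots]
    rw [Multiset.sum_count_eq_card (by simp)]
    exact card_roots' _
  rw [← Finset.mul_sum, Finset.sum_add_distrib] at hsum
  simp only [Finset.sum_const, Finset.card_univ, ZMod.card, smul_eq_mul, nsmul_eq_mul,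
    mul_one] at hsum
  have h5 : ((∑ x : ZMod p, (nm H).rootMultiplicity x : ℕ) : ℤ)
      ≤ ((p * (N + g) + g * N ^ 2 : ℕ) : ℤ) := by exact_mod_cast hroots.trans hdeg
  push_cast at h5
  nlinarith

/-- The complete character sum. -/
noncomputable def T (t : Finset (ZMod p)) : ℤ :=
  ∑ x : ZMod p, quadraticChar (ZMod p) (∏ r ∈ t, (x - r))

lemma T_upper (hp2 : p ≠ 2) (t : Finset (ZMod p)) (g : ℕ) (hg : 1 ≤ g) (ht : t.card = 2 * g + 1)
    (hlt : t.card ^ 2 < p) : (T t : ℝ) < t.card * Real.sqrt p := by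
  set f : (ZMod p)[X] := ∏ r ∈ t, (X - C r) with hf
  have hmon : f.Monic := monic_prod_of_monic _ _ fun _ _ => monic_X_sub_C _
  have hdeg : f.natDegree = 2 * g + 1 := by
    rw [hf, natDegree_prod_of_monic _ _ (fun _ _ => monic_X_sub_C _)]
    simp [ht]
  have hsep : ∀ x, f.eval x = 0 → (derivative f).eval x ≠ 0 := by
    have hs : f.Separable := by
      rw [hf]
      exact separable_prod_X_sub_C_iff'.2 (fun a _ b _ h => h)
    intro x hx
    obtain ⟨a, b, hab⟩ := hs
    intro h0
    have := congrArg (eval x) hab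
    simp [hx, h0] at this
  set N := Nat.sqrt p with hNdef
  have hN1 : N * N ≤ p := Nat.sqrt_le p
  have hN2 : p < (N + 1) * (N + 1) := Nat.lt_succ_sqrt p
  have hcN : 2 * g + 1 ≤ N := by
    rw [hNdef, Nat.le_sqrt, ← ht]; nlinarith
  have hb := curve_bound hp2 f hmon g N hg hdeg (by omega) (by nlinarith) (by nlinarith) hsep
  have hT : T t = ∑ x : ZMod p, quadraticChar (ZMod p) (f.eval x) := by
    simp [T, hf, eval_prod]
  rw [← hT] at hb
  have hb' : (N : ℝ) * T t ≤ p * g + g * N ^ 2 := by exact_mod_cast hb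
  set r := Real.sqrt p with hr
  have hrr : r * r = p := Real.mul_self_sqrt (by positivity)
  have hr0 : 0 ≤ r := Real.sqrt_nonneg _
  have hN1' : (N : ℝ) * N ≤ p := by exact_mod_cast hN1
  have hN2' : (p : ℝ) < (N + 1) * (N + 1) := by exact_mod_cast hN2
  have hNr : (N : ℝ) ≤ r := by nlinarith
  have hrN : r < N + 1 := by nlinarith
  have hcN' : 2 * (g : ℝ) + 1 ≤ N := by exact_mod_cast hcN
  have hg0 : (1 : ℝ) ≤ g := by exact_mod_cast hg
  have hNpos : (0 : ℝ) < N := by linarith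
  rw [ht]
  push_cast
  have h1 : (r - N) ^ 2 < 1 := by nlinarith
  have h2 : (p : ℝ) * g + g * N ^ 2 < N * ((2 * g + 1) * r) := by
    have : (p : ℝ) * g + g * N ^ 2 = g * ((r - N) ^ 2) + N * (2 * g * r) := by rw [← hrr]; ring
    rw [this]
    nlinarith
  have h3 : (N : ℝ) * T t < N * ((2 * g + 1) * r) := lt_of_le_of_lt hb' h2
  exact lt_of_mul_lt_mul_left h3 hNpos.le

lemma T_twist (hp2 : p ≠ 2) (t : Finset (ZMod p)) (hodd : Odd t.card) :
    ∃ t' : Finset (ZMod p), t'.card = t.card ∧ T t' = - T t := by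
  obtain ⟨c, hc⟩ := quadraticChar_exists_neg_one (F := ZMod p) (by rwa [ZMod.ringChar_zmod_n])
  have hc0 : c ≠ 0 := by rintro rfl; simp at hc
  refine ⟨t.image (c * ·), Finset.card_image_of_injective _ (mul_right_injective₀ hc0), ?_⟩
  unfold T
  rw [← Equiv.sum_comp (Equiv.mulLeft₀ c hc0), ← Finset.sum_neg_distrib]
  refine Finset.sum_congr rfl fun x _ => ?_
  rw [Finset.prod_image (fun a _ b _ h => mul_right_injective₀ hc0 h)]
  have e : (Equiv.mulLeft₀ c hc0) x = c * x := rfl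
  simp only [e, ← mul_sub, Finset.prod_mul_distrib, Finset.prod_const, map_mul,
    map_pow, hc, hodd.neg_one_pow]
  ring

lemma T_trivial (t : Finset (ZMod p)) (ht : t.Nonempty) : |T t| < p := by
  obtain ⟨r, hr⟩ := ht
  unfold T
  have h1 : ∀ a : ZMod p, |quadraticChar (ZMod p) a| ≤ 1 := by
    intro a
    by_cases h : a = 0
    · simp [h]
    · rcases quadraticChar_dichotomy h with h | h <;> simp [h]
  calc |∑ x : ZMod p, quadraticChar (ZMod p) (∏ r ∈ t, (x - r))|
      ≤ ∑ x : ZMod p, |quadraticChar (ZMod p) (∏ r ∈ t, (x - r))| := Finset.abs_sum_le_sum_abs _ _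
    _ < ∑ x : ZMod p, (1 : ℤ) := by
        refine Finset.sum_lt_sum (fun x _ => h1 _) ⟨r, Finset.mem_univ _, ?_⟩
        rw [Finset.prod_eq_zero hr (sub_self r)]
        simp
    _ = p := by simp [ZMod.card]

lemma T_odd (hp2 : p ≠ 2) (t : Finset (ZMod p)) (hodd : Odd t.card) :
    |(T t : ℝ)| < t.card * Real.sqrt p := by
  have hp0 : (0 : ℝ) < p := by exact_mod_cast (Fact.out : p.Prime).pos
  have hr : 0 < Real.sqrt p := Real.sqrt_pos.2 hp0
  have hrr : Real.sqrt p * Real.sqrt p = p := Real.mul_self_sqrt hp0.le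
  rcases Nat.lt_or_ge (t.card ^ 2) p with hlt | hge
  · obtain ⟨g, hg⟩ := hodd
    rcases Nat.eq_zero_or_pos g with h0 | h0
    · have h1 : t.card = 1 := by omega
      obtain ⟨r, rfl⟩ := Finset.card_eq_one.1 h1
      have : T ({r} : Finset (ZMod p)) = 0 := by
        unfold T
        simp only [Finset.prod_singleton]
        rw [← Equiv.sum_comp (Equiv.addRight r)]
        simp only [Equiv.coe_addRight, add_sub_cancel_right]
        exact quadraticChar_sum_zero (by rwa [ZMod.ringChar_zmod_n])
      rw [this]
      simpa using hr
    · obtain ⟨t', ht', hT'⟩ := T_twist hp2 t ⟨g, hg⟩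
      have h1 := T_upper hp2 t g h0 hg hlt
      have h2 := T_upper hp2 t' g h0 (by omega) (by rw [ht']; exact hlt)
      rw [ht', hT'] at h2
      push_cast at h2
      rw [abs_lt]
      constructor <;> linarith
  · have h1 : |(T t : ℝ)| < p := by
      exact_mod_cast T_trivial t (Finset.card_pos.1 hodd.pos)
    have h2 : (p : ℝ) ≤ t.card ^ 2 := by exact_mod_cast hge
    have h3 : Real.sqrt p ≤ t.card := 
      Real.sqrt_le_iff.2 ⟨by positivity, h2⟩
    nlinarith

lemma T_even (t : Finset (ZMod p)) (heven : Even t.card) (hpos : t.Nonempty) :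
    ∃ s : Finset (ZMod p), s.card + 1 = t.card ∧ |T t| ≤ |T s| + 1 := by
  obtain ⟨a, ha⟩ := hpos
  set q := t.erase a with hq
  have hqc : q.card + 1 = t.card := Finset.card_erase_add_one ha
  have hinj : Function.Injective (fun r : ZMod p => (r - a)⁻¹) := by
    intro x y h
    simpa using h
  have hne : ∀ r ∈ q, r - a ≠ 0 := fun r hr => sub_ne_zero.2 (Finset.ne_of_mem_erase hr)
  refine ⟨q.image (fun r => (r - a)⁻¹), ?_, ?_⟩
  · rw [Finset.card_image_of_injective _ hinj, hqc]
  set s := q.image (fun r => (r - a)⁻¹)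
  set κ := quadraticChar (ZMod p) (∏ r ∈ q, -(r - a)) with hκ
  set η0 := quadraticChar (ZMod p) (∏ r ∈ s, ((0 : ZMod p) - r)) with hη0
  have hqa : ∀ b : ZMod p, |quadraticChar (ZMod p) b| ≤ 1 := by
    intro a
    by_cases h : a = 0
    · simp [h]
    · rcases quadraticChar_dichotomy h with h | h <;> simp [h]
  have hT : T t = κ * (T s - η0) := by
    have e1 : T t = ∑ x : ZMod p, κ * (quadraticChar (ZMod p) (∏ r ∈ s, (x⁻¹ - r)) -
        if x = 0 then η0 else 0) := by
      unfold T
      rw [← Equiv.sum_comp (Equiv.addRight a)]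
      refine Finset.sum_congr rfl fun x _ => ?_
      simp only [Equiv.coe_addRight]
      by_cases hx : x = 0
      · subst hx
        rw [zero_add, Finset.prod_eq_zero ha (sub_self a)]
        simp [hη0]
      · rw [if_neg hx, sub_zero, hκ, ← map_mul, ← Finset.mul_prod_erase t _ ha, ← hq,
          Finset.prod_image (fun a _ b _ h => hinj h), ← Finset.prod_mul_distrib]
        have e2 : ∏ r ∈ q, (x + a - r) = x ^ q.card * ∏ r ∈ q, (-(r - a) * (x⁻¹ - (r - a)⁻¹)) := by
          rw [← Finset.prod_const, ← Finset.prod_mul_distrib]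
          refine Finset.prod_congr rfl fun r hr => ?_
          have := hne r hr
          field_simp
          ring
        rw [e2, add_sub_cancel_right, ← mul_assoc, ← pow_succ', hqc, map_mul]
        obtain ⟨k, hk⟩ := heven
        rw [hk, ← two_mul, pow_mul', map_pow, ← map_pow, quadraticChar_sq_one' (pow_ne_zero _ hx),
          one_mul]
    rw [e1, ← Finset.mul_sum, Finset.sum_sub_distrib]
    congr 2
    · unfold T
      exact Equiv.sum_comp (inv_involutive (G := ZMod p)).toPerm
        (fun x => quadraticChar (ZMod p) (∏ r ∈ s, (x - r)))
    · simp
  rw [hT, abs_mul]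
  have h1 : |κ| ≤ 1 := hqa _
  have h2 : |η0| ≤ 1 := hqa _
  have h3 : |T s - η0| ≤ |T s| + |η0| := abs_sub _ _
  nlinarith [abs_nonneg κ, abs_nonneg (T s - η0)]

lemma T_bound (hp2 : p ≠ 2) (t : Finset (ZMod p)) (ht : t.Nonempty) :
    |(T t : ℝ)| < t.card * Real.sqrt p := by
  rcases Nat.even_or_odd t.card with h | h
  · obtain ⟨s, hs, hT⟩ := T_even t h ht
    have hso : Odd s.card := by
      rw [← hs, Nat.even_add_one] at h
      simpa using h
    have h1 := T_odd hp2 s hso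
    have h2 : |(T t : ℝ)| ≤ |(T s : ℝ)| + 1 := by exact_mod_cast hT
    have h3 : (1 : ℝ) ≤ Real.sqrt p := by
      rw [Real.one_le_sqrt]
      exact_mod_cast (Fact.out : p.Prime).one_lt.le
    rw [← hs]
    push_cast
    linarith
  · exact T_odd hp2 t h

end Main

end WeilSV


/-- Theorem 9.1 (Weil-sum estimate): if `p` is an odd prime and `f` is a monic polynomial over
`𝔽_p` of degree `d ≥ 1` that is a product of `d` distinct monic linear factors, then
`|∑_{x ∈ 𝔽_p} η_p(f(x))| < d √p`, where `η_p` is the quadratic character of `𝔽_p`. -/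
theorem complete_weil_sum_bound (p : ℕ) [Fact p.Prime] (hp2 : p ≠ 2)
    (d : ℕ) (hd : 1 ≤ d) (f : Polynomial (ZMod p))
    (t : Finset (ZMod p)) (htcard : t.card = d)
    (hf : f = ∏ r ∈ t, (Polynomial.X - Polynomial.C r)) :
    |((∑ x : ZMod p, quadraticChar (ZMod p) (f.eval x) : ℤ) : ℝ)|
      < (d : ℝ) * Real.sqrt p := by
  have ht : t.Nonempty := Finset.card_pos.1 (by omega)
  have h := WeilSV.T_bound hp2 t ht
  rw [htcard] at h
  have e : WeilSV.T t = ∑ x : ZMod p, quadraticChar (ZMod p) (f.eval x) := by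
    simp [WeilSV.T, hf, Polynomial.eval_prod]
  rw [← e]
  exact h
end
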